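/- arXiv:2412.01915 — 7 statements merged into one kernel-verified Lean document; each statement's English description precedes it below -/
import Mathlib

section
/- Suppose F : D × 𝕏 → 𝕐 and F̄ : D × 𝕏 → 𝕐̄ are continuous and uniformly Lipschitz in 𝕏. Then for any continuous initial data U₀ : [0,ū_*] → 𝕐 and Ū₀ : [0,u_*] → 𝕐̄ there exist U : D → 𝕐 and Ū : D → 𝕐̄, both continuous, such that the partial derivatives ∂U/∂u and ∂Ū/∂ū exist and are continuous on D and (U,Ū) solves the two-variable ODE system with data (F, F̄, U₀, Ū₀) on all of D; moreover this solution is unique, i.e. any two pairs (U,Ū) with these properties coincide on D. -/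
open Set

/-- The domain `D = [0,u_*] × [0,ū_*] ⊆ ℝ²`. -/
def Dset (us ubs : ℝ) : Set (ℝ × ℝ) := Set.Icc 0 us ×ˢ Set.Icc 0 ubs

/-- `(U, Ū)` solves the two-variable ODE system with data `(F, F̄, U₀, Ū₀)` on `D`:
`U, Ū` are continuous on `D`, the partial derivatives `∂U/∂u` and `∂Ū/∂ū` exist on `D`
and satisfy `∂U/∂u = F(u,ū,U,Ū)`, `∂Ū/∂ū = F̄(u,ū,U,Ū)` (hence they are continuous,
being given by continuous expressions), together with the initial conditions
`U(0,ū) = U₀(ū)` and `Ū(u,0) = Ū₀(u)`. -/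
def IsSolution {Y Yb : Type*} [NormedAddCommGroup Y] [NormedSpace ℝ Y]
    [NormedAddCommGroup Yb] [NormedSpace ℝ Yb]
    (us ubs : ℝ)
    (F : ℝ → ℝ → Y × Yb → Y) (Fb : ℝ → ℝ → Y × Yb → Yb)
    (U₀ : ℝ → Y) (Ub₀ : ℝ → Yb)
    (U : ℝ × ℝ → Y) (Ub : ℝ × ℝ → Yb) : Prop :=
  ContinuousOn U (Dset us ubs) ∧ ContinuousOn Ub (Dset us ubs) ∧
  (∀ p ∈ Dset us ubs,
    HasDerivWithinAt (fun t => U (t, p.2)) (F p.1 p.2 (U p, Ub p)) (Set.Icc 0 us) p.1) ∧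
  (∀ p ∈ Dset us ubs,
    HasDerivWithinAt (fun v => Ub (p.1, v)) (Fb p.1 p.2 (U p, Ub p)) (Set.Icc 0 ubs) p.2) ∧
  (∀ ub ∈ Set.Icc (0:ℝ) ubs, U (0, ub) = U₀ ub) ∧
  (∀ u ∈ Set.Icc (0:ℝ) us, Ub (u, 0) = Ub₀ u)

theorem aux_bound {E : Type*} [NormedAddCommGroup E] [NormedSpace ℝ E] (a l c C : ℝ)
    (hl : 0 < l) (hC : 0 ≤ C) (f f' : ℝ → E) (h0 : f 0 = 0)
    (hf : ∀ s ∈ Set.Icc 0 a, HasDerivWithinAt f (f' s) (Set.Icc 0 a) s)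
    (hb : ∀ s ∈ Set.Icc 0 a, ‖f' s‖ ≤ C * Real.exp (l * (s + c))) :
    ∀ s ∈ Set.Icc 0 a, ‖f s‖ ≤ C / l * Real.exp (l * (s + c)) := by
  have hB : ∀ x : ℝ, HasDerivAt (fun s => C / l * Real.exp (l * (s + c)))
      (C * Real.exp (l * (x + c))) x := by
    intro x
    have h1 : HasDerivAt (fun s : ℝ => l * (s + c)) (l * 1) x :=
      ((hasDerivAt_id x).add_const c).const_mul l
    have h2 := (h1.exp).const_mul (C / l)
    have h3 : C / l * (Real.exp (l * (x + c)) * (l * 1)) = C * Real.exp (l * (x + c)) := by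
      field_simp
    rw [h3] at h2
    exact h2
  intro s hs
  refine image_norm_le_of_norm_deriv_right_le_deriv_boundary (a := 0) (b := a) (f' := f')
    (fun x hx => (hf x hx).continuousWithinAt) ?_ ?_ hB ?_ hs
  · intro x hx
    exact ((hf x ⟨hx.1, hx.2.le⟩).mono_of_mem_nhdsWithin
      (Icc_mem_nhdsGE_of_mem hx))
  · rw [h0, norm_zero]; positivity
  · intro x hx
    exact hb x ⟨hx.1, hx.2.le⟩

/-- clamp to the interval -/
def cl (a t : ℝ) : ℝ := max 0 (min a t)

theorem cl_cont (a : ℝ) : Continuous (cl a) := by unfold cl; fun_prop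

theorem cl_mem {a : ℝ} (ha : 0 < a) (t : ℝ) : cl a t ∈ Set.Icc 0 a :=
  ⟨le_max_left _ _, max_le ha.le (min_le_left _ _)⟩

theorem cl_eq {a t : ℝ} (h : t ∈ Set.Icc 0 a) : cl a t = t := by
  unfold cl; rw [min_eq_right h.2, max_eq_right h.1]

theorem cl_le {a t : ℝ} (h : 0 ≤ t) : cl a t ≤ t := max_le h (min_le_right _ _)

theorem exists_aux {Y Yb : Type*}
    [NormedAddCommGroup Y] [NormedSpace ℝ Y] [CompleteSpace Y]
    [NormedAddCommGroup Yb] [NormedSpace ℝ Yb] [CompleteSpace Yb]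
    (a b : ℝ) (ha : 0 < a) (hb : 0 < b)
    (F : ℝ × ℝ → Y × Yb → Y) (Fb : ℝ × ℝ → Y × Yb → Yb)
    (hF : Continuous (fun q : (ℝ × ℝ) × Y × Yb => F q.1 q.2))
    (hFb : Continuous (fun q : (ℝ × ℝ) × Y × Yb => Fb q.1 q.2))
    (M : ℝ) (hM : 0 ≤ M)
    (hFl : ∀ p x y, ‖F p x - F p y‖ ≤ M * ‖x - y‖)
    (hFbl : ∀ p x y, ‖Fb p x - Fb p y‖ ≤ M * ‖x - y‖)
    (U₀ : ℝ → Y) (Ub₀ : ℝ → Yb) (hU : Continuous U₀) (hUb : Continuous Ub₀) :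
    ∃ G : ℝ × ℝ → Y × Yb, Continuous G ∧ ∀ p ∈ Dset a b,
      G p = (U₀ p.2 + ∫ s in (0:ℝ)..p.1, F (s, p.2) (G (s, p.2)),
        Ub₀ p.1 + ∫ s in (0:ℝ)..p.2, Fb (p.1, s) (G (p.1, s))) := by
  have : CompactSpace (Dset a b) :=
    isCompact_iff_compactSpace.1 (isCompact_Icc.prod isCompact_Icc)
  obtain ⟨l, hl⟩ : ∃ l : ℝ, l = 2 * M + 1 := ⟨_, rfl⟩
  have hl0 : 0 < l := by linarith
  let E : C(Dset a b, Y × Yb) → ℝ × ℝ → Y × Yb := fun V q =>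
    Real.exp (l * (cl a q.1 + cl b q.2)) • V ⟨(cl a q.1, cl b q.2), cl_mem ha _, cl_mem hb _⟩
  have hE : ∀ V, Continuous (E V) := by
    intro V
    have h1 := cl_cont a
    have h2 := cl_cont b
    refine Continuous.smul (f := fun q : ℝ × ℝ => Real.exp (l * (cl a q.1 + cl b q.2)))
      (by fun_prop) (V.continuous.comp ?_)
    exact Continuous.subtype_mk (by fun_prop) _
  have hg : ∀ V, Continuous (fun q => F q (E V q)) := fun V =>
    hF.comp (continuous_id.prodMk (hE V))
  have hgb : ∀ V, Continuous (fun q => Fb q (E V q)) := fun V =>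
    hFb.comp (continuous_id.prodMk (hE V))
  let I : C(Dset a b, Y × Yb) → ℝ × ℝ → Y × Yb := fun V p =>
    (U₀ p.2 + ∫ s in (0:ℝ)..p.1, F (s, p.2) (E V (s, p.2)),
        Ub₀ p.1 + ∫ s in (0:ℝ)..p.2, Fb (p.1, s) (E V (p.1, s)))
  have hI : ∀ V, Continuous (I V) := by
    intro V
    refine Continuous.prodMk ?_ ?_
    · refine (hU.comp continuous_snd).add ?_
      exact intervalIntegral.continuous_parametric_intervalIntegral_of_continuous
        (f := fun (p : ℝ × ℝ) s => F (s, p.2) (E V (s, p.2)))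
        ((hg V).comp (by fun_prop : Continuous fun q : (ℝ × ℝ) × ℝ => (q.2, q.1.2)))
        continuous_fst
    · refine (hUb.comp continuous_fst).add ?_
      exact intervalIntegral.continuous_parametric_intervalIntegral_of_continuous
        (f := fun (p : ℝ × ℝ) s => Fb (p.1, s) (E V (p.1, s)))
        ((hgb V).comp (by fun_prop : Continuous fun q : (ℝ × ℝ) × ℝ => (q.1.1, q.2)))
        continuous_snd
  let T : C(Dset a b, Y × Yb) → C(Dset a b, Y × Yb) := fun V =>
    ⟨fun p => Real.exp (-(l * (p.1.1 + p.1.2))) • I V p.1, by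
      have := (hI V)
      fun_prop⟩
  have hEd : ∀ V W q, ‖E V q - E W q‖ ≤ Real.exp (l * (cl a q.1 + cl b q.2)) * ‖V - W‖ := by
    intro V W q
    simp only [E]
    rw [← smul_sub, norm_smul, Real.norm_eq_abs, abs_of_pos (Real.exp_pos _)]
    gcongr
    exact (V - W).norm_coe_le_norm _
  have key : ∀ V W, ∀ p ∈ Dset a b, ‖I V p - I W p‖
      ≤ M * ‖V - W‖ / l * Real.exp (l * (p.1 + p.2)) := by
    intro V W p hp
    have hn : 0 ≤ M * ‖V - W‖ := by positivity
    rw [Prod.norm_def]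
    refine max_le ?_ ?_
    · have := aux_bound a l p.2 (M * ‖V - W‖) hl0 hn
        (fun u => (∫ s in (0:ℝ)..u, F (s, p.2) (E V (s, p.2))) -
          ∫ s in (0:ℝ)..u, F (s, p.2) (E W (s, p.2)))
        (fun s => F (s, p.2) (E V (s, p.2)) - F (s, p.2) (E W (s, p.2))) (by simp)
        (fun s hs => by
          have h1 : ∀ V, HasDerivAt (fun u => ∫ s in (0:ℝ)..u, F (s, p.2) (E V (s, p.2)))
              (F (s, p.2) (E V (s, p.2))) s := fun V =>
            ((hg V).comp (by fun_prop : Continuous fun s : ℝ => (s, p.2))).integral_hasStrictDerivAt 0 s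
              |>.hasDerivAt
          exact ((h1 V).sub (h1 W)).hasDerivWithinAt)
        (fun s hs => by
          refine (hFl _ _ _).trans ?_
          have := hEd V W (s, p.2)
          simp only [cl_eq hs, cl_eq hp.2] at this
          calc _ ≤ M * (Real.exp (l * (s + p.2)) * ‖V - W‖) := by gcongr
            _ = _ := by ring) p.1 hp.1
      simpa [I] using this
    · have := aux_bound b l p.1 (M * ‖V - W‖) hl0 hn
        (fun u => (∫ s in (0:ℝ)..u, Fb (p.1, s) (E V (p.1, s))) -
          ∫ s in (0:ℝ)..u, Fb (p.1, s) (E W (p.1, s)))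
        (fun s => Fb (p.1, s) (E V (p.1, s)) - Fb (p.1, s) (E W (p.1, s))) (by simp)
        (fun s hs => by
          have h1 : ∀ V, HasDerivAt (fun u => ∫ s in (0:ℝ)..u, Fb (p.1, s) (E V (p.1, s)))
              (Fb (p.1, s) (E V (p.1, s))) s := fun V =>
            ((hgb V).comp (by fun_prop : Continuous fun s : ℝ => (p.1, s))).integral_hasStrictDerivAt 0 s
              |>.hasDerivAt
          exact ((h1 V).sub (h1 W)).hasDerivWithinAt)
        (fun s hs => by
          refine (hFbl _ _ _).trans ?_
          have := hEd V W (p.1, s)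
          simp only [cl_eq hs, cl_eq hp.1] at this
          calc _ ≤ M * (Real.exp (l * (p.1 + s)) * ‖V - W‖) := by gcongr
            _ = _ := by rw [add_comm p.1 s]; ring) p.2 hp.2
      rw [add_comm p.1 p.2]
      simpa [I] using this
  have hlip : LipschitzWith (1/2) T := by
    refine LipschitzWith.of_dist_le_mul fun V W => ?_
    rw [dist_eq_norm, dist_eq_norm]
    have hh : (((1 / 2 : NNReal)) : ℝ) = 1 / 2 := by norm_num
    rw [hh]
    refine (ContinuousMap.norm_le _ (by positivity)).2 fun p => ?_
    have hp := key V W p.1 p.2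
    have : (T V - T W) p = Real.exp (-(l * (p.1.1 + p.1.2))) • (I V p.1 - I W p.1) := by
      simp [T, smul_sub]
    rw [this, norm_smul, Real.norm_eq_abs, abs_of_pos (Real.exp_pos _)]
    calc _ ≤ Real.exp (-(l * (p.1.1 + p.1.2))) *
          (M * ‖V - W‖ / l * Real.exp (l * (p.1.1 + p.1.2))) := by gcongr
      _ = M / l * ‖V - W‖ := by rw [Real.exp_neg]; field_simp
      _ ≤ 1 / 2 * ‖V - W‖ := by
        refine mul_le_mul_of_nonneg_right ?_ (norm_nonneg _)
        rw [div_le_div_iff₀ hl0 (by norm_num)]; linarith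
  have hT : ContractingWith (1/2) T :=
    ⟨by rw [← NNReal.coe_lt_coe]; norm_num, hlip⟩
  obtain ⟨V, hV⟩ : ∃ V, T V = V := ⟨_, hT.fixedPoint_isFixedPt⟩
  refine ⟨E V, hE V, fun p hp => ?_⟩
  change E V p = I V p
  have h1 : E V p = Real.exp (l * (p.1 + p.2)) • V ⟨p, hp⟩ := by
    simp only [E, cl_eq hp.1, cl_eq hp.2]
  have h2 : T V ⟨p, hp⟩ = Real.exp (-(l * (p.1 + p.2))) • I V p := rfl
  rw [hV] at h2
  rw [h1, h2, smul_smul, ← Real.exp_add]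
  simp

/-- global existence and uniqueness for two-variable ODE systems.
If `F : D × 𝕏 → 𝕐` and `F̄ : D × 𝕏 → 𝕐̄` are continuous and uniformly Lipschitz in
`𝕏 = 𝕐 × 𝕐̄`, then for any continuous initial data `U₀ : [0,ū_*] → 𝕐`,
`Ū₀ : [0,u_*] → 𝕐̄` there exists a solution `(U,Ū)` of the two-variable ODE system with
data `(F, F̄, U₀, Ū₀)` on all of `D` (continuous, with continuous partial derivatives
`∂U/∂u`, `∂Ū/∂ū`), and any two such solutions coincide on `D`. -/
theorem stmt_2 {Y Yb : Type*}
    [NormedAddCommGroup Y] [NormedSpace ℝ Y] [CompleteSpace Y]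
    [NormedAddCommGroup Yb] [NormedSpace ℝ Yb] [CompleteSpace Yb]
    (us ubs : ℝ) (hus : 0 < us) (hubs : 0 < ubs)
    (F : ℝ → ℝ → Y × Yb → Y) (Fb : ℝ → ℝ → Y × Yb → Yb)
    (hFc : ContinuousOn (fun q : (ℝ × ℝ) × Y × Yb => F q.1.1 q.1.2 q.2)
      (Dset us ubs ×ˢ univ))
    (hFbc : ContinuousOn (fun q : (ℝ × ℝ) × Y × Yb => Fb q.1.1 q.1.2 q.2)
      (Dset us ubs ×ˢ univ))
    (M : ℝ) (hM : 0 ≤ M)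
    (hFlip : ∀ p ∈ Dset us ubs, ∀ x₁ x₂ : Y × Yb,
      ‖F p.1 p.2 x₁ - F p.1 p.2 x₂‖ ≤ M * ‖x₁ - x₂‖)
    (hFblip : ∀ p ∈ Dset us ubs, ∀ x₁ x₂ : Y × Yb,
      ‖Fb p.1 p.2 x₁ - Fb p.1 p.2 x₂‖ ≤ M * ‖x₁ - x₂‖)
    (U₀ : ℝ → Y) (Ub₀ : ℝ → Yb)
    (hU₀ : ContinuousOn U₀ (Set.Icc 0 ubs)) (hUb₀ : ContinuousOn Ub₀ (Set.Icc 0 us)) :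
    (∃ U : ℝ × ℝ → Y, ∃ Ub : ℝ × ℝ → Yb, IsSolution us ubs F Fb U₀ Ub₀ U Ub) ∧
    (∀ U₁ Ub₁ U₂ Ub₂, IsSolution us ubs F Fb U₀ Ub₀ U₁ Ub₁ →
      IsSolution us ubs F Fb U₀ Ub₀ U₂ Ub₂ →
      ∀ p ∈ Dset us ubs, U₁ p = U₂ p ∧ Ub₁ p = Ub₂ p) := by
  have hcm : ∀ p : ℝ × ℝ, (cl us p.1, cl ubs p.2) ∈ Dset us ubs := fun p =>
    ⟨cl_mem hus _, cl_mem hubs _⟩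
  have c1 := cl_cont us
  have c2 := cl_cont ubs
  constructor
  · obtain ⟨G, hG, hGe⟩ := exists_aux us ubs hus hubs
      (fun p x => F (cl us p.1) (cl ubs p.2) x) (fun p x => Fb (cl us p.1) (cl ubs p.2) x)
      (hFc.comp_continuous (f := fun q : (ℝ × ℝ) × Y × Yb => ((cl us q.1.1, cl ubs q.1.2), q.2))
        (by fun_prop) fun q => ⟨hcm q.1, trivial⟩)
      (hFbc.comp_continuous (f := fun q : (ℝ × ℝ) × Y × Yb => ((cl us q.1.1, cl ubs q.1.2), q.2))
        (by fun_prop) fun q => ⟨hcm q.1, trivial⟩)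
      M hM (fun p => hFlip _ (hcm p)) (fun p => hFblip _ (hcm p))
      (fun v => U₀ (cl ubs v)) (fun u => Ub₀ (cl us u))
      (hU₀.comp_continuous c2 (cl_mem hubs)) (hUb₀.comp_continuous c1 (cl_mem hus))
    have hg : Continuous fun q : ℝ × ℝ => F (cl us q.1) (cl ubs q.2) (G q) :=
      hFc.comp_continuous (f := fun q : ℝ × ℝ => ((cl us q.1, cl ubs q.2), G q))
        (by fun_prop) fun q => ⟨hcm q, trivial⟩
    have hgb : Continuous fun q : ℝ × ℝ => Fb (cl us q.1) (cl ubs q.2) (G q) :=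
      hFbc.comp_continuous (f := fun q : ℝ × ℝ => ((cl us q.1, cl ubs q.2), G q))
        (by fun_prop) fun q => ⟨hcm q, trivial⟩
    refine ⟨fun p => (G p).1, fun p => (G p).2, by fun_prop, by fun_prop, ?_, ?_, ?_, ?_⟩
    · intro p hp
      have h1 := ((hg.comp (by fun_prop : Continuous fun s : ℝ => (s, p.2))).integral_hasStrictDerivAt
        0 p.1).hasDerivAt.hasDerivWithinAt (s := Set.Icc 0 us)
      have h2 := h1.const_add (U₀ (cl ubs p.2))
      simp only [Function.comp, cl_eq hp.1, cl_eq hp.2] at h2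
      refine h2.congr_of_mem (fun t ht => ?_) hp.1
      beta_reduce
      rw [hGe (t, p.2) ⟨ht, hp.2⟩]
      simp [cl_eq hp.2]
    · intro p hp
      have h1 := ((hgb.comp (by fun_prop : Continuous fun s : ℝ => (p.1, s))).integral_hasStrictDerivAt
        0 p.2).hasDerivAt.hasDerivWithinAt (s := Set.Icc 0 ubs)
      have h2 := h1.const_add (Ub₀ (cl us p.1))
      simp only [Function.comp, cl_eq hp.1, cl_eq hp.2] at h2
      refine h2.congr_of_mem (fun t ht => ?_) hp.2
      beta_reduce
      rw [hGe (p.1, t) ⟨hp.1, ht⟩]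
      simp [cl_eq hp.1]
    · intro v hv
      simp only
      rw [hGe (0, v) ⟨⟨le_rfl, hus.le⟩, hv⟩]
      simp [cl_eq hv]
    · intro u hu
      simp only
      rw [hGe (u, 0) ⟨hu, ⟨le_rfl, hubs.le⟩⟩]
      simp [cl_eq hu]
  · rintro U₁ Ub₁ U₂ Ub₂ ⟨a1, a2, a3, a4, a5, a6⟩ ⟨b1, b2, b3, b4, b5, b6⟩
    obtain ⟨l, hl⟩ : ∃ l : ℝ, l = 2 * M + 1 := ⟨_, rfl⟩
    have hl0 : 0 < l := by linarith
    let d : ℝ × ℝ → Y × Yb := fun p => (U₁ p, Ub₁ p) - (U₂ p, Ub₂ p)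
    have hd : ContinuousOn d (Dset us ubs) := (a1.prodMk a2).sub (b1.prodMk b2)
    have hw : ContinuousOn (fun p => Real.exp (-(l * (p.1 + p.2))) * ‖d p‖) (Dset us ubs) :=
      ContinuousOn.mul (by fun_prop) hd.norm
    obtain ⟨p₀, hp₀, hmax⟩ := IsCompact.exists_isMaxOn
      (show IsCompact (Dset us ubs) from isCompact_Icc.prod isCompact_Icc)
      ⟨(0, 0), ⟨le_rfl, hus.le⟩, ⟨le_rfl, hubs.le⟩⟩ hw
    obtain ⟨m, hm⟩ : ∃ m, m = Real.exp (-(l * (p₀.1 + p₀.2))) * ‖d p₀‖ := ⟨_, rfl⟩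
    have hm0 : 0 ≤ m := by rw [hm]; positivity
    have hdm : ∀ p ∈ Dset us ubs, ‖d p‖ ≤ m * Real.exp (l * (p.1 + p.2)) := by
      intro p hp
      have h : Real.exp (-(l * (p.1 + p.2))) * ‖d p‖ ≤ m := hm ▸ hmax hp
      rw [Real.exp_neg, inv_mul_le_iff₀ (Real.exp_pos _)] at h
      linarith
    have key : ∀ p ∈ Dset us ubs, ‖d p‖ ≤ M * m / l * Real.exp (l * (p.1 + p.2)) := by
      intro p hp
      rw [Prod.norm_def]
      refine max_le ?_ ?_
      · refine aux_bound us l p.2 (M * m) hl0 (by positivity)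
          (fun u => U₁ (u, p.2) - U₂ (u, p.2))
          (fun s => F s p.2 (U₁ (s, p.2), Ub₁ (s, p.2)) - F s p.2 (U₂ (s, p.2), Ub₂ (s, p.2)))
          ?_ (fun s hs => (a3 (s, p.2) ⟨hs, hp.2⟩).sub (b3 (s, p.2) ⟨hs, hp.2⟩))
          (fun s hs => ?_) p.1 hp.1
        · simp only [a5 _ hp.2, b5 _ hp.2, sub_self]
        · refine (hFlip (s, p.2) ⟨hs, hp.2⟩ _ _).trans ?_
          rw [mul_assoc]
          gcongr
          exact hdm (s, p.2) ⟨hs, hp.2⟩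
      · rw [add_comm p.1 p.2]
        refine aux_bound ubs l p.1 (M * m) hl0 (by positivity)
          (fun u => Ub₁ (p.1, u) - Ub₂ (p.1, u))
          (fun s => Fb p.1 s (U₁ (p.1, s), Ub₁ (p.1, s)) - Fb p.1 s (U₂ (p.1, s), Ub₂ (p.1, s)))
          ?_ (fun s hs => (a4 (p.1, s) ⟨hp.1, hs⟩).sub (b4 (p.1, s) ⟨hp.1, hs⟩))
          (fun s hs => ?_) p.2 hp.2
        · simp only [a6 _ hp.1, b6 _ hp.1, sub_self]
        · refine (hFblip (p.1, s) ⟨hp.1, hs⟩ _ _).trans ?_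
          rw [mul_assoc, add_comm s p.1]
          gcongr
          exact hdm (p.1, s) ⟨hp.1, hs⟩
    have hm1 : m ≤ M * m / l := by
      have h := key p₀ hp₀
      rw [hm, Real.exp_neg, inv_mul_le_iff₀ (Real.exp_pos _), ← Real.exp_neg, ← hm]
      linarith
    have hm2 : m = 0 := by
      rw [le_div_iff₀ hl0] at hm1
      nlinarith [mul_nonneg hM hm0]
    intro p hp
    have h := hdm p hp
    rw [hm2, zero_mul] at h
    have h' : d p = 0 := norm_le_zero_iff.1 h
    have h3 := sub_eq_zero.1 h'
    exact ⟨congrArg Prod.fst h3, congrArg Prod.snd h3⟩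
end

section
/- Suppose F : D × 𝕏 → 𝕐 and F̄ : D × 𝕏 → 𝕐̄ are continuous and uniformly Lipschitz in 𝕏, and suppose in addition that the partial derivative ∂F/∂ū, the partial Fréchet derivatives ∂F/∂U and ∂F/∂Ū (with respect to the 𝕐- and 𝕐̄-arguments), the partial derivative ∂F̄/∂u, and the partial Fréchet derivatives ∂F̄/∂U and ∂F̄/∂Ū all exist and are continuous on D × 𝕏. If the initial data U₀ : [0,ū_*] → 𝕐 and Ū₀ : [0,u_*] → 𝕐̄ are continuously differentiable, then the unique solution (U,Ū) of the two-variable ODE system with data (F, F̄, U₀, Ū₀) belongs to C¹(D; 𝕏); in particular ∂U/∂ū and ∂Ū/∂u exist and are continuous on D. -/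
open Set

theorem integral_exp_mul_complex_aux (l : ℝ) (hl : l ≠ 0) (u : ℝ) :
    ∫ s in (0:ℝ)..u, Real.exp (l * s) = (Real.exp (l * u) - 1) / l := by
  rw [intervalIntegral.integral_comp_mul_left _ hl, integral_exp]
  simp [div_eq_inv_mul]

theorem aux_lin {Y : Type*} [NormedAddCommGroup Y] [NormedSpace ℝ Y] [CompleteSpace Y]
    (a b : ℝ) (ha : 0 ≤ a) (hb : 0 ≤ b) (A : ℝ × ℝ → (Y →L[ℝ] Y)) (B : ℝ × ℝ → Y) (c : ℝ → Y)
    (hA : Continuous A) (hB : Continuous B) (hc : Continuous c) :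
    ∃ V : ℝ × ℝ → Y, Continuous V ∧ ∀ u ∈ Icc 0 a, ∀ v ∈ Icc 0 b,
      V (u, v) = c v + ∫ s in (0:ℝ)..u, (A (s, v) (V (s, v)) + B (s, v)) := by
  obtain ⟨C, hC⟩ := ((isCompact_Icc (a := (0:ℝ)) (b := a)).prod
    (isCompact_Icc (a := (0:ℝ)) (b := b))).exists_bound_of_continuousOn hA.continuousOn
  have hC0 : 0 ≤ C := (norm_nonneg _).trans (hC (0, 0) ⟨⟨le_rfl, ha⟩, ⟨le_rfl, hb⟩⟩)
  set l : ℝ := 2 * C + 1 with hl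
  have hlpos : 0 < l := by positivity
  let pr : ℝ × ℝ → Icc (0:ℝ) a × Icc (0:ℝ) b := fun p => (projIcc 0 a ha p.1, projIcc 0 b hb p.2)
  have hpr : Continuous pr :=
    (continuous_projIcc.comp continuous_fst).prodMk (continuous_projIcc.comp continuous_snd)
  let I : C(Icc (0:ℝ) a × Icc (0:ℝ) b, Y) → ℝ → ℝ → Y := fun W v s =>
    A (s, v) (Real.exp (l * s) • W (pr (s, v))) + B (s, v)
  have hI : ∀ W, Continuous (fun q : ℝ × ℝ => I W q.1 q.2) := by
    intro W
    have h1 : Continuous fun q : ℝ × ℝ => W (pr (q.2, q.1)) :=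
      W.continuous.comp (hpr.comp (continuous_snd.prodMk continuous_fst))
    simp only [I]
    fun_prop
  let T : C(Icc (0:ℝ) a × Icc (0:ℝ) b, Y) → C(Icc (0:ℝ) a × Icc (0:ℝ) b, Y) := fun W =>
    ⟨fun p => Real.exp (-(l * p.1)) • (c p.2 + ∫ s in (0:ℝ)..p.1, I W p.2 s), by
      have h1 : Continuous fun p : Icc (0:ℝ) a × Icc (0:ℝ) b =>
          ∫ s in (0:ℝ)..p.1, I W p.2 s := by
        apply intervalIntegral.continuous_parametric_intervalIntegral_of_continuous
          (f := fun (p : Icc (0:ℝ) a × Icc (0:ℝ) b) s => I W p.2 s)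
        · exact (hI W).comp (f := fun q : (Icc (0:ℝ) a × Icc (0:ℝ) b) × ℝ => ((q.1.2 : ℝ), q.2))
            (by fun_prop)
        · fun_prop
      fun_prop⟩
  have hT : ContractingWith (1/2) T := by
    refine ⟨by norm_num [← NNReal.coe_lt_coe], LipschitzWith.of_dist_le_mul ?_⟩
    intro W₁ W₂
    rw [ContinuousMap.dist_le (by positivity)]
    rintro ⟨⟨u, hu⟩, ⟨v, hv⟩⟩
    have e : T W₁ (⟨u, hu⟩, ⟨v, hv⟩) - T W₂ (⟨u, hu⟩, ⟨v, hv⟩) =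
        Real.exp (-(l * u)) • ∫ s in (0:ℝ)..u, (I W₁ v s - I W₂ v s) := by
      rw [intervalIntegral.integral_sub]
      · simp only [T, ContinuousMap.coe_mk, ← smul_sub, add_sub_add_left_eq_sub]
      · exact ((hI W₁).comp (f := fun s : ℝ => (v, s)) (by fun_prop)).intervalIntegrable _ _
      · exact ((hI W₂).comp (f := fun s : ℝ => (v, s)) (by fun_prop)).intervalIntegrable _ _
    rw [dist_eq_norm, e, norm_smul, Real.norm_eq_abs, Real.abs_exp]
    have h2 : ‖∫ s in (0:ℝ)..u, (I W₁ v s - I W₂ v s)‖ ≤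
        ∫ s in (0:ℝ)..u, (C * dist W₁ W₂) * Real.exp (l * s) := by
      apply intervalIntegral.norm_integral_le_of_norm_le hu.1
      · refine Filter.Eventually.of_forall fun s hs => ?_
        have : I W₁ v s - I W₂ v s =
          A (s, v) (Real.exp (l * s) • (W₁ (pr (s, v)) - W₂ (pr (s, v)))) := by
          simp only [I, add_sub_add_right_eq_sub, ← map_sub, ← smul_sub]
        rw [this]
        refine (ContinuousLinearMap.le_opNorm _ _).trans ?_
        rw [norm_smul, Real.norm_eq_abs, Real.abs_exp, ← dist_eq_norm]
        have h3 := hC (s, v) ⟨⟨hs.1.le, hs.2.trans hu.2⟩, hv⟩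
        have h4 := ContinuousMap.dist_apply_le_dist (f := W₁) (g := W₂) (pr (s, v))
        calc _ ≤ C * (Real.exp (l * s) * dist W₁ W₂) := by gcongr
          _ = _ := by ring
      · exact Continuous.intervalIntegrable (by fun_prop) _ _
    have h5 : ∫ s in (0:ℝ)..u, (C * dist W₁ W₂) * Real.exp (l * s) =
        (C * dist W₁ W₂) * ((Real.exp (l * u) - 1) / l) := by
      rw [intervalIntegral.integral_const_mul, integral_exp_mul_complex_aux l hlpos.ne' u]
    rw [h5] at h2
    calc _ ≤ Real.exp (-(l * u)) * ((C * dist W₁ W₂) * ((Real.exp (l * u) - 1) / l)) := by gcongr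
      _ ≤ Real.exp (-(l * u)) * ((C * dist W₁ W₂) * ((Real.exp (l * u)) / l)) := by
        gcongr; linarith
      _ = (C / l) * dist W₁ W₂ * (Real.exp (-(l * u)) * Real.exp (l * u)) := by ring
      _ = (C / l) * dist W₁ W₂ := by rw [← Real.exp_add]; simp
      _ ≤ _ := by
        gcongr
        push_cast
        rw [div_le_iff₀ hlpos]; linarith
  have hfix := hT.fixedPoint_isFixedPt
  set W := ContractingWith.fixedPoint T hT with hW
  refine ⟨fun p => Real.exp (l * p.1) • W (pr p), ?_, ?_⟩
  · have : Continuous fun p => W (pr p) := W.continuous.comp hpr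
    fun_prop
  · intro u hu v hv
    have h1 : pr (u, v) = (⟨u, hu⟩, ⟨v, hv⟩) := by
      simp only [pr, projIcc_of_mem _ hu, projIcc_of_mem _ hv]
    have h2 : T W (⟨u, hu⟩, ⟨v, hv⟩) = W (⟨u, hu⟩, ⟨v, hv⟩) := by rw [hfix.eq]
    simp only []
    rw [h1, ← h2]
    simp only [T, ContinuousMap.coe_mk, smul_smul, ← Real.exp_add]
    simp [I]

theorem aux_ext {Z X : Type*} [TopologicalSpace Z] [TopologicalSpace X]
    (a b : ℝ) (ha : 0 ≤ a) (hb : 0 ≤ b) (f : (ℝ × ℝ) × X → Z)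
    (hf : ContinuousOn f ((Icc 0 a ×ˢ Icc 0 b) ×ˢ univ)) :
    ∃ f' : (ℝ × ℝ) × X → Z, Continuous f' ∧ ∀ p ∈ Icc 0 a ×ˢ Icc 0 b, ∀ x, f' (p, x) = f (p, x) := by
  refine ⟨fun q => f ((max 0 (min a q.1.1), max 0 (min b q.1.2)), q.2), ?_, ?_⟩
  · refine hf.comp_continuous (by fun_prop) ?_
    intro q
    exact ⟨⟨⟨le_max_left _ _, max_le ha (min_le_left _ _)⟩,
      ⟨le_max_left _ _, max_le hb (min_le_left _ _)⟩⟩, mem_univ _⟩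
  · rintro ⟨u, v⟩ ⟨hu, hv⟩ x
    simp only
    rw [min_eq_right hu.2, min_eq_right hv.2, max_eq_right hu.1, max_eq_right hv.1]

theorem aux_ext2 {Z : Type*} [TopologicalSpace Z]
    (a b : ℝ) (ha : 0 ≤ a) (hb : 0 ≤ b) (f : ℝ × ℝ → Z)
    (hf : ContinuousOn f (Icc 0 a ×ˢ Icc 0 b)) :
    ∃ f' : ℝ × ℝ → Z, Continuous f' ∧ ∀ p ∈ Icc 0 a ×ˢ Icc 0 b, f' p = f p := by
  obtain ⟨g, hg, h⟩ := aux_ext (X := Unit) a b ha hb (fun q => f q.1)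
    (hf.comp continuousOn_fst (fun q hq => hq.1))
  exact ⟨fun p => g (p, ()), by fun_prop, fun p hp => h p hp ()⟩

theorem aux_tube {Z X : Type*} [PseudoMetricSpace Z] [PseudoMetricSpace X]
    (a b : ℝ) (ha : 0 ≤ a) (hb : 0 ≤ b) (f : (ℝ × ℝ) × X → Z)
    (hf : ContinuousOn f ((Icc 0 a ×ˢ Icc 0 b) ×ˢ univ))
    (x : ℝ × ℝ → X) (hx : ContinuousOn x (Icc 0 a ×ˢ Icc 0 b)) (ε : ℝ) (hε : 0 < ε) :
    ∃ δ > 0, ∀ p ∈ Icc 0 a ×ˢ Icc 0 b, ∀ q ∈ Icc 0 a ×ˢ Icc 0 b, dist q p < δ →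
      ∀ y, dist y (x p) < δ → dist (f (q, y)) (f (p, x p)) < ε := by
  obtain ⟨g, hg, h⟩ := aux_ext a b ha hb f hf
  have hK : IsCompact ((fun p => (p, x p)) '' (Icc (0:ℝ) a ×ˢ Icc (0:ℝ) b)) :=
    (isCompact_Icc.prod isCompact_Icc).image_of_continuousOn (continuousOn_id.prodMk hx)
  have := hK.uniformContinuousAt_of_continuousAt g (fun _ _ => hg.continuousAt)
    (Metric.dist_mem_uniformity hε)
  obtain ⟨δ, hδ, H⟩ := Metric.mem_uniformity_dist.1 this
  refine ⟨δ, hδ, fun p hp q hq hqp y hy => ?_⟩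
  have := H (a := (p, x p)) (b := (q, y)) (by
    rw [dist_comm, Prod.dist_eq]; exact max_lt hqp hy) ⟨p, hp, rfl⟩
  simp only [mem_ofPred_eq] at this
  rwa [h p hp, h q hq, dist_comm] at this

/-- parameter dependence, abstract form -/
theorem aux_param {Y : Type*} [NormedAddCommGroup Y] [NormedSpace ℝ Y] [CompleteSpace Y]
    (a b : ℝ) (ha : 0 < a) (hb : 0 < b) (A : ℝ × ℝ → (Y →L[ℝ] Y)) (B : ℝ × ℝ → Y)
    (U₀ U₀' : ℝ → Y)
    (hA : ContinuousOn A (Icc 0 a ×ˢ Icc 0 b)) (hB : ContinuousOn B (Icc 0 a ×ˢ Icc 0 b))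
    (hU₀ : ∀ v ∈ Icc (0:ℝ) b, HasDerivWithinAt U₀ (U₀' v) (Icc 0 b) v)
    (hU₀' : ContinuousOn U₀' (Icc 0 b))
    (U H : ℝ × ℝ → Y)
    (hU : ∀ u ∈ Icc 0 a, ∀ v ∈ Icc 0 b,
      HasDerivWithinAt (fun t => U (t, v)) (H (u, v)) (Icc 0 a) u)
    (hUi : ∀ v ∈ Icc 0 b, U (0, v) = U₀ v)
    (hlin : ∀ v₀ ∈ Icc 0 b, ∀ ε > 0, ∃ δ > 0, ∀ u ∈ Icc 0 a, ∀ v ∈ Icc 0 b, |v - v₀| < δ →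
      ‖H (u, v) - H (u, v₀) - A (u, v₀) (U (u, v) - U (u, v₀)) - (v - v₀) • B (u, v₀)‖
        ≤ ε * (|v - v₀| + ‖U (u, v) - U (u, v₀)‖)) :
    ∃ g : ℝ × ℝ → Y, ContinuousOn g (Icc 0 a ×ˢ Icc 0 b) ∧
      ∀ p ∈ Icc 0 a ×ˢ Icc 0 b, HasDerivWithinAt (fun v => U (p.1, v)) (g p) (Icc 0 b) p.2 := by
  obtain ⟨A', hA', hAA⟩ := aux_ext2 a b ha.le hb.le A hA
  obtain ⟨B', hB', hBB⟩ := aux_ext2 a b ha.le hb.le B hB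
  obtain ⟨c', hc', hcc⟩ := aux_ext2 a b ha.le hb.le (fun p => U₀' p.2)
    (hU₀'.comp continuousOn_snd (fun q hq => hq.2))
  obtain ⟨V, hV, hVI⟩ := aux_lin a b ha.le hb.le A' B' (fun v => c' (0, v)) hA' hB' (by fun_prop)
  refine ⟨V, hV.continuousOn, ?_⟩
  rintro ⟨u, v₀⟩ ⟨hu, hv₀⟩
  simp only at hu hv₀ ⊢
  have h0 : (0:ℝ) ∈ Icc 0 a := ⟨le_rfl, ha.le⟩
  have hV0 : V (0, v₀) = U₀' v₀ := by
    rw [hVI 0 h0 v₀ hv₀]; simp [hcc (0, v₀) ⟨h0, hv₀⟩]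
  have hVd : ∀ t ∈ Icc 0 a, HasDerivWithinAt (fun t => V (t, v₀))
      (A (t, v₀) (V (t, v₀)) + B (t, v₀)) (Icc 0 a) t := by
    intro t ht
    have hcont : Continuous fun s => A' (s, v₀) (V (s, v₀)) + B' (s, v₀) := by fun_prop
    have h1 := ((hcont.integral_hasStrictDerivAt 0 t).hasDerivAt.const_add
      (c' (0, v₀))).hasDerivWithinAt (s := Icc 0 a)
    rw [hAA _ ⟨ht, hv₀⟩, hBB _ ⟨ht, hv₀⟩] at h1
    exact h1.congr (fun s hs => hVI s hs v₀ hv₀) (hVI t ht v₀ hv₀)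
  have hcompact := (isCompact_Icc (a := (0:ℝ)) (b := a)).prod (isCompact_Icc (a := (0:ℝ)) (b := b))
  obtain ⟨CA, hCA⟩ := hcompact.exists_bound_of_continuousOn hA
  obtain ⟨CV, hCV⟩ := hcompact.exists_bound_of_continuousOn hV.continuousOn
  have hCA0 : 0 ≤ CA := (norm_nonneg _).trans (hCA (u, v₀) ⟨hu, hv₀⟩)
  have hCV0 : 0 ≤ CV := (norm_nonneg _).trans (hCV (u, v₀) ⟨hu, hv₀⟩)
  set K := CA + 1 with hK
  have hK0 : 0 < K := by positivity
  set G : ℝ := Real.exp (K * u) + (1 + CV) / K * (Real.exp (K * u) - 1) with hG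
  have hGpos : 0 < G := by
    have : 1 ≤ Real.exp (K * u) := Real.one_le_exp (mul_nonneg hK0.le hu.1)
    have : 0 ≤ (1 + CV) / K * (Real.exp (K * u) - 1) :=
      mul_nonneg (by positivity) (by linarith)
    have := Real.exp_pos (K * u)
    linarith
  rw [hasDerivWithinAt_iff_isLittleO, Asymptotics.isLittleO_iff]
  intro η hη
  obtain ⟨ε, hε, hε1, hεG⟩ : ∃ ε > 0, ε ≤ 1 ∧ ε * G ≤ η := by
    refine ⟨min 1 (η / G), by positivity, min_le_left _ _, ?_⟩
    calc _ ≤ η / G * G := by gcongr; exact min_le_right _ _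
      _ = η := by field_simp
  obtain ⟨δ, hδ, hl⟩ := hlin v₀ hv₀ ε hε
  have hi := (Asymptotics.isLittleO_iff.1 (hasDerivWithinAt_iff_isLittleO.1 (hU₀ v₀ hv₀))) hε
  have hnear : ∀ᶠ v in nhdsWithin v₀ (Icc 0 b), |v - v₀| < δ :=
    nhdsWithin_le_nhds (Metric.ball_mem_nhds v₀ hδ)
  filter_upwards [hi, hnear, self_mem_nhdsWithin] with v hiv hvδ hv
  rw [Real.norm_eq_abs] at hiv ⊢
  set R : ℝ → Y := fun t => U (t, v) - U (t, v₀) - (v - v₀) • V (t, v₀) with hR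
  set R' : ℝ → Y := fun t => H (t, v) - H (t, v₀) -
    (v - v₀) • (A (t, v₀) (V (t, v₀)) + B (t, v₀)) with hR'
  have hRd : ∀ t ∈ Icc 0 a, HasDerivWithinAt R (R' t) (Icc 0 a) t := fun t ht =>
    ((hU t ht v hv).sub (hU t ht v₀ hv₀)).sub ((hVd t ht).const_smul (v - v₀))
  have hgr := norm_le_gronwallBound_of_norm_deriv_right_le (f := R) (f' := R')
    (δ := ε * |v - v₀|) (K := K) (ε := ε * |v - v₀| * (1 + CV)) (a := 0) (b := a)
    (fun t ht => (hRd t ht).continuousWithinAt)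
    (fun t ht => (hRd t ⟨ht.1, ht.2.le⟩).mono_of_mem_nhdsWithin
      (Icc_mem_nhdsGE_of_mem ht))
    (by simp only [hR]; rw [hUi v hv, hUi v₀ hv₀, hV0]; exact hiv)
    (by
      intro t ht
      have ht : t ∈ Icc 0 a := ⟨ht.1, ht.2.le⟩
      have e : R' t = (H (t, v) - H (t, v₀) - A (t, v₀) (U (t, v) - U (t, v₀))
          - (v - v₀) • B (t, v₀)) + A (t, v₀) (R t) := by
        simp only [hR, hR', map_sub, map_smul, smul_add]; abel
      have h1 := hl t ht v hv hvδ
      have h2 : ‖A (t, v₀) (R t)‖ ≤ CA * ‖R t‖ :=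
        (ContinuousLinearMap.le_opNorm _ _).trans (by gcongr; exact hCA (t, v₀) ⟨ht, hv₀⟩)
      have h3 : ‖U (t, v) - U (t, v₀)‖ ≤ ‖R t‖ + |v - v₀| * CV := by
        have : U (t, v) - U (t, v₀) = R t + (v - v₀) • V (t, v₀) := by simp [hR]
        rw [this]
        refine (norm_add_le _ _).trans ?_
        rw [norm_smul, Real.norm_eq_abs]
        gcongr
        exact hCV (t, v₀) ⟨ht, hv₀⟩
      have h4 := norm_add_le (H (t, v) - H (t, v₀) - A (t, v₀) (U (t, v) - U (t, v₀))
          - (v - v₀) • B (t, v₀)) (A (t, v₀) (R t))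
      rw [← e] at h4
      have h5 : ε * (|v - v₀| + ‖U (t, v) - U (t, v₀)‖) ≤
        ε * (|v - v₀| + (‖R t‖ + |v - v₀| * CV)) := by gcongr
      have h6 : ε * ‖R t‖ ≤ 1 * ‖R t‖ := by gcongr
      simp only [hK]
      linarith) u hu
  rw [gronwallBound_of_K_ne_0 hK0.ne', sub_zero] at hgr
  calc _ ≤ _ := hgr
    _ = (ε * G) * |v - v₀| := by simp only [hG]; ring
    _ ≤ _ := by gcongr

theorem aux_deriv_est {Y : Type*} [NormedAddCommGroup Y] [NormedSpace ℝ Y]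
    (b v₀ δ η : ℝ) (f f' : ℝ → Y) (c : Y)
    (hf : ∀ v ∈ Icc 0 b, HasDerivWithinAt f (f' v) (Icc 0 b) v)
    (hv₀ : v₀ ∈ Icc 0 b)
    (hb : ∀ v ∈ Icc 0 b, |v - v₀| < δ → ‖f' v - c‖ ≤ η) (v : ℝ) (hv : v ∈ Icc 0 b)
    (hvδ : |v - v₀| < δ) : ‖f v - f v₀ - (v - v₀) • c‖ ≤ η * |v - v₀| := by
  have hδ : 0 < δ := (abs_nonneg _).trans_lt hvδ
  have := Convex.norm_image_sub_le_of_norm_hasDerivWithin_le (𝕜 := ℝ)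
    (f := fun w => f w - (w - v₀) • c) (f' := fun w => f' w - c)
    (s := Icc 0 b ∩ Metric.ball v₀ δ) (x := v₀) (y := v) (C := η)
    (fun w hw => by
      have h1 : HasDerivWithinAt (fun w : ℝ => (w - v₀) • c) ((1:ℝ) • c)
        (Icc 0 b ∩ Metric.ball v₀ δ) w :=
        ((hasDerivWithinAt_id w _).sub_const v₀).smul_const c
      rw [one_smul] at h1
      exact ((hf w hw.1).mono inter_subset_left).sub h1)
    (fun w hw => hb w hw.1 hw.2)
    ((convex_Icc 0 b).inter (convex_ball v₀ δ)) ⟨hv₀, Metric.mem_ball_self hδ⟩ ⟨hv, hvδ⟩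
  simp only [sub_self, zero_smul, sub_zero, Real.norm_eq_abs] at this
  rwa [sub_right_comm]

theorem aux_fderiv_est {X Y : Type*} [NormedAddCommGroup X] [NormedSpace ℝ X]
    [NormedAddCommGroup Y] [NormedSpace ℝ Y]
    (x₀ : X) (δ η : ℝ) (f : X → Y) (f' : X → X →L[ℝ] Y) (c : X →L[ℝ] Y)
    (hf : ∀ x, HasFDerivAt f (f' x) x)
    (hb : ∀ x, dist x x₀ < δ → ‖f' x - c‖ ≤ η) (x : X)
    (hx : dist x x₀ < δ) : ‖f x - f x₀ - c (x - x₀)‖ ≤ η * ‖x - x₀‖ := by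
  have hδ : 0 < δ := dist_nonneg.trans_lt hx
  exact Convex.norm_image_sub_le_of_norm_hasFDerivWithin_le' (s := Metric.ball x₀ δ)
    (fun w _ => (hf w).hasFDerivWithinAt) (fun w hw => hb w hw) (convex_ball x₀ δ)
    (Metric.mem_ball_self hδ) hx

theorem aux_half {Y Yb : Type*}
    [NormedAddCommGroup Y] [NormedSpace ℝ Y] [CompleteSpace Y]
    [NormedAddCommGroup Yb] [NormedSpace ℝ Yb]
    (a b : ℝ) (ha : 0 < a) (hb : 0 < b)
    (F : ℝ → ℝ → Y × Yb → Y)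
    (Fub : ℝ → ℝ → Y × Yb → Y)
    (hFub : ∀ p ∈ Icc 0 a ×ˢ Icc 0 b, ∀ x : Y × Yb,
      HasDerivWithinAt (fun v => F p.1 v x) (Fub p.1 p.2 x) (Icc 0 b) p.2)
    (hFubc : ContinuousOn (fun q : (ℝ × ℝ) × Y × Yb => Fub q.1.1 q.1.2 q.2)
      ((Icc 0 a ×ˢ Icc 0 b) ×ˢ univ))
    (FU : ℝ → ℝ → Y × Yb → (Y →L[ℝ] Y))
    (hFU : ∀ p ∈ Icc 0 a ×ˢ Icc 0 b, ∀ x : Y × Yb,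
      HasFDerivAt (fun y : Y => F p.1 p.2 (y, x.2)) (FU p.1 p.2 x) x.1)
    (hFUc : ContinuousOn (fun q : (ℝ × ℝ) × Y × Yb => FU q.1.1 q.1.2 q.2)
      ((Icc 0 a ×ˢ Icc 0 b) ×ˢ univ))
    (FUb : ℝ → ℝ → Y × Yb → (Yb →L[ℝ] Y))
    (hFUb : ∀ p ∈ Icc 0 a ×ˢ Icc 0 b, ∀ x : Y × Yb,
      HasFDerivAt (fun yb : Yb => F p.1 p.2 (x.1, yb)) (FUb p.1 p.2 x) x.2)
    (hFUbc : ContinuousOn (fun q : (ℝ × ℝ) × Y × Yb => FUb q.1.1 q.1.2 q.2)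
      ((Icc 0 a ×ˢ Icc 0 b) ×ˢ univ))
    (U₀ U₀' : ℝ → Y)
    (hU₀ : ∀ v ∈ Icc (0:ℝ) b, HasDerivWithinAt U₀ (U₀' v) (Icc 0 b) v)
    (hU₀' : ContinuousOn U₀' (Icc 0 b))
    (U : ℝ × ℝ → Y) (Ub Hb : ℝ × ℝ → Yb)
    (hUc : ContinuousOn U (Icc 0 a ×ˢ Icc 0 b)) (hUbc : ContinuousOn Ub (Icc 0 a ×ˢ Icc 0 b))
    (hHbc : ContinuousOn Hb (Icc 0 a ×ˢ Icc 0 b))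
    (hU : ∀ p ∈ Icc 0 a ×ˢ Icc 0 b,
      HasDerivWithinAt (fun t => U (t, p.2)) (F p.1 p.2 (U p, Ub p)) (Icc 0 a) p.1)
    (hUb : ∀ p ∈ Icc 0 a ×ˢ Icc 0 b,
      HasDerivWithinAt (fun v => Ub (p.1, v)) (Hb p) (Icc 0 b) p.2)
    (hUi : ∀ v ∈ Icc 0 b, U (0, v) = U₀ v) :
    ∃ g : ℝ × ℝ → Y, ContinuousOn g (Icc 0 a ×ˢ Icc 0 b) ∧
      ∀ p ∈ Icc 0 a ×ˢ Icc 0 b, HasDerivWithinAt (fun v => U (p.1, v)) (g p) (Icc 0 b) p.2 := by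
  have hxc : ContinuousOn (fun p => (U p, Ub p)) (Icc 0 a ×ˢ Icc 0 b) := hUc.prodMk hUbc
  have hpx : ContinuousOn (fun p => (p, (U p, Ub p))) (Icc 0 a ×ˢ Icc 0 b) :=
    continuousOn_id.prodMk hxc
  have hmaps : MapsTo (fun p => (p, (U p, Ub p))) (Icc 0 a ×ˢ Icc 0 b)
    ((Icc 0 a ×ˢ Icc 0 b) ×ˢ univ) := fun p hp => ⟨hp, mem_univ _⟩
  have hA : ContinuousOn (fun p : ℝ × ℝ => FU p.1 p.2 (U p, Ub p)) (Icc 0 a ×ˢ Icc 0 b) :=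
    hFUc.comp hpx hmaps
  have hAb : ContinuousOn (fun p : ℝ × ℝ => FUb p.1 p.2 (U p, Ub p)) (Icc 0 a ×ˢ Icc 0 b) :=
    hFUbc.comp hpx hmaps
  have hC : ContinuousOn (fun p : ℝ × ℝ => Fub p.1 p.2 (U p, Ub p)) (Icc 0 a ×ˢ Icc 0 b) :=
    hFubc.comp hpx hmaps
  have hcompact := (isCompact_Icc (a := (0:ℝ)) (b := a)).prod (isCompact_Icc (a := (0:ℝ)) (b := b))
  refine aux_param a b ha hb (fun p => FU p.1 p.2 (U p, Ub p))
    (fun p => Fub p.1 p.2 (U p, Ub p) + FUb p.1 p.2 (U p, Ub p) (Hb p)) U₀ U₀' hA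
    (hC.add (hAb.clm_apply hHbc)) hU₀ hU₀' U (fun p => F p.1 p.2 (U p, Ub p))
    (fun u hu v hv => hU (u, v) ⟨hu, hv⟩) hUi ?_
  intro v₀ hv₀ ε hε
  obtain ⟨K1, hK1⟩ := hcompact.exists_bound_of_continuousOn hAb
  obtain ⟨K2, hK2⟩ := hcompact.exists_bound_of_continuousOn hHbc
  have h00 : ((0:ℝ), v₀) ∈ Icc (0:ℝ) a ×ˢ Icc (0:ℝ) b := ⟨⟨le_rfl, ha.le⟩, hv₀⟩
  have hK10 : 0 ≤ K1 := (norm_nonneg _).trans (hK1 _ h00)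
  have hK20 : 0 ≤ K2 := (norm_nonneg _).trans (hK2 _ h00)
  obtain ⟨η, hη, hη1, hηε⟩ : ∃ η > 0, η ≤ 1 ∧ η * (2 + K1 + K2) ≤ ε := by
    refine ⟨min 1 (ε / (2 + K1 + K2)), by positivity, min_le_left _ _, ?_⟩
    calc _ ≤ ε / (2 + K1 + K2) * (2 + K1 + K2) := by gcongr; exact min_le_right _ _
      _ = ε := by field_simp
  obtain ⟨δ1, hδ1, H1⟩ := aux_tube a b ha.le hb.le _ hFubc _ hxc η hη
  obtain ⟨δ2, hδ2, H2⟩ := aux_tube a b ha.le hb.le _ hFUc _ hxc η hη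
  obtain ⟨δ3, hδ3, H3⟩ := aux_tube a b ha.le hb.le _ hFUbc _ hxc η hη
  have hucHb := Metric.uniformContinuousOn_iff.1
    (hcompact.uniformContinuousOn_of_continuous hHbc) η hη
  obtain ⟨δ4, hδ4, H4⟩ := hucHb
  set δ := min (min δ1 δ2) (min δ3 δ4) with hδdef
  have hδ : 0 < δ := by positivity
  have hd1 : δ ≤ δ1 := (min_le_left _ _).trans (min_le_left _ _)
  have hd2 : δ ≤ δ2 := (min_le_left _ _).trans (min_le_right _ _)
  have hd3 : δ ≤ δ3 := (min_le_right _ _).trans (min_le_left _ _)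
  have hd4 : δ ≤ δ4 := (min_le_right _ _).trans (min_le_right _ _)
  obtain ⟨δ5, hδ5, H5⟩ := Metric.uniformContinuousOn_iff.1
    (hcompact.uniformContinuousOn_of_continuous hxc) δ hδ
  refine ⟨min δ δ5, by positivity, ?_⟩
  intro u hu v hv hvd
  have hvδ : |v - v₀| < δ := hvd.trans_le (min_le_left _ _)
  have hdist : ∀ w, dist (u, w) (u, v₀) = |w - v₀| := by
    intro w; rw [Prod.dist_eq]; simp [Real.dist_eq]
  have hx := H5 (u, v) ⟨hu, hv⟩ (u, v₀) ⟨hu, hv₀⟩ (by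
    rw [hdist]; exact hvd.trans_le (min_le_right _ _))
  simp only
  set y1 := U (u, v)
  set y0 := U (u, v₀) with hy0
  set z1 := Ub (u, v)
  set z0 := Ub (u, v₀) with hz0
  rw [Prod.dist_eq] at hx
  have hy : dist y1 y0 < δ := (le_max_left _ _).trans_lt hx
  have hz : dist z1 z0 < δ := (le_max_right _ _).trans_lt hx
  have E1 : ‖F u v (y1, z1) - F u v₀ (y1, z1) - (v - v₀) • Fub u v₀ (y0, z0)‖ ≤ η * |v - v₀| := by
    refine aux_deriv_est b v₀ δ η (fun w => F u w (y1, z1)) (fun w => Fub u w (y1, z1)) _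
      (fun w hw => hFub (u, w) ⟨hu, hw⟩ (y1, z1)) hv₀ ?_ v hv hvδ
    intro w hw hwδ
    have := H1 (u, v₀) ⟨hu, hv₀⟩ (u, w) ⟨hu, hw⟩ (by rw [hdist]; exact hwδ.trans_le hd1)
      (y1, z1) (by rw [Prod.dist_eq]; exact (max_lt hy hz).trans_le hd1)
    rw [dist_eq_norm] at this
    exact this.le
  have E2 : ‖F u v₀ (y1, z1) - F u v₀ (y0, z1) - FU u v₀ (y0, z0) (y1 - y0)‖
      ≤ η * ‖y1 - y0‖ := by
    refine aux_fderiv_est y0 δ η (fun y => F u v₀ (y, z1)) (fun y => FU u v₀ (y, z1)) _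
      (fun y => hFU (u, v₀) ⟨hu, hv₀⟩ (y, z1)) ?_ y1 hy
    intro w hw
    have := H2 (u, v₀) ⟨hu, hv₀⟩ (u, v₀) ⟨hu, hv₀⟩ (by rw [dist_self]; exact hδ2)
      (w, z1) (by rw [Prod.dist_eq]; exact (max_lt hw hz).trans_le hd2)
    rw [dist_eq_norm] at this
    exact this.le
  have E3 : ‖F u v₀ (y0, z1) - F u v₀ (y0, z0) - FUb u v₀ (y0, z0) (z1 - z0)‖
      ≤ η * ‖z1 - z0‖ := by
    refine aux_fderiv_est z0 δ η (fun z => F u v₀ (y0, z)) (fun z => FUb u v₀ (y0, z)) _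
      (fun z => hFUb (u, v₀) ⟨hu, hv₀⟩ (y0, z)) ?_ z1 hz
    intro w hw
    have := H3 (u, v₀) ⟨hu, hv₀⟩ (u, v₀) ⟨hu, hv₀⟩ (by rw [dist_self]; exact hδ3)
      (y0, w) (by
        rw [Prod.dist_eq]
        exact (max_lt (by simp only [← hy0, dist_self]; exact hδ) hw).trans_le hd3)
    rw [dist_eq_norm] at this
    exact this.le
  have E4 : ‖z1 - z0 - (v - v₀) • Hb (u, v₀)‖ ≤ η * |v - v₀| := by
    refine aux_deriv_est b v₀ δ η (fun w => Ub (u, w)) (fun w => Hb (u, w)) _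
      (fun w hw => hUb (u, w) ⟨hu, hw⟩) hv₀ ?_ v hv hvδ
    intro w hw hwδ
    have := H4 (u, w) ⟨hu, hw⟩ (u, v₀) ⟨hu, hv₀⟩ (by rw [hdist]; exact hwδ.trans_le hd4)
    rw [dist_eq_norm] at this
    exact this.le
  have E5 : ‖z1 - z0‖ ≤ (1 + K2) * |v - v₀| := by
    have h1 : ‖(v - v₀) • Hb (u, v₀)‖ ≤ |v - v₀| * K2 := by
      rw [norm_smul, Real.norm_eq_abs]; gcongr; exact hK2 _ ⟨hu, hv₀⟩
    have h2 := norm_add_le (z1 - z0 - (v - v₀) • Hb (u, v₀)) ((v - v₀) • Hb (u, v₀))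
    rw [sub_add_cancel] at h2
    have h3 : η * |v - v₀| ≤ 1 * |v - v₀| := by gcongr
    linarith
  have E6 : ‖FUb u v₀ (y0, z0) (z1 - z0 - (v - v₀) • Hb (u, v₀))‖ ≤ K1 * (η * |v - v₀|) :=
    (ContinuousLinearMap.le_opNorm _ _).trans (by gcongr; exact hK1 (u, v₀) ⟨hu, hv₀⟩)
  have e : F u v (y1, z1) - F u v₀ (y0, z0) - FU u v₀ (y0, z0) (y1 - y0) -
      (v - v₀) • (Fub u v₀ (y0, z0) + FUb u v₀ (y0, z0) (Hb (u, v₀))) =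
      (F u v (y1, z1) - F u v₀ (y1, z1) - (v - v₀) • Fub u v₀ (y0, z0)) +
      (F u v₀ (y1, z1) - F u v₀ (y0, z1) - FU u v₀ (y0, z0) (y1 - y0)) +
      (F u v₀ (y0, z1) - F u v₀ (y0, z0) - FUb u v₀ (y0, z0) (z1 - z0)) +
      FUb u v₀ (y0, z0) (z1 - z0 - (v - v₀) • Hb (u, v₀)) := by
    rw [map_sub (FUb u v₀ (y0, z0)) (z1 - z0), map_smul, smul_add]; abel
  rw [e]
  refine norm_add₄_le.trans ?_
  have E7 : η * ‖z1 - z0‖ ≤ η * ((1 + K2) * |v - v₀|) := by gcongr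
  have E8 : η * (2 + K1 + K2) * |v - v₀| ≤ ε * |v - v₀| := by gcongr
  have E9 : η * ‖y1 - y0‖ ≤ ε * ‖y1 - y0‖ := by
    gcongr
    nlinarith [mul_nonneg hη.le hK10, mul_nonneg hη.le hK20]
  linarith

/-- C¹ regularity for two-variable ODE systems. Suppose `F, F̄` are
continuous and uniformly Lipschitz in `𝕏`, and that the partial derivative `∂F/∂ū`, the
partial Fréchet derivatives `∂F/∂U`, `∂F/∂Ū`, the partial derivative `∂F̄/∂u`, and the
partial Fréchet derivatives `∂F̄/∂U`, `∂F̄/∂Ū` all exist and are continuous on `D × 𝕏`.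
If the initial data `U₀, Ū₀` are continuously differentiable, then the (unique) solution
`(U, Ū)` of the two-variable ODE system belongs to `C¹(D; 𝕏)`: in particular `∂U/∂ū` and
`∂Ū/∂u` exist and are continuous on `D` (and `∂U/∂u = F(·,·,U,Ū)`,
`∂Ū/∂ū = F̄(·,·,U,Ū)` are continuous on `D` as well). -/
theorem stmt_4 {Y Yb : Type*}
    [NormedAddCommGroup Y] [NormedSpace ℝ Y] [CompleteSpace Y]
    [NormedAddCommGroup Yb] [NormedSpace ℝ Yb] [CompleteSpace Yb]
    (us ubs : ℝ) (hus : 0 < us) (hubs : 0 < ubs)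
    (F : ℝ → ℝ → Y × Yb → Y) (Fb : ℝ → ℝ → Y × Yb → Yb)
    (hFc : ContinuousOn (fun q : (ℝ × ℝ) × Y × Yb => F q.1.1 q.1.2 q.2)
      (Dset us ubs ×ˢ univ))
    (hFbc : ContinuousOn (fun q : (ℝ × ℝ) × Y × Yb => Fb q.1.1 q.1.2 q.2)
      (Dset us ubs ×ˢ univ))
    (M : ℝ) (hM : 0 ≤ M)
    (hFlip : ∀ p ∈ Dset us ubs, ∀ x₁ x₂ : Y × Yb,
      ‖F p.1 p.2 x₁ - F p.1 p.2 x₂‖ ≤ M * ‖x₁ - x₂‖)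
    (hFblip : ∀ p ∈ Dset us ubs, ∀ x₁ x₂ : Y × Yb,
      ‖Fb p.1 p.2 x₁ - Fb p.1 p.2 x₂‖ ≤ M * ‖x₁ - x₂‖)
    -- ∂F/∂ū exists and is continuous
    (Fub : ℝ → ℝ → Y × Yb → Y)
    (hFub : ∀ p ∈ Dset us ubs, ∀ x : Y × Yb,
      HasDerivWithinAt (fun v => F p.1 v x) (Fub p.1 p.2 x) (Set.Icc 0 ubs) p.2)
    (hFubc : ContinuousOn (fun q : (ℝ × ℝ) × Y × Yb => Fub q.1.1 q.1.2 q.2)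
      (Dset us ubs ×ˢ univ))
    -- ∂F/∂U exists and is continuous
    (FU : ℝ → ℝ → Y × Yb → (Y →L[ℝ] Y))
    (hFU : ∀ p ∈ Dset us ubs, ∀ x : Y × Yb,
      HasFDerivAt (fun y : Y => F p.1 p.2 (y, x.2)) (FU p.1 p.2 x) x.1)
    (hFUc : ContinuousOn (fun q : (ℝ × ℝ) × Y × Yb => FU q.1.1 q.1.2 q.2)
      (Dset us ubs ×ˢ univ))
    -- ∂F/∂Ū exists and is continuous
    (FUb : ℝ → ℝ → Y × Yb → (Yb →L[ℝ] Y))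
    (hFUb : ∀ p ∈ Dset us ubs, ∀ x : Y × Yb,
      HasFDerivAt (fun yb : Yb => F p.1 p.2 (x.1, yb)) (FUb p.1 p.2 x) x.2)
    (hFUbc : ContinuousOn (fun q : (ℝ × ℝ) × Y × Yb => FUb q.1.1 q.1.2 q.2)
      (Dset us ubs ×ˢ univ))
    -- ∂F̄/∂u exists and is continuous
    (Fbu : ℝ → ℝ → Y × Yb → Yb)
    (hFbu : ∀ p ∈ Dset us ubs, ∀ x : Y × Yb,
      HasDerivWithinAt (fun t => Fb t p.2 x) (Fbu p.1 p.2 x) (Set.Icc 0 us) p.1)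
    (hFbuc : ContinuousOn (fun q : (ℝ × ℝ) × Y × Yb => Fbu q.1.1 q.1.2 q.2)
      (Dset us ubs ×ˢ univ))
    -- ∂F̄/∂U exists and is continuous
    (FbU : ℝ → ℝ → Y × Yb → (Y →L[ℝ] Yb))
    (hFbU : ∀ p ∈ Dset us ubs, ∀ x : Y × Yb,
      HasFDerivAt (fun y : Y => Fb p.1 p.2 (y, x.2)) (FbU p.1 p.2 x) x.1)
    (hFbUc : ContinuousOn (fun q : (ℝ × ℝ) × Y × Yb => FbU q.1.1 q.1.2 q.2)
      (Dset us ubs ×ˢ univ))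
    -- ∂F̄/∂Ū exists and is continuous
    (FbUb : ℝ → ℝ → Y × Yb → (Yb →L[ℝ] Yb))
    (hFbUb : ∀ p ∈ Dset us ubs, ∀ x : Y × Yb,
      HasFDerivAt (fun yb : Yb => Fb p.1 p.2 (x.1, yb)) (FbUb p.1 p.2 x) x.2)
    (hFbUbc : ContinuousOn (fun q : (ℝ × ℝ) × Y × Yb => FbUb q.1.1 q.1.2 q.2)
      (Dset us ubs ×ˢ univ))
    -- continuously differentiable initial data
    (U₀ U₀' : ℝ → Y) (Ub₀ Ub₀' : ℝ → Yb)
    (hU₀ : ∀ v ∈ Set.Icc (0:ℝ) ubs, HasDerivWithinAt U₀ (U₀' v) (Set.Icc 0 ubs) v)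
    (hU₀' : ContinuousOn U₀' (Set.Icc 0 ubs))
    (hUb₀ : ∀ t ∈ Set.Icc (0:ℝ) us, HasDerivWithinAt Ub₀ (Ub₀' t) (Set.Icc 0 us) t)
    (hUb₀' : ContinuousOn Ub₀' (Set.Icc 0 us))
    -- the solution
    (U : ℝ × ℝ → Y) (Ub : ℝ × ℝ → Yb)
    (hsol : IsSolution us ubs F Fb U₀ Ub₀ U Ub) :
    (∃ g : ℝ × ℝ → Y, ContinuousOn g (Dset us ubs) ∧
      ∀ p ∈ Dset us ubs, HasDerivWithinAt (fun v => U (p.1, v)) (g p) (Set.Icc 0 ubs) p.2) ∧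
    (∃ gb : ℝ × ℝ → Yb, ContinuousOn gb (Dset us ubs) ∧
      ∀ p ∈ Dset us ubs, HasDerivWithinAt (fun t => Ub (t, p.2)) (gb p) (Set.Icc 0 us) p.1) ∧
    ContinuousOn (fun p : ℝ × ℝ => F p.1 p.2 (U p, Ub p)) (Dset us ubs) ∧
    ContinuousOn (fun p : ℝ × ℝ => Fb p.1 p.2 (U p, Ub p)) (Dset us ubs) := by
  obtain ⟨hUc, hUbc, hU, hUb, hUi, hUbi⟩ := hsol
  have hpx : ContinuousOn (fun p => (p, (U p, Ub p))) (Dset us ubs) :=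
    continuousOn_id.prodMk (hUc.prodMk hUbc)
  have hmaps : MapsTo (fun p => (p, (U p, Ub p))) (Dset us ubs)
    (Dset us ubs ×ˢ univ) := fun p hp => ⟨hp, mem_univ _⟩
  have hH : ContinuousOn (fun p : ℝ × ℝ => F p.1 p.2 (U p, Ub p)) (Dset us ubs) :=
    hFc.comp hpx hmaps
  have hHb : ContinuousOn (fun p : ℝ × ℝ => Fb p.1 p.2 (U p, Ub p)) (Dset us ubs) :=
    hFbc.comp hpx hmaps
  refine ⟨?_, ?_, hH, hHb⟩
  · exact aux_half us ubs hus hubs F Fub hFub hFubc FU hFU hFUc FUb hFUb hFUbc U₀ U₀' hU₀ hU₀'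
      U Ub (fun p => Fb p.1 p.2 (U p, Ub p)) hUc hUbc hHb hU hUb hUi
  · have hsw : ContinuousOn (fun p : ℝ × ℝ => p.swap) (Icc 0 ubs ×ˢ Icc 0 us) :=
      continuous_swap.continuousOn
    have hswm : MapsTo (fun p : ℝ × ℝ => p.swap) (Icc 0 ubs ×ˢ Icc 0 us) (Dset us ubs) :=
      fun p hp => ⟨hp.2, hp.1⟩
    have hsw' : ContinuousOn (fun p : ℝ × ℝ => p.swap) (Dset us ubs) :=
      continuous_swap.continuousOn
    have hsq : ContinuousOn (fun q : (ℝ × ℝ) × Yb × Y => (q.1.swap, q.2.swap))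
      ((Icc 0 ubs ×ˢ Icc 0 us) ×ˢ univ) := by
      apply Continuous.continuousOn
      exact (continuous_swap.comp continuous_fst).prodMk (continuous_swap.comp continuous_snd)
    have hsqm : MapsTo (fun q : (ℝ × ℝ) × Yb × Y => (q.1.swap, q.2.swap))
      ((Icc 0 ubs ×ˢ Icc 0 us) ×ˢ univ) (Dset us ubs ×ˢ univ) :=
      fun q hq => ⟨⟨hq.1.2, hq.1.1⟩, mem_univ _⟩
    obtain ⟨g, hg, hgd⟩ := aux_half ubs us hubs hus (fun u v x => Fb v u x.swap)
      (fun u v x => Fbu v u x.swap) (fun p hp x => hFbu p.swap ⟨hp.2, hp.1⟩ x.swap)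
      (hFbuc.comp hsq hsqm)
      (fun u v x => FbUb v u x.swap) (fun p hp x => hFbUb p.swap ⟨hp.2, hp.1⟩ x.swap)
      (hFbUbc.comp hsq hsqm)
      (fun u v x => FbU v u x.swap) (fun p hp x => hFbU p.swap ⟨hp.2, hp.1⟩ x.swap)
      (hFbUc.comp hsq hsqm)
      Ub₀ Ub₀' hUb₀ hUb₀' (fun p => Ub p.swap) (fun p => U p.swap)
      (fun p => F p.2 p.1 (U p.swap, Ub p.swap))
      (hUbc.comp hsw hswm) (hUc.comp hsw hswm) (hH.comp hsw hswm)
      (fun p hp => hUb p.swap ⟨hp.2, hp.1⟩) (fun p hp => hU p.swap ⟨hp.2, hp.1⟩) hUbi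
    exact ⟨fun p => g p.swap, hg.comp hsw' (fun p hp => ⟨hp.2, hp.1⟩),
      fun p hp => hgd p.swap ⟨hp.2, hp.1⟩⟩
end

section
/- Let k ≥ 1. Suppose F : D × 𝕏 → 𝕐 and F̄ : D × 𝕏 → 𝕐̄ are continuous, uniformly Lipschitz in 𝕏, and k-times continuously Fréchet differentiable in all variables (jointly in (u,ū) and the 𝕏-argument). If U₀ ∈ C^k([0,ū_*]; 𝕐) and Ū₀ ∈ C^k([0,u_*]; 𝕐̄), then the unique solution (U,Ū) of the two-variable ODE system with data (F, F̄, U₀, Ū₀) satisfies (U,Ū) ∈ C^k(D; 𝕏), and moreover the maps ∂U/∂u : D → 𝕐 and ∂Ū/∂ū : D → 𝕐̄ also belong to C^k(D; 𝕐) and C^k(D; 𝕐̄) respectively. -/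
open Set

lemma lin_exists {Y : Type*} [NormedAddCommGroup Y] [NormedSpace ℝ Y] [CompleteSpace Y]
    {us ubs : ℝ} (hus : 0 < us) (hubs : 0 < ubs) {A : ℝ × ℝ → Y →L[ℝ] Y} {B : ℝ × ℝ → Y}
    {W₀ : ℝ → Y} (hA : ContinuousOn A (Dset us ubs)) (hB : ContinuousOn B (Dset us ubs))
    (hW₀ : ContinuousOn W₀ (Icc 0 ubs)) :
    ∃ W : ℝ × ℝ → Y, ContinuousOn W (Dset us ubs) ∧
      (∀ p ∈ Dset us ubs,
        HasDerivWithinAt (fun t => W (t, p.2)) (A p (W p) + B p) (Icc 0 us) p.1) ∧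
      (∀ v ∈ Icc 0 ubs, W (0, v) = W₀ v) := by
  classical
  let K := Icc (0:ℝ) us × Icc (0:ℝ) ubs
  let pr : ℝ × ℝ → K := fun p => (projIcc 0 us hus.le p.1, projIcc 0 ubs hubs.le p.2)
  have hpr : Continuous pr := by
    refine Continuous.prodMk (continuous_projIcc.comp continuous_fst)
      (continuous_projIcc.comp continuous_snd)
  let co : K → ℝ × ℝ := fun k => (k.1, k.2)
  have hco : Continuous co := (continuous_subtype_val.comp continuous_fst).prodMk
    (continuous_subtype_val.comp continuous_snd)
  have hcoD : ∀ k, co k ∈ Dset us ubs := fun k => ⟨k.1.2, k.2.2⟩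
  have hprco : ∀ k, pr (co k) = k := fun k => by simp [pr, co]
  have hcopr : ∀ p ∈ Dset us ubs, co (pr p) = p := by
    rintro ⟨a, b⟩ ⟨ha, hb⟩
    simp only [pr, co] at *
    rw [projIcc_of_mem _ ha, projIcc_of_mem _ hb]
  let A' : ℝ × ℝ → Y →L[ℝ] Y := fun p => A (co (pr p))
  let B' : ℝ × ℝ → Y := fun p => B (co (pr p))
  have hA' : Continuous A' := hA.comp_continuous (hco.comp hpr) (fun p => hcoD _)
  have hB' : Continuous B' := hB.comp_continuous (hco.comp hpr) (fun p => hcoD _)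
  let W₀' : ℝ → Y := fun v => W₀ (projIcc 0 ubs hubs.le v)
  have hW₀' : Continuous W₀' :=
    hW₀.comp_continuous (continuous_subtype_val.comp continuous_projIcc) (fun v => Subtype.prop _)
  obtain ⟨C, hC⟩ : ∃ C : ℝ, ∀ k : K, ‖A (co k)‖ ≤ C := by
    have hc : Continuous (fun k : K => ‖A (co k)‖) :=
      (hA.comp_continuous hco hcoD).norm
    obtain ⟨C, hC⟩ := (isCompact_range hc).bddAbove
    exact ⟨C, fun k => hC ⟨k, rfl⟩⟩
  have hC0 : 0 ≤ C := (norm_nonneg _).trans (hC (pr 0))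
  let h : C(K, Y) → ℝ × ℝ → Y := fun W p => A' p (W (pr p)) + B' p
  have hh : ∀ W, Continuous (h W) := fun W =>
    (hA'.clm_apply (W.continuous.comp hpr)).add hB'
  let S : C(K, Y) → ℝ × ℝ → Y := fun W p => W₀' p.2 + ∫ s in (0:ℝ)..p.1, h W (s, p.2)
  have hS : ∀ W, Continuous (S W) := by
    intro W
    refine (hW₀'.comp continuous_snd).add ?_
    refine intervalIntegral.continuous_parametric_intervalIntegral_of_continuous
      (f := fun (p : ℝ × ℝ) s => h W (s, p.2)) ?_ continuous_fst
    have : (Function.uncurry fun (p : ℝ × ℝ) s => h W (s, p.2)) =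
      fun q : (ℝ × ℝ) × ℝ => h W (q.2, q.1.2) := rfl
    rw [this]
    exact (hh W).comp (by fun_prop)
  let T : C(K, Y) → C(K, Y) := fun W => ⟨fun k => S W (co k), (hS W).comp hco⟩
  have hT : ∀ W₁ W₂ : C(K, Y), ∀ n : ℕ, ∀ k : K,
      ‖(T^[n] W₁) k - (T^[n] W₂) k‖ ≤ (C * k.1) ^ n / n.factorial * dist W₁ W₂ := by
    intro W₁ W₂ n
    induction n with
    | zero =>
      intro k
      simp only [Function.iterate_zero, id, pow_zero, Nat.factorial_zero, Nat.cast_one, div_one,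
        one_mul]
      rw [← dist_eq_norm]
      exact ContinuousMap.dist_apply_le_dist k
    | succ n ih =>
      intro k
      rw [Function.iterate_succ_apply', Function.iterate_succ_apply']
      set V₁ := T^[n] W₁
      set V₂ := T^[n] W₂
      have e : (T V₁) k - (T V₂) k =
          ∫ s in (0:ℝ)..k.1, (h V₁ (s, k.2) - h V₂ (s, k.2)) := by
        rw [intervalIntegral.integral_sub]
        · show S V₁ (co k) - S V₂ (co k) = _
          simp only [S, co]
          abel
        · exact ((hh V₁).comp (by fun_prop)).intervalIntegrable _ _
        · exact ((hh V₂).comp (by fun_prop)).intervalIntegrable _ _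
      rw [e]
      have hk : (0:ℝ) ≤ k.1 := k.1.2.1
      calc ‖∫ s in (0:ℝ)..k.1, (h V₁ (s, k.2) - h V₂ (s, k.2))‖
          ≤ ∫ s in (0:ℝ)..k.1, C ^ (n+1) / n.factorial * dist W₁ W₂ * s ^ n := by
            apply intervalIntegral.norm_integral_le_of_norm_le hk
            · refine Filter.Eventually.of_forall fun s hs => ?_
              have hsI : s ∈ Icc 0 us := ⟨hs.1.le, hs.2.trans k.1.2.2⟩
              have hpk : pr (s, k.2) = (⟨s, hsI⟩, k.2) := by
                simp only [pr]
                rw [projIcc_of_mem _ hsI, projIcc_val]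
              have e2 : h V₁ (s, k.2) - h V₂ (s, k.2)
                  = A' (s, k.2) (V₁ (pr (s, k.2)) - V₂ (pr (s, k.2))) := by
                simp only [h, map_sub]; abel
              rw [e2]
              refine ((A' (s, k.2)).le_opNorm _).trans ?_
              have i1 := hC (pr (s, k.2))
              have i2 := ih (pr (s, k.2))
              have e3 : (((pr (s, k.2)).1 : Icc (0:ℝ) us) : ℝ) = s := by rw [hpk]
              rw [e3] at i2
              refine (mul_le_mul i1 i2 (norm_nonneg _) hC0).trans (le_of_eq ?_)
              rw [mul_pow, pow_succ]; ring
            · exact (Continuous.intervalIntegrable (by fun_prop) _ _)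
        _ = (C * k.1) ^ (n+1) / (n+1).factorial * dist W₁ W₂ := by
            rw [intervalIntegral.integral_const_mul, integral_pow, Nat.factorial_succ]
            push_cast
            field_simp
            ring
  obtain ⟨n, hn⟩ := FloorSemiring.tendsto_pow_div_factorial_atTop (C * us)
    |>.eventually (gt_mem_nhds zero_lt_one) |>.exists
  have hq : (0 : ℝ) ≤ (C * us) ^ n / n.factorial := by positivity
  have hcon : ContractingWith ⟨_, hq⟩ T^[n] := by
    refine ⟨hn, LipschitzWith.of_dist_le_mul fun W₁ W₂ => ?_⟩
    rw [ContinuousMap.dist_le (by positivity)]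
    intro k
    rw [dist_eq_norm]
    refine (hT W₁ W₂ n k).trans ?_
    have h1 : (0:ℝ) ≤ k.1 := k.1.2.1
    have h2 : (k.1:ℝ) ≤ us := k.1.2.2
    show _ ≤ (C * us) ^ n / n.factorial * _
    gcongr
  have : Nonempty C(K, Y) := ⟨0⟩
  obtain ⟨W, hW⟩ : ∃ W, T W = W := ⟨_, hcon.isFixedPt_fixedPoint_iterate⟩
  have hWS : ∀ p ∈ Dset us ubs, S W p = W (pr p) := by
    intro p hp
    have := congrArg (fun f : C(K, Y) => f (pr p)) hW
    simp only [T, ContinuousMap.coe_mk] at this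
    rwa [hcopr p hp] at this
  refine ⟨S W, (hS W).continuousOn, ?_, ?_⟩
  · intro p hp
    have e : A p (S W p) + B p = h W p := by
      simp only [h, A', B']
      rw [hcopr p hp, hWS p hp]
    rw [e]
    have hc : Continuous (fun s => h W (s, p.2)) := (hh W).comp (by fun_prop)
    have := intervalIntegral.integral_hasDerivAt_right (hc.intervalIntegrable 0 p.1)
      (hc.stronglyMeasurableAtFilter _ _) hc.continuousAt
    exact (this.const_add (W₀' p.2)).hasDerivWithinAt
  · intro v hv
    simp only [S, intervalIntegral.integral_same, add_zero, W₀']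
    rw [projIcc_of_mem _ hv]

lemma mv1 {Y : Type*} [NormedAddCommGroup Y] [NormedSpace ℝ Y] {L : ℝ} {f f' : ℝ → Y}
    (hf : ∀ x ∈ Icc 0 L, HasDerivWithinAt f (f' x) (Icc 0 L) x) {a b : ℝ} (ha : a ∈ Icc 0 L)
    (hb : b ∈ Icc 0 L) {c : Y} {ε : ℝ}
    (h : ∀ x ∈ Icc 0 L, |x - a| ≤ |b - a| → ‖f' x - c‖ ≤ ε) :
    ‖f b - f a - (b - a) • c‖ ≤ ε * |b - a| := by
  have hsub : uIcc a b ⊆ Icc 0 L := uIcc_subset_Icc ha hb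
  have h1 : ∀ x ∈ uIcc a b, HasDerivWithinAt (fun x => f x - x • c) (f' x - (1:ℝ) • c)
      (uIcc a b) x := fun x hx =>
    ((hf x (hsub hx)).mono hsub).sub ((hasDerivWithinAt_id x _).smul_const c)
  have h2 : ∀ x ∈ uIcc a b, ‖f' x - (1:ℝ) • c‖ ≤ ε := by
    intro x hx
    rw [one_smul]
    exact h x (hsub hx) (abs_sub_left_of_mem_uIcc hx)
  have := Convex.norm_image_sub_le_of_norm_hasDerivWithin_le h1 h2 (convex_uIcc a b)
    left_mem_uIcc right_mem_uIcc
  rw [Real.norm_eq_abs] at this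
  convert this using 2
  rw [sub_smul]; abel

lemma unif_C1 {P E G : Type*} [MetricSpace P] [NormedAddCommGroup E] [NormedSpace ℝ E]
    [NormedAddCommGroup G] [NormedSpace ℝ G] {Φ : E → G} {Φ' : E → E →L[ℝ] G} {S : Set E}
    (hS : Convex ℝ S) (hΦ : ∀ x ∈ S, HasFDerivWithinAt Φ (Φ' x) S x) (hc : ContinuousOn Φ' S)
    {D : Set P} (hD : IsCompact D) {q : P → E} (hq : ContinuousOn q D) (hqS : MapsTo q D S)
    {ε : ℝ} (hε : 0 < ε) :
    ∃ δ > 0, ∀ p ∈ D, ∀ p' ∈ D, dist p' p < δ →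
      ‖Φ (q p') - Φ (q p) - Φ' (q p) (q p' - q p)‖ ≤ ε * ‖q p' - q p‖ := by
  let m : (P × P) × ℝ → E := fun z => q z.1.1 + z.2 • (q z.1.2 - q z.1.1)
  let KK : Set ((P × P) × ℝ) := (D ×ˢ D) ×ˢ Icc 0 1
  have hK : IsCompact KK := (hD.prod hD).prod isCompact_Icc
  have h1 : ContinuousOn (fun z : (P × P) × ℝ => q z.1.1) KK :=
    hq.comp (by fun_prop) (fun z hz => hz.1.1)
  have h2 : ContinuousOn (fun z : (P × P) × ℝ => q z.1.2) KK :=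
    hq.comp (by fun_prop) (fun z hz => hz.1.2)
  have hm : ContinuousOn m KK := h1.add (continuousOn_snd.smul (h2.sub h1))
  have hmS : MapsTo m KK S := fun z hz =>
    hS.add_smul_sub_mem (hqS hz.1.1) (hqS hz.1.2) hz.2
  have hu := hK.uniformContinuousOn_of_continuous (hc.comp hm hmS)
  rw [Metric.uniformContinuousOn_iff] at hu
  obtain ⟨δ, hδ, H⟩ := hu ε hε
  refine ⟨δ, hδ, fun p hp p' hp' hd => ?_⟩
  have hseg : segment ℝ (q p) (q p') ⊆ S := hS.segment_subset (hqS hp) (hqS hp')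
  refine Convex.norm_image_sub_le_of_norm_hasFDerivWithin_le' (s := segment ℝ (q p) (q p'))
    (f' := Φ') (fun x hx => (hΦ x (hseg hx)).mono hseg) ?_ (convex_segment _ _)
    (left_mem_segment _ _ _) (right_mem_segment _ _ _)
  intro x hx
  rw [segment_eq_image'] at hx
  obtain ⟨t, ht, rfl⟩ := hx
  have := H ((p, p'), t) ⟨⟨hp, hp'⟩, ht⟩ ((p, p), t) ⟨⟨hp, hp⟩, ht⟩
    (by simpa [Prod.dist_eq] using hd)
  rw [dist_eq_norm] at this
  simpa [m] using this.le

lemma partial_fderiv {Y : Type*} [NormedAddCommGroup Y] [NormedSpace ℝ Y] {us ubs : ℝ}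
    {f fu fv : ℝ × ℝ → Y}
    (hu : ∀ p ∈ Dset us ubs, HasDerivWithinAt (fun t => f (t, p.2)) (fu p) (Icc 0 us) p.1)
    (hv : ∀ p ∈ Dset us ubs, HasDerivWithinAt (fun t => f (p.1, t)) (fv p) (Icc 0 ubs) p.2)
    (cu : ContinuousOn fu (Dset us ubs)) (cv : ContinuousOn fv (Dset us ubs))
    {p : ℝ × ℝ} (hp : p ∈ Dset us ubs) :
    HasFDerivWithinAt f ((ContinuousLinearMap.fst ℝ ℝ ℝ).smulRight (fu p) +
      (ContinuousLinearMap.snd ℝ ℝ ℝ).smulRight (fv p)) (Dset us ubs) p := by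
  rw [hasFDerivWithinAt_iff_isLittleO, Asymptotics.isLittleO_iff]
  intro ε hε
  obtain ⟨δ₁, hδ₁, H₁⟩ := Metric.continuousWithinAt_iff.1 (cu p hp) (ε / 2) (by positivity)
  obtain ⟨δ₂, hδ₂, H₂⟩ := Metric.continuousWithinAt_iff.1 (cv p hp) (ε / 2) (by positivity)
  filter_upwards [self_mem_nhdsWithin,
    mem_nhdsWithin_of_mem_nhds (Metric.ball_mem_nhds p (lt_min hδ₁ hδ₂))] with q hq hqb
  obtain ⟨a, b⟩ := p
  obtain ⟨a', b'⟩ := q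
  have hd : max |a' - a| |b' - b| < min δ₁ δ₂ := by
    simpa [Prod.dist_eq, Real.dist_eq] using hqb
  have hda := (le_max_left _ _).trans_lt hd
  have hdb := (le_max_right _ _).trans_lt hd
  have i1 : ‖f (a', b') - f (a, b') - (a' - a) • fu (a, b)‖ ≤ ε / 2 * |a' - a| := by
    refine mv1 (f := fun t => f (t, b')) (f' := fun t => fu (t, b'))
      (fun x hx => hu (x, b') ⟨hx, hq.2⟩) hp.1 hq.1 ?_
    intro x hx hxa
    rw [← dist_eq_norm]
    refine (H₁ (x := (x, b')) ⟨hx, hq.2⟩ ?_).le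
    simp only [Prod.dist_eq, Real.dist_eq]
    exact (max_le (hxa.trans (le_max_left _ _)) (le_max_right _ _)).trans_lt
      (hd.trans_le (min_le_left _ _))
  have i2 : ‖f (a, b') - f (a, b) - (b' - b) • fv (a, b)‖ ≤ ε / 2 * |b' - b| := by
    refine mv1 (f := fun t => f (a, t)) (f' := fun t => fv (a, t))
      (fun x hx => hv (a, x) ⟨hp.1, hx⟩) hp.2 hq.2 ?_
    intro x hx hxa
    rw [← dist_eq_norm]
    refine (H₂ (x := (a, x)) ⟨hp.1, hx⟩ ?_).le
    simp only [Prod.dist_eq, Real.dist_eq, sub_self, abs_zero]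
    exact (max_le ((abs_nonneg _).trans (le_max_left _ _)) (hxa.trans (le_max_right _ _))).trans_lt
      (hd.trans_le (min_le_right _ _))
  have e : f (a', b') - f (a, b) - ((ContinuousLinearMap.fst ℝ ℝ ℝ).smulRight (fu (a, b)) +
      (ContinuousLinearMap.snd ℝ ℝ ℝ).smulRight (fv (a, b))) ((a', b') - (a, b)) =
      (f (a', b') - f (a, b') - (a' - a) • fu (a, b)) +
      (f (a, b') - f (a, b) - (b' - b) • fv (a, b)) := by
    simp only [add_apply, ContinuousLinearMap.smulRight_apply,
      ContinuousLinearMap.coe_fst', ContinuousLinearMap.coe_snd', Prod.fst_sub, Prod.snd_sub]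
    abel
  rw [e]
  refine (norm_add_le _ _).trans ((add_le_add i1 i2).trans ?_)
  have n1 : |a' - a| ≤ ‖(a', b') - (a, b)‖ := norm_fst_le ((a', b') - (a, b))
  have n2 : |b' - b| ≤ ‖(a', b') - (a, b)‖ := norm_snd_le ((a', b') - (a, b))
  nlinarith

lemma Dset_compact (us ubs : ℝ) : IsCompact (Dset us ubs) := isCompact_Icc.prod isCompact_Icc

lemma Dset_convex (us ubs : ℝ) : Convex ℝ (Dset us ubs) := (convex_Icc _ _).prod (convex_Icc _ _)

lemma Dset_unique {us ubs : ℝ} (hus : 0 < us) (hubs : 0 < ubs) :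
    UniqueDiffOn ℝ (Dset us ubs) := (uniqueDiffOn_Icc hus).prod (uniqueDiffOn_Icc hubs)

lemma contDiffOn_of_partial {Y : Type*} [NormedAddCommGroup Y] [NormedSpace ℝ Y] {us ubs : ℝ}
    (hus : 0 < us) (hubs : 0 < ubs) {f fu fv : ℝ × ℝ → Y} {n : ℕ}
    (hu : ∀ p ∈ Dset us ubs, HasDerivWithinAt (fun t => f (t, p.2)) (fu p) (Icc 0 us) p.1)
    (hv : ∀ p ∈ Dset us ubs, HasDerivWithinAt (fun t => f (p.1, t)) (fv p) (Icc 0 ubs) p.2)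
    (cu : ContDiffOn ℝ n fu (Dset us ubs)) (cv : ContDiffOn ℝ n fv (Dset us ubs)) :
    ContDiffOn ℝ (n + 1 : ℕ) f (Dset us ubs) := by
  push_cast
  rw [contDiffOn_succ_iff_hasFDerivWithinAt_of_uniqueDiffOn (Dset_unique hus hubs)]
  refine ⟨by simp, _, ?_, fun p hp => partial_fderiv hu hv cu.continuousOn cv.continuousOn hp⟩
  exact (contDiffOn_const.smulRight cu).add (contDiffOn_const.smulRight cv)

lemma step_lemma {Y Z : Type*} [NormedAddCommGroup Y] [NormedSpace ℝ Y] [CompleteSpace Y]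
    [NormedAddCommGroup Z] [NormedSpace ℝ Z]
    {us ubs : ℝ} (hus : 0 < us) (hubs : 0 < ubs)
    {Φ : (ℝ × ℝ) × Y × Z → Y} {Φ' : (ℝ × ℝ) × Y × Z → ((ℝ × ℝ) × Y × Z) →L[ℝ] Y}
    (hΦ : ∀ x ∈ Dset us ubs ×ˢ (univ : Set (Y × Z)),
      HasFDerivWithinAt Φ (Φ' x) (Dset us ubs ×ˢ univ) x)
    (hΦc : ContinuousOn Φ' (Dset us ubs ×ˢ univ))
    {U : ℝ × ℝ → Y} {V z : ℝ × ℝ → Z}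
    (hUc : ContinuousOn U (Dset us ubs)) (hVc : ContinuousOn V (Dset us ubs))
    (hzc : ContinuousOn z (Dset us ubs))
    (hU : ∀ p ∈ Dset us ubs,
      HasDerivWithinAt (fun t => U (t, p.2)) (Φ (p, (U p, V p))) (Icc 0 us) p.1)
    (hV : ∀ p ∈ Dset us ubs, HasDerivWithinAt (fun t => V (p.1, t)) (z p) (Icc 0 ubs) p.2)
    {U₀ U₀' : ℝ → Y} (hU₀ : ∀ v ∈ Icc 0 ubs, HasDerivWithinAt U₀ (U₀' v) (Icc 0 ubs) v)
    (hU₀c : ContinuousOn U₀' (Icc 0 ubs)) (hi : ∀ v ∈ Icc 0 ubs, U (0, v) = U₀ v) :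
    ∃ W : ℝ × ℝ → Y, ContinuousOn W (Dset us ubs) ∧
      (∀ p ∈ Dset us ubs, HasDerivWithinAt (fun t => U (p.1, t)) (W p) (Icc 0 ubs) p.2) ∧
      (∀ p ∈ Dset us ubs, HasDerivWithinAt (fun t => W (t, p.2))
        (Φ' (p, (U p, V p)) (0, (W p, 0)) + Φ' (p, (U p, V p)) ((0, 1), (0, z p)))
        (Icc 0 us) p.1) ∧
      (∀ v ∈ Icc 0 ubs, W (0, v) = U₀' v) := by
  set D := Dset us ubs with hDdef
  have hDc : IsCompact D := Dset_compact us ubs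
  let q : ℝ × ℝ → (ℝ × ℝ) × Y × Z := fun p => (p, (U p, V p))
  have hq : ContinuousOn q D := continuousOn_id.prodMk (hUc.prodMk hVc)
  have hqS : MapsTo q D (D ×ˢ univ) := fun p hp => ⟨hp, mem_univ _⟩
  have hΦq : ContinuousOn (fun p => Φ' (q p)) D := hΦc.comp hq hqS
  let ι : Y →L[ℝ] (ℝ × ℝ) × Y × Z :=
    (ContinuousLinearMap.inr ℝ (ℝ × ℝ) (Y × Z)).comp (ContinuousLinearMap.inl ℝ Y Z)
  have hι : ∀ y, ι y = (0, (y, 0)) := fun y => rfl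
  obtain ⟨W, hWc, hW, hW0⟩ := lin_exists hus hubs (A := fun p => (Φ' (q p)).comp ι)
    (B := fun p => Φ' (q p) ((0, 1), (0, z p))) (W₀ := U₀') (hΦq.clm_comp continuousOn_const)
    (hΦq.clm_apply (continuousOn_const.prodMk (continuousOn_const.prodMk hzc))) hU₀c
  refine ⟨W, hWc, ?_, hW, hW0⟩
  obtain ⟨CΦ, hCΦ⟩ := hDc.exists_bound_of_continuousOn hΦq
  obtain ⟨CW, hCW⟩ := hDc.exists_bound_of_continuousOn hWc
  obtain ⟨Cz, hCz⟩ := hDc.exists_bound_of_continuousOn hzc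
  have h00 : ((0:ℝ), (0:ℝ)) ∈ D := ⟨⟨le_rfl, hus.le⟩, ⟨le_rfl, hubs.le⟩⟩
  have hCΦ0 : 0 ≤ CΦ := (norm_nonneg _).trans (hCΦ _ h00)
  have hCW0 : 0 ≤ CW := (norm_nonneg _).trans (hCW _ h00)
  have hCz0 : 0 ≤ Cz := (norm_nonneg _).trans (hCz _ h00)
  -- uniform estimate
  set C₂ : ℝ := 2 + CW + Cz + CΦ with hC₂
  set KK : ℝ := CΦ + 1 with hKK
  have hKpos : 0 < KK := by positivity
  set G : ℝ := gronwallBound 1 KK C₂ us with hG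
  have hGpos : 0 < G := by
    have : gronwallBound 1 KK C₂ 0 ≤ G :=
      gronwallBound_mono zero_le_one (by positivity) hKpos.le hus.le
    rw [gronwallBound_x0] at this
    linarith
  have hscale : ∀ a x : ℝ, gronwallBound a KK (a * C₂) x = a * gronwallBound 1 KK C₂ x := by
    intro a x
    simp only [gronwallBound_of_K_ne_0 hKpos.ne']
    ring
  have key : ∀ ε > 0, ε ≤ 1 → ∀ v ∈ Icc 0 ubs, ∃ δ > 0, ∀ v' ∈ Icc 0 ubs, |v' - v| < δ →
      ∀ u ∈ Icc 0 us, ‖U (u, v') - U (u, v) - (v' - v) • W (u, v)‖ ≤ ε * |v' - v| * G := by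
    intro ε hε hε1 v hv
    obtain ⟨δ₁, hδ₁, H₁⟩ := unif_C1 ((Dset_convex us ubs).prod convex_univ) hΦ hΦc hDc hq hqS hε
    obtain ⟨δ₂, hδ₂, H₂⟩ := Metric.uniformContinuousOn_iff.1
      (hDc.uniformContinuousOn_of_continuous hzc) ε hε
    have h0 := hU₀ v hv
    rw [hasDerivWithinAt_iff_isLittleO, Asymptotics.isLittleO_iff] at h0
    have h0' := h0 hε
    rw [Filter.Eventually, Metric.mem_nhdsWithin_iff] at h0'
    obtain ⟨δ₃, hδ₃, H₃⟩ := h0'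
    refine ⟨min δ₁ (min δ₂ δ₃), lt_min hδ₁ (lt_min hδ₂ hδ₃), ?_⟩
    intro v' hv' hd
    have hd1 : |v' - v| < δ₁ := hd.trans_le (min_le_left _ _)
    have hd2 : |v' - v| < δ₂ := hd.trans_le ((min_le_right _ _).trans (min_le_left _ _))
    have hd3 : |v' - v| < δ₃ := hd.trans_le ((min_le_right _ _).trans (min_le_right _ _))
    set h := v' - v with hh
    let e : ℝ → Y := fun u => U (u, v') - U (u, v) - h • W (u, v)
    let e' : ℝ → Y := fun u => Φ (q (u, v')) - Φ (q (u, v)) -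
      h • (Φ' (q (u, v)) (0, (W (u, v), 0)) + Φ' (q (u, v)) ((0, 1), (0, z (u, v))))
    have hede : ∀ u ∈ Icc 0 us, HasDerivWithinAt e (e' u) (Icc 0 us) u := by
      intro u hu
      exact ((hU (u, v') ⟨hu, hv'⟩).sub (hU (u, v) ⟨hu, hv⟩)).sub ((hW (u, v) ⟨hu, hv⟩).const_smul h)
    have hbound : ∀ u ∈ Icc 0 us, ‖e' u‖ ≤ KK * ‖e u‖ + ε * |h| * C₂ := by
      intro u hu
      have hp : (u, v) ∈ D := ⟨hu, hv⟩
      have hp' : (u, v') ∈ D := ⟨hu, hv'⟩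
      have r1 := H₁ (u, v) hp (u, v') hp' (by simpa [Prod.dist_eq, Real.dist_eq] using hd1)
      have r2 : ‖V (u, v') - V (u, v) - h • z (u, v)‖ ≤ ε * |h| := by
        refine mv1 (f := fun t => V (u, t)) (f' := fun t => z (u, t))
          (fun x hx => hV (u, x) ⟨hu, hx⟩) hv hv' ?_
        intro x hx hxv
        rw [← dist_eq_norm]
        exact (H₂ (u, x) ⟨hu, hx⟩ (u, v) hp
          (by simpa [Prod.dist_eq, Real.dist_eq] using hxv.trans_lt hd2)).le
      have e1 : e' u = (Φ (q (u, v')) - Φ (q (u, v)) - Φ' (q (u, v)) (q (u, v') - q (u, v))) +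
          Φ' (q (u, v)) (0, (e u, V (u, v') - V (u, v) - h • z (u, v))) := by
        have e2 : (((0:ℝ × ℝ), (e u, V (u, v') - V (u, v) - h • z (u, v))) : (ℝ × ℝ) × Y × Z) =
            (q (u, v') - q (u, v)) -
            (h • ((0:ℝ × ℝ), (W (u, v), (0:Z))) + h • (((0:ℝ), (1:ℝ)), ((0:Y), z (u, v)))) := by
          simp only [q, e, Prod.mk_sub_mk, Prod.smul_mk, Prod.mk_add_mk, smul_zero]
          refine Prod.ext ?_ (Prod.ext ?_ ?_)
          · refine Prod.ext ?_ ?_ <;> simp [hh]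
          · simp
          · simp
        rw [e2]
        simp only [e', map_sub, map_add, map_smul, smul_add]
        abel
      have nV : ‖V (u, v') - V (u, v)‖ ≤ (ε + Cz) * |h| := by
        have : V (u, v') - V (u, v) = (V (u, v') - V (u, v) - h • z (u, v)) + h • z (u, v) := by
          abel
        rw [this]
        refine (norm_add_le _ _).trans ?_
        rw [norm_smul, Real.norm_eq_abs]
        have := mul_le_mul_of_nonneg_left (hCz _ hp) (abs_nonneg h)
        linarith
      have nU : ‖U (u, v') - U (u, v)‖ ≤ ‖e u‖ + CW * |h| := by
        have : U (u, v') - U (u, v) = e u + h • W (u, v) := by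
          simp only [e]; abel
        rw [this]
        refine (norm_add_le _ _).trans ?_
        rw [norm_smul, Real.norm_eq_abs]
        have := mul_le_mul_of_nonneg_left (hCW _ hp) (abs_nonneg h)
        linarith
      have nq : ‖q (u, v') - q (u, v)‖ ≤ |h| + (‖e u‖ + CW * |h|) + (1 + Cz) * |h| := by
        have p1 := abs_nonneg h
        have p2 := norm_nonneg (e u)
        have p3 : 0 ≤ CW * |h| := by positivity
        have p4 : 0 ≤ (1 + Cz) * |h| := by positivity
        have p5 : (ε + Cz) * |h| ≤ (1 + Cz) * |h| := by gcongr
        have eq : q (u, v') - q (u, v) =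
          ((0, h), (U (u, v') - U (u, v), V (u, v') - V (u, v))) := by simp [q, hh]
        rw [eq, Prod.norm_def, Prod.norm_def, Prod.norm_def]
        simp only [norm_zero, Real.norm_eq_abs]
        refine max_le (max_le ?_ ?_) (max_le ?_ ?_) <;> linarith
      have n2 : ‖((0:ℝ × ℝ), (e u, V (u, v') - V (u, v) - h • z (u, v)))‖ ≤ ‖e u‖ + ε * |h| := by
        have p2 := norm_nonneg (e u)
        have p3 : 0 ≤ ε * |h| := by positivity
        rw [Prod.norm_def, Prod.norm_def]
        simp only [Prod.fst_zero, Prod.snd_zero, norm_zero, max_self]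
        refine max_le ?_ (max_le ?_ ?_) <;> linarith
      have n3 := (Φ' (q (u, v))).le_of_opNorm_le_of_le (hCΦ _ hp) n2
      have n1 := r1.trans (mul_le_mul_of_nonneg_left nq hε.le)
      rw [e1]
      refine (norm_add_le _ _).trans ((add_le_add n1 n3).trans ?_)
      have p6 : ε * ‖e u‖ ≤ 1 * ‖e u‖ := by gcongr
      rw [hKK, hC₂]
      linarith
    intro u hu
    have hg := norm_le_gronwallBound_of_norm_deriv_right_le (f := e) (f' := e')
      (δ := ε * |h|) (K := KK) (ε := ε * |h| * C₂) (a := 0) (b := us)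
      (fun u hu => (hede u hu).continuousWithinAt)
      (fun x hx => (hede x (Ico_subset_Icc_self hx)).mono_of_mem_nhdsWithin
        (Icc_mem_nhdsGE_of_mem hx)) ?_ (fun x hx => hbound x (Ico_subset_Icc_self hx)) u hu
    · refine hg.trans ?_
      rw [hscale, sub_zero]
      have : gronwallBound 1 KK C₂ u ≤ G :=
        gronwallBound_mono zero_le_one (by positivity) hKpos.le hu.2
      gcongr
    · have := H₃ ⟨by simpa [Real.dist_eq] using hd3, hv'⟩
      simp only [mem_ofPred_eq, Real.norm_eq_abs] at this
      simpa only [e, hi v hv, hi v' hv', hW0 v hv] using this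
  intro p hp
  rw [hasDerivWithinAt_iff_isLittleO, Asymptotics.isLittleO_iff]
  intro c hc
  obtain ⟨δ, hδ, H⟩ := key (min 1 (c / G)) (lt_min one_pos (by positivity)) (min_le_left _ _)
    p.2 hp.2
  filter_upwards [self_mem_nhdsWithin,
    mem_nhdsWithin_of_mem_nhds (Metric.ball_mem_nhds p.2 hδ)] with v' hv' hb
  have := H v' hv' (by simpa [Real.dist_eq] using hb) p.1 hp.1
  refine this.trans ?_
  rw [Real.norm_eq_abs]
  have h1 : min 1 (c / G) * G ≤ c := by
    calc min 1 (c / G) * G ≤ c / G * G := by gcongr; exact min_le_right _ _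
      _ = c := by field_simp
  have := mul_le_mul_of_nonneg_right h1 (abs_nonneg (v' - p.2))
  linarith

lemma reg_lemma {Y Z : Type*} [NormedAddCommGroup Y] [NormedSpace ℝ Y] [CompleteSpace Y]
    [NormedAddCommGroup Z] [NormedSpace ℝ Z]
    {us ubs : ℝ} (hus : 0 < us) (hubs : 0 < ubs) (j : ℕ) :
    ∀ {Φ : (ℝ × ℝ) × Y × Z → Y} {U : ℝ × ℝ → Y} {V z : ℝ × ℝ → Z} {U₀ : ℝ → Y}
    (_ : ContDiffOn ℝ (j + 1 : ℕ) Φ (Dset us ubs ×ˢ univ))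
    (_ : ContinuousOn U (Dset us ubs)) (_ : ContDiffOn ℝ j V (Dset us ubs))
    (_ : ContDiffOn ℝ j z (Dset us ubs))
    (_ : ∀ p ∈ Dset us ubs,
      HasDerivWithinAt (fun t => U (t, p.2)) (Φ (p, (U p, V p))) (Icc 0 us) p.1)
    (_ : ∀ p ∈ Dset us ubs, HasDerivWithinAt (fun t => V (p.1, t)) (z p) (Icc 0 ubs) p.2)
    (_ : ContDiffOn ℝ (j + 1 : ℕ) U₀ (Icc 0 ubs)) (_ : ∀ v ∈ Icc 0 ubs, U (0, v) = U₀ v),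
    ContDiffOn ℝ (j + 1 : ℕ) U (Dset us ubs) := by
  induction j with
  | zero =>
    intro Φ U V z U₀ hΦ hUc hV hz hU hVz hU₀ hi
    have hS : UniqueDiffOn ℝ (Dset us ubs ×ˢ (univ : Set (Y × Z))) :=
      (Dset_unique hus hubs).prod uniqueDiffOn_univ
    obtain ⟨W, hWc, hUW, -, -⟩ := step_lemma hus hubs
      (fun x hx => (hΦ.differentiableOn (by simp) x hx).hasFDerivWithinAt)
      (hΦ.continuousOn_fderivWithin hS (by simp)) hUc hV.continuousOn hz.continuousOn hU hVz
      (fun v hv => (hU₀.differentiableOn (by simp) v hv).hasDerivWithinAt)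
      (hU₀.continuousOn_derivWithin (uniqueDiffOn_Icc hubs) (by simp)) hi
    refine contDiffOn_of_partial hus hubs hU hUW ?_ ?_
    · rw [Nat.cast_zero, contDiffOn_zero]
      exact hΦ.continuousOn.comp (continuousOn_id.prodMk (hUc.prodMk hV.continuousOn))
        (fun p hp => ⟨hp, mem_univ _⟩)
    · rw [Nat.cast_zero, contDiffOn_zero]
      exact hWc
  | succ m ih =>
    intro Φ U V z U₀ hΦ hUc hV hz hU hVz hU₀ hi
    have hS : UniqueDiffOn ℝ (Dset us ubs ×ˢ (univ : Set (Y × Z))) :=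
      (Dset_unique hus hubs).prod uniqueDiffOn_univ
    have hne : ((m + 1 + 1 : ℕ) : WithTop ℕ∞) ≠ 0 := by norm_cast
    have hle1 : (1 : WithTop ℕ∞) ≤ ((m + 1 + 1 : ℕ) : WithTop ℕ∞) := by
      norm_cast; omega
    have hle : ((m + 1 : ℕ) : WithTop ℕ∞) ≤ ((m + 1 + 1 : ℕ) : WithTop ℕ∞) := by
      norm_cast; omega
    have hle' : ((m : ℕ) : WithTop ℕ∞) ≤ ((m + 1 : ℕ) : WithTop ℕ∞) := by
      norm_cast; omega
    obtain ⟨W, hWc, hUW, hWd, hW0⟩ := step_lemma hus hubs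
      (fun x hx => (hΦ.differentiableOn hne x hx).hasFDerivWithinAt)
      (hΦ.continuousOn_fderivWithin hS hle1) hUc hV.continuousOn hz.continuousOn hU hVz
      (fun v hv => (hU₀.differentiableOn hne v hv).hasDerivWithinAt)
      (hU₀.continuousOn_derivWithin (uniqueDiffOn_Icc hubs) hle1) hi
    have hUj : ContDiffOn ℝ (m + 1 : ℕ) U (Dset us ubs) :=
      ih (hΦ.of_le hle) hUc (hV.of_le hle') (hz.of_le hle') hU hVz (hU₀.of_le hle) hi
    have hqj : ContDiffOn ℝ (m + 1 : ℕ) (fun p => (p, (U p, V p))) (Dset us ubs) :=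
      contDiffOn_id.prodMk (hUj.prodMk hV)
    have hmaps : MapsTo (fun p => (p, (U p, V p))) (Dset us ubs) (Dset us ubs ×ˢ univ) :=
      fun p hp => ⟨hp, mem_univ _⟩
    have hΦ'j : ContDiffOn ℝ (m + 1 : ℕ)
        (fun p => fderivWithin ℝ Φ (Dset us ubs ×ˢ univ) (p, (U p, V p))) (Dset us ubs) :=
      (hΦ.fderivWithin hS (m := ((m + 1 : ℕ) : WithTop ℕ∞)) (by norm_cast)).comp hqj hmaps
    have hΦ'S : ContDiffOn ℝ (m + 1 : ℕ)
        (fun x : (ℝ × ℝ) × Y × Z =>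
          fderivWithin ℝ Φ (Dset us ubs ×ˢ univ) (x.1, (U x.1, V x.1)))
        (Dset us ubs ×ˢ univ) := hΦ'j.comp contDiffOn_fst (fun x hx => hx.1)
    have hzS : ContDiffOn ℝ (m + 1 : ℕ) (fun x : (ℝ × ℝ) × Y × Z => z x.1)
        (Dset us ubs ×ˢ univ) := hz.comp contDiffOn_fst (fun x hx => hx.1)
    have hyS : ContDiffOn ℝ (m + 1 : ℕ)
        (fun x : (ℝ × ℝ) × Y × Z => ((0, (x.2.1, 0)) : (ℝ × ℝ) × Y × Z))
        (Dset us ubs ×ˢ univ) :=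
      contDiffOn_const.prodMk ((contDiff_fst.comp contDiff_snd).contDiffOn.prodMk contDiffOn_const)
    have hWj : ContDiffOn ℝ (m + 1 : ℕ) W (Dset us ubs) := by
      refine ih (Φ := fun x => fderivWithin ℝ Φ (Dset us ubs ×ˢ univ) (x.1, (U x.1, V x.1))
        (0, (x.2.1, 0)) + fderivWithin ℝ Φ (Dset us ubs ×ˢ univ) (x.1, (U x.1, V x.1))
        ((0, 1), (0, z x.1))) ?_ hWc (hV.of_le hle') (hz.of_le hle') hWd hVz
        (hU₀.derivWithin (uniqueDiffOn_Icc hubs) (by norm_cast)) hW0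
      exact (hΦ'S.clm_apply hyS).add
        (hΦ'S.clm_apply (contDiffOn_const.prodMk (contDiffOn_const.prodMk hzS)))
    exact contDiffOn_of_partial hus hubs hU hUW ((hΦ.of_le hle).comp hqj hmaps) hWj

/-- Cᵏ regularity for two-variable ODE systems. Let `k ≥ 1`. If `F, F̄`
are continuous, uniformly Lipschitz in `𝕏`, and `k`-times continuously (Fréchet)
differentiable jointly in all variables, and `U₀ ∈ Cᵏ([0,ū_*];𝕐)`,
`Ū₀ ∈ Cᵏ([0,u_*];𝕐̄)`, then the (unique) solution `(U,Ū)` of the two-variable ODE system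
satisfies `(U,Ū) ∈ Cᵏ(D;𝕏)`, and moreover the maps `∂U/∂u : D → 𝕐` and
`∂Ū/∂ū : D → 𝕐̄` also belong to `Cᵏ(D;𝕐)` and `Cᵏ(D;𝕐̄)` respectively. -/
theorem stmt_5 {Y Yb : Type*}
    [NormedAddCommGroup Y] [NormedSpace ℝ Y] [CompleteSpace Y]
    [NormedAddCommGroup Yb] [NormedSpace ℝ Yb] [CompleteSpace Yb]
    (us ubs : ℝ) (hus : 0 < us) (hubs : 0 < ubs)
    (k : ℕ) (hk : 1 ≤ k)
    (F : ℝ → ℝ → Y × Yb → Y) (Fb : ℝ → ℝ → Y × Yb → Yb)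
    (hFc : ContinuousOn (fun q : (ℝ × ℝ) × Y × Yb => F q.1.1 q.1.2 q.2)
      (Dset us ubs ×ˢ univ))
    (hFbc : ContinuousOn (fun q : (ℝ × ℝ) × Y × Yb => Fb q.1.1 q.1.2 q.2)
      (Dset us ubs ×ˢ univ))
    (M : ℝ) (hM : 0 ≤ M)
    (hFlip : ∀ p ∈ Dset us ubs, ∀ x₁ x₂ : Y × Yb,
      ‖F p.1 p.2 x₁ - F p.1 p.2 x₂‖ ≤ M * ‖x₁ - x₂‖)
    (hFblip : ∀ p ∈ Dset us ubs, ∀ x₁ x₂ : Y × Yb,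
      ‖Fb p.1 p.2 x₁ - Fb p.1 p.2 x₂‖ ≤ M * ‖x₁ - x₂‖)
    (hFk : ContDiffOn ℝ k (fun q : (ℝ × ℝ) × Y × Yb => F q.1.1 q.1.2 q.2)
      (Dset us ubs ×ˢ univ))
    (hFbk : ContDiffOn ℝ k (fun q : (ℝ × ℝ) × Y × Yb => Fb q.1.1 q.1.2 q.2)
      (Dset us ubs ×ˢ univ))
    (U₀ : ℝ → Y) (Ub₀ : ℝ → Yb)
    (hU₀ : ContDiffOn ℝ k U₀ (Set.Icc 0 ubs))
    (hUb₀ : ContDiffOn ℝ k Ub₀ (Set.Icc 0 us))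
    (U : ℝ × ℝ → Y) (Ub : ℝ × ℝ → Yb)
    (hsol : IsSolution us ubs F Fb U₀ Ub₀ U Ub) :
    ContDiffOn ℝ k U (Dset us ubs) ∧ ContDiffOn ℝ k Ub (Dset us ubs) ∧
    (∃ g : ℝ × ℝ → Y,
      (∀ p ∈ Dset us ubs, HasDerivWithinAt (fun t => U (t, p.2)) (g p) (Set.Icc 0 us) p.1) ∧
      ContDiffOn ℝ k g (Dset us ubs)) ∧
    (∃ gb : ℝ × ℝ → Yb,
      (∀ p ∈ Dset us ubs,
        HasDerivWithinAt (fun v => Ub (p.1, v)) (gb p) (Set.Icc 0 ubs) p.2) ∧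
      ContDiffOn ℝ k gb (Dset us ubs)) := by
  obtain ⟨hUc, hUbc, hU, hUb, hU0, hUb0⟩ := hsol
  have hswap : MapsTo Prod.swap (Dset ubs us) (Dset us ubs) := fun p hp => ⟨hp.2, hp.1⟩
  have hswap' : MapsTo Prod.swap (Dset us ubs) (Dset ubs us) := fun p hp => ⟨hp.2, hp.1⟩
  have hcs : ∀ n : WithTop ℕ∞, ContDiff ℝ n (Prod.swap : ℝ × ℝ → ℝ × ℝ) := fun n =>
    contDiff_snd.prodMk contDiff_fst
  have hmaps : MapsTo (fun p => (p, (U p, Ub p))) (Dset us ubs)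
      (Dset us ubs ×ˢ (univ : Set (Y × Yb))) := fun p hp => ⟨hp, mem_univ _⟩
  have main : ∀ j : ℕ, j ≤ k →
      ContDiffOn ℝ j U (Dset us ubs) ∧ ContDiffOn ℝ j Ub (Dset us ubs) := by
    intro j
    induction j with
    | zero =>
      intro _
      simp only [Nat.cast_zero, contDiffOn_zero]
      exact ⟨hUc, hUbc⟩
    | succ m ih =>
      intro hm
      obtain ⟨h1, h2⟩ := ih (by omega)
      have hle : ((m + 1 : ℕ) : WithTop ℕ∞) ≤ (k : WithTop ℕ∞) := by exact_mod_cast hm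
      have hle' : ((m : ℕ) : WithTop ℕ∞) ≤ (k : WithTop ℕ∞) := by
        exact_mod_cast (by omega : m ≤ k)
      have hq : ContDiffOn ℝ m (fun p => (p, (U p, Ub p))) (Dset us ubs) :=
        contDiffOn_id.prodMk (h1.prodMk h2)
      have hF : ContDiffOn ℝ m (fun p : ℝ × ℝ => F p.1 p.2 (U p, Ub p)) (Dset us ubs) :=
        (hFk.of_le hle').comp hq hmaps
      have hFb : ContDiffOn ℝ m (fun p : ℝ × ℝ => Fb p.1 p.2 (U p, Ub p)) (Dset us ubs) :=
        (hFbk.of_le hle').comp hq hmaps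
      refine ⟨reg_lemma hus hubs m (hFk.of_le hle) hUc h2 hFb hU hUb (hU₀.of_le hle) hU0, ?_⟩
      have hΦ : ContDiffOn ℝ (m + 1 : ℕ)
          (fun x : (ℝ × ℝ) × Yb × Y => Fb x.1.2 x.1.1 (x.2.2, x.2.1))
          (Dset ubs us ×ˢ univ) := by
        refine ContDiffOn.comp (g := fun q : (ℝ × ℝ) × Y × Yb => Fb q.1.1 q.1.2 q.2)
          (f := fun x : (ℝ × ℝ) × Yb × Y => ((x.1.2, x.1.1), (x.2.2, x.2.1)))
          (hFbk.of_le hle) ?_ (fun x hx => ⟨⟨hx.1.2, hx.1.1⟩, mem_univ _⟩)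
        exact ContDiff.contDiffOn (by fun_prop)
      have hs := reg_lemma hubs hus m (U := fun p => Ub p.swap) (V := fun p => U p.swap)
        (z := fun p => F p.2 p.1 (U p.swap, Ub p.swap)) (U₀ := Ub₀) hΦ
        (hUbc.comp continuous_swap.continuousOn hswap)
        (h1.comp (hcs _).contDiffOn hswap) (hF.comp (hcs _).contDiffOn hswap)
        (fun p hp => hUb p.swap (hswap hp)) (fun p hp => hU p.swap (hswap hp))
        (hUb₀.of_le hle) hUb0
      exact hs.comp (hcs _).contDiffOn hswap'
  obtain ⟨h1, h2⟩ := main k le_rfl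
  have hq : ContDiffOn ℝ k (fun p => (p, (U p, Ub p))) (Dset us ubs) :=
    contDiffOn_id.prodMk (h1.prodMk h2)
  exact ⟨h1, h2, ⟨fun p => F p.1 p.2 (U p, Ub p), hU, hFk.comp hq hmaps⟩,
    ⟨fun p => Fb p.1 p.2 (U p, Ub p), hUb, hFbk.comp hq hmaps⟩⟩
end

section
/- Suppose F : D × 𝕏 → 𝕐 and F̄ : D × 𝕏 → 𝕐̄ are continuous, uniformly Lipschitz in 𝕏, and smooth (infinitely Fréchet differentiable) in all variables, and suppose the initial data U₀ : [0,ū_*] → 𝕐 and Ū₀ : [0,u_*] → 𝕐̄ are smooth. Then the unique solution (U,Ū) of the two-variable ODE system with data (F, F̄, U₀, Ū₀) belongs to C^∞(D; 𝕏): every iterated partial derivative of U and of Ū (of any order, in u and ū) exists and is continuous on D. -/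
open Set

section

open Topology Filter

theorem aux_linear {Y : Type*} [NormedAddCommGroup Y] [NormedSpace ℝ Y] [CompleteSpace Y]
    (us ubs : ℝ) (hus : 0 < us) (hubs : 0 < ubs)
    (A : ℝ × ℝ → Y →L[ℝ] Y) (hA : Continuous A) (L : ℝ) (hL : 0 < L) (hAL : ∀ p, ‖A p‖ ≤ L)
    (b : ℝ × ℝ → Y) (hb : Continuous b) (c : ℝ → Y) (hc : Continuous c) :
    ∃ V : ℝ × ℝ → Y, Continuous V ∧ ∀ p ∈ Dset us ubs,
      V p = c p.2 + ∫ s in (0:ℝ)..p.1, (A (s, p.2) (V (s, p.2)) + b (s, p.2)) := by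
  let pi : ℝ × ℝ → (Icc (0:ℝ) us) × (Icc (0:ℝ) ubs) :=
    fun p => (projIcc 0 us hus.le p.1, projIcc 0 ubs hubs.le p.2)
  have hpi : Continuous pi := by
    exact (continuous_projIcc.comp continuous_fst).prodMk (continuous_projIcc.comp continuous_snd)
  let ext : C((Icc (0:ℝ) us) × (Icc (0:ℝ) ubs), Y) → ℝ × ℝ → Y :=
    fun W p => Real.exp (2 * L * p.1) • W (pi p)
  have hext : ∀ W, Continuous (ext W) := by
    intro W
    exact (by fun_prop : Continuous fun p : ℝ × ℝ => Real.exp (2 * L * p.1)).smul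
      (W.continuous.comp hpi)
  have hint : ∀ W, Continuous (fun p : ℝ × ℝ => A p (ext W p) + b p) := by
    intro W
    exact (hA.clm_apply (hext W)).add hb
  have hintv : ∀ W (v : ℝ), Continuous (fun s : ℝ => A (s, v) (ext W (s, v)) + b (s, v)) := by
    intro W v
    exact (hint W).comp (by fun_prop : Continuous fun s : ℝ => (s, v))
  let I : C((Icc (0:ℝ) us) × (Icc (0:ℝ) ubs), Y) → ℝ × ℝ → Y := fun W p =>
    c p.2 + ∫ s in (0:ℝ)..p.1, (A (s, p.2) (ext W (s, p.2)) + b (s, p.2))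
  have hI : ∀ W, Continuous (I W) := by
    intro W
    refine (hc.comp continuous_snd).add ?_
    refine intervalIntegral.continuous_parametric_intervalIntegral_of_continuous
      (f := fun (p : ℝ × ℝ) s => A (s, p.2) (ext W (s, p.2)) + b (s, p.2)) ?_ continuous_fst
    exact (hint W).comp (by fun_prop : Continuous fun q : (ℝ × ℝ) × ℝ => (q.2, q.1.2))
  let T : C((Icc (0:ℝ) us) × (Icc (0:ℝ) ubs), Y) → C((Icc (0:ℝ) us) × (Icc (0:ℝ) ubs), Y) :=
    fun W => ⟨fun k => Real.exp (-(2 * L * (k.1 : ℝ))) • I W ((k.1 : ℝ), (k.2 : ℝ)), by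
      refine Continuous.smul (by fun_prop) ((hI W).comp (by fun_prop))⟩
  have hT : ContractingWith (1/2) T := by
    refine ⟨by norm_num, ?_⟩
    refine LipschitzWith.of_dist_le_mul ?_
    intro W W'
    rw [ContinuousMap.dist_le (by positivity)]
    rintro ⟨⟨u, hu⟩, ⟨v, hv⟩⟩
    have e1 : I W (u, v) - I W' (u, v) =
        ∫ s in (0:ℝ)..u, A (s, v) (ext W (s, v) - ext W' (s, v)) := by
      simp only [I, add_sub_add_left_eq_sub]
      rw [← intervalIntegral.integral_sub ((hintv W v).intervalIntegrable _ _)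
        ((hintv W' v).intervalIntegrable _ _)]
      refine intervalIntegral.integral_congr fun s _ => ?_
      show A (s, v) (ext W (s, v)) + b (s, v) - (A (s, v) (ext W' (s, v)) + b (s, v)) =
        A (s, v) (ext W (s, v) - ext W' (s, v))
      rw [map_sub]
      abel
    have hd : ∀ s, HasDerivAt (fun s => dist W W' / 2 * Real.exp (2 * L * s))
        (L * (Real.exp (2 * L * s) * dist W W')) s := by
      intro s
      have := ((((hasDerivAt_id s).const_mul (2 * L)).exp).const_mul (dist W W' / 2))
      refine HasDerivAt.congr_deriv this ?_
      show dist W W' / 2 * (Real.exp (2 * L * s) * (2 * L * 1)) = _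
      ring
    have e2 : ‖I W (u, v) - I W' (u, v)‖ ≤ dist W W' / 2 * Real.exp (2 * L * u) := by
      rw [e1]
      calc _ ≤ ∫ s in (0:ℝ)..u, L * (Real.exp (2 * L * s) * dist W W') := by
            refine intervalIntegral.norm_integral_le_of_norm_le hu.1 ?_ ?_
            · refine Eventually.of_forall fun s _ => ?_
              refine (ContinuousLinearMap.le_opNorm _ _).trans ?_
              refine mul_le_mul (hAL _) ?_ (norm_nonneg _) hL.le
              simp only [ext, ← smul_sub, norm_smul, Real.norm_eq_abs, Real.abs_exp]
              refine mul_le_mul_of_nonneg_left ?_ (Real.exp_pos _).le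
              rw [← dist_eq_norm]
              exact ContinuousMap.dist_apply_le_dist _
            · exact Continuous.intervalIntegrable (by fun_prop) _ _
        _ = dist W W' / 2 * Real.exp (2 * L * u) - dist W W' / 2 * Real.exp (2 * L * 0) := by
            rw [intervalIntegral.integral_eq_sub_of_hasDerivAt (fun s _ => hd s)]
            exact Continuous.intervalIntegrable (by fun_prop) _ _
        _ ≤ _ := by
            have : (0:ℝ) ≤ dist W W' / 2 * Real.exp (2 * L * 0) := by positivity
            linarith
    rw [dist_eq_norm]
    simp only [T, ContinuousMap.coe_mk, ← smul_sub, norm_smul, Real.norm_eq_abs, Real.abs_exp]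
    calc _ ≤ Real.exp (-(2 * L * u)) * (dist W W' / 2 * Real.exp (2 * L * u)) :=
          mul_le_mul_of_nonneg_left e2 (Real.exp_pos _).le
      _ = (Real.exp (-(2 * L * u)) * Real.exp (2 * L * u)) * (dist W W' / 2) := by ring
      _ = _ := by
          rw [← Real.exp_add]; simp; ring
  have hne : Nonempty C((Icc (0:ℝ) us) × (Icc (0:ℝ) ubs), Y) := ⟨0⟩
  obtain ⟨W, hW⟩ : ∃ W, T W = W := ⟨_, hT.fixedPoint_isFixedPt⟩
  refine ⟨ext W, hext W, ?_⟩
  rintro ⟨u, v⟩ ⟨hu, hv⟩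
  have h1 : W (pi (u, v)) = Real.exp (-(2 * L * u)) • I W (u, v) := by
    conv_lhs => rw [← hW]
    simp only [T, ContinuousMap.coe_mk, pi]
    rw [projIcc_of_mem hus.le hu, projIcc_of_mem hubs.le hv]
  show Real.exp (2 * L * u) • W (pi (u, v)) = I W (u, v)
  rw [h1, smul_smul, ← Real.exp_add]; simp

theorem aux_unif {E Y : Type*} [NormedAddCommGroup E] [NormedSpace ℝ E]
    [NormedAddCommGroup Y] [NormedSpace ℝ Y] (S : Set E) (hS : Convex ℝ S)
    (G : E → Y) (G' : E → E →L[ℝ] Y) (hG : ∀ q ∈ S, HasFDerivWithinAt G (G' q) S q)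
    (hG' : ContinuousOn G' S) (K : Set E) (hK : IsCompact K) (hKS : K ⊆ S)
    (ε : ℝ) (hε : 0 < ε) :
    ∃ δ > 0, ∀ q ∈ K, ∀ q' ∈ S, ‖q' - q‖ < δ → ‖G q' - G q - G' q (q' - q)‖ ≤ ε * ‖q' - q‖ := by
  have hK' : IsCompact ((Subtype.val : S → E) ⁻¹' K) := by
    rw [Subtype.isCompact_iff, Subtype.image_preimage_coe, inter_eq_right.2 hKS]; exact hK
  have := hK'.uniformContinuousAt_of_continuousAt (f := S.domRestrict G')
    (fun a _ => (continuousOn_iff_continuous_domRestrict.1 hG').continuousAt)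
    (Metric.dist_mem_uniformity hε)
  obtain ⟨δ, hδ, h⟩ := Metric.mem_uniformity_dist.1 this
  refine ⟨δ, hδ, fun q hq q' hq' hqq => ?_⟩
  have hsub : segment ℝ q q' ⊆ S := hS.segment_subset (hKS hq) hq'
  refine Convex.norm_image_sub_le_of_norm_hasFDerivWithin_le' (s := segment ℝ q q')
    (f' := G') (fun x hx => (hG x (hsub hx)).mono hsub) ?_ (convex_segment _ _)
    (left_mem_segment _ _ _) (right_mem_segment _ _ _)
  intro x hx
  have hd : dist q x < δ := by
    have h1 : dist q x ≤ dist q q' := by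
      rw [← dist_add_dist_of_mem_segment hx]
      have := dist_nonneg (x := x) (y := q')
      linarith
    have h2 : dist q q' < δ := by rwa [dist_comm q q', dist_eq_norm]
    linarith
  have := @h ⟨q, hKS hq⟩ ⟨x, hsub hx⟩ hd hq
  replace this : dist (G' q) (G' x) < ε := this
  rw [← dist_eq_norm, dist_comm]
  exact this.le

theorem aux_unif1 {Z : Type*} [NormedAddCommGroup Z] [NormedSpace ℝ Z]
    (us ubs : ℝ) (f zv : ℝ × ℝ → Z) (hzv : ContinuousOn zv (Dset us ubs))
    (hf : ∀ p ∈ Dset us ubs,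
      HasDerivWithinAt (fun v => f (p.1, v)) (zv p) (Icc 0 ubs) p.2)
    (ε : ℝ) (hε : 0 < ε) :
    ∃ δ > 0, ∀ u ∈ Icc 0 us, ∀ v ∈ Icc 0 ubs, ∀ w ∈ Icc 0 ubs, |w - v| < δ →
      ‖f (u, w) - f (u, v) - (w - v) • zv (u, v)‖ ≤ ε * |w - v| := by
  have hc : IsCompact (Dset us ubs) := isCompact_Icc.prod isCompact_Icc
  have hu := hc.uniformContinuousOn_of_continuous hzv
  rw [Metric.uniformContinuousOn_iff] at hu
  obtain ⟨δ, hδ, h⟩ := hu ε hε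
  refine ⟨δ, hδ, fun u hu v hv w hw hvw => ?_⟩
  have hsub : uIcc v w ⊆ Icc 0 ubs := by
    exact uIcc_subset_Icc hv hw
  have key := Convex.norm_image_sub_le_of_norm_hasDerivWithin_le (s := uIcc v w)
    (f := fun t => f (u, t) - t • zv (u, v)) (f' := fun t => zv (u, t) - (1:ℝ) • zv (u, v))
    (C := ε) (x := v) (y := w) ?_ ?_ (convex_uIcc _ _) left_mem_uIcc right_mem_uIcc
  · rw [Real.norm_eq_abs] at key
    convert key using 2
    rw [sub_smul]; abel
  · intro t ht
    exact ((hf (u, t) ⟨hu, hsub ht⟩).mono hsub).sub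
      ((hasDerivWithinAt_id t _).smul_const _)
  · intro t ht
    rw [one_smul, ← dist_eq_norm]
    refine (h (u, t) ⟨hu, hsub ht⟩ (u, v) ⟨hu, hv⟩ ?_).le
    rw [Prod.dist_eq]
    simp only [dist_self, Real.dist_eq]
    have := abs_sub_left_of_mem_uIcc ht
    refine max_lt hδ (lt_of_le_of_lt this hvw)

theorem aux_fderiv {Z : Type*} [NormedAddCommGroup Z] [NormedSpace ℝ Z]
    (us ubs : ℝ) (f zu zv : ℝ × ℝ → Z) (hzv : ContinuousOn zv (Dset us ubs))
    (hfu : ∀ p ∈ Dset us ubs,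
      HasDerivWithinAt (fun t => f (t, p.2)) (zu p) (Icc 0 us) p.1)
    (hf : ∀ p ∈ Dset us ubs,
      HasDerivWithinAt (fun v => f (p.1, v)) (zv p) (Icc 0 ubs) p.2)
    (p : ℝ × ℝ) (hp : p ∈ Dset us ubs) :
    HasFDerivWithinAt f ((ContinuousLinearMap.fst ℝ ℝ ℝ).smulRight (zu p) +
      (ContinuousLinearMap.snd ℝ ℝ ℝ).smulRight (zv p)) (Dset us ubs) p := by
  obtain ⟨u, v⟩ := p
  rw [hasFDerivWithinAt_iff_isLittleO, Asymptotics.isLittleO_iff]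
  intro ε hε
  obtain ⟨δ, hδ, h1⟩ := aux_unif1 us ubs f zv hzv hf (ε / 3) (by positivity)
  have h2 := (hfu _ hp)
  rw [hasDerivWithinAt_iff_isLittleO, Asymptotics.isLittleO_iff] at h2
  replace h2 := h2 (show 0 < ε / 3 by positivity)
  have ht : Tendsto (Prod.fst : ℝ × ℝ → ℝ) (𝓝[Dset us ubs] (u, v)) (𝓝[Icc 0 us] u) :=
    tendsto_nhdsWithin_of_tendsto_nhds_of_eventually_within _
      (continuous_fst.continuousAt.tendsto.mono_left nhdsWithin_le_nhds)
      (eventually_nhdsWithin_of_forall fun q hq => hq.1)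
  have ht2 : Tendsto (fun q : ℝ × ℝ => (q.1, v)) (𝓝[Dset us ubs] (u, v)) (𝓝[Dset us ubs] (u, v)) :=
    tendsto_nhdsWithin_of_tendsto_nhds_of_eventually_within _
      (((by fun_prop : Continuous (fun q : ℝ × ℝ => (q.1, v))).tendsto (u, v)).mono_left
        nhdsWithin_le_nhds)
      (eventually_nhdsWithin_of_forall fun q hq => ⟨hq.1, hp.2⟩)
  have h3 := ht2.eventually (Metric.tendsto_nhds.1 (hzv _ hp) (ε / 3) (by positivity))
  have h4 : ∀ᶠ q : ℝ × ℝ in 𝓝[Dset us ubs] (u, v), |q.2 - v| < δ := by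
    refine nhdsWithin_le_nhds ?_
    refine ((by fun_prop : Continuous (fun q : ℝ × ℝ => |q.2 - v|)).tendsto (u, v)).eventually_lt_const ?_
    simpa
  filter_upwards [ht.eventually h2, h3, h4, self_mem_nhdsWithin] with q q2 q3 q4 hq
  obtain ⟨a, w⟩ := q
  simp only at q2 q3 q4
  have k1 := h1 a hq.1 v hp.2 w hq.2 q4
  have e : f (a, w) - f (u, v) - ((ContinuousLinearMap.fst ℝ ℝ ℝ).smulRight (zu (u, v)) +
      (ContinuousLinearMap.snd ℝ ℝ ℝ).smulRight (zv (u, v))) ((a, w) - (u, v)) =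
      (f (a, w) - f (a, v) - (w - v) • zv (a, v)) + (w - v) • (zv (a, v) - zv (u, v))
      + (f (a, v) - f (u, v) - (a - u) • zu (u, v)) := by
    simp [smul_sub, sub_smul]; abel
  rw [e]
  have n1 : |w - v| ≤ ‖((a, w) - (u, v) : ℝ × ℝ)‖ := norm_snd_le ((a, w) - (u, v) : ℝ × ℝ)
  have n2 : |a - u| ≤ ‖((a, w) - (u, v) : ℝ × ℝ)‖ := norm_fst_le ((a, w) - (u, v) : ℝ × ℝ)
  have k2 : ‖(w - v) • (zv (a, v) - zv (u, v))‖ ≤ |w - v| * (ε / 3) := by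
    rw [norm_smul, Real.norm_eq_abs, ← dist_eq_norm]
    exact mul_le_mul_of_nonneg_left q3.le (abs_nonneg _)
  rw [Real.norm_eq_abs] at q2
  refine (norm_add₃_le).trans ?_
  nlinarith [mul_le_mul_of_nonneg_left n1 hε.le, mul_le_mul_of_nonneg_left n2 hε.le]

theorem aux_gron (δ K ε u : ℝ) (hε : 0 ≤ ε) (hK : 1 ≤ K) :
    gronwallBound δ K ε u ≤ (δ + ε) * Real.exp (K * u) := by
  rw [gronwallBound_of_K_ne_0 (by linarith)]
  have h1 : ε / K ≤ ε := div_le_self hε hK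
  have h0 : 0 ≤ ε / K := by positivity
  have h2 := Real.exp_pos (K * u)
  simp only
  nlinarith

theorem aux_core {Y Z : Type*} [NormedAddCommGroup Y] [NormedSpace ℝ Y] [CompleteSpace Y]
    [NormedAddCommGroup Z] [NormedSpace ℝ Z]
    (us ubs : ℝ) (hus : 0 < us) (hubs : 0 < ubs)
    (F : (ℝ × ℝ) × Y × Z → Y) (F' : (ℝ × ℝ) × Y × Z → ((ℝ × ℝ) × Y × Z) →L[ℝ] Y)
    (hF : ∀ q ∈ Dset us ubs ×ˢ univ, HasFDerivWithinAt F (F' q) (Dset us ubs ×ˢ univ) q)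
    (hF' : ContinuousOn F' (Dset us ubs ×ˢ univ))
    (U : ℝ × ℝ → Y) (f zv : ℝ × ℝ → Z)
    (hUc : ContinuousOn U (Dset us ubs)) (hfc : ContinuousOn f (Dset us ubs))
    (hzv : ContinuousOn zv (Dset us ubs))
    (hU : ∀ p ∈ Dset us ubs,
      HasDerivWithinAt (fun t => U (t, p.2)) (F (p, U p, f p)) (Icc 0 us) p.1)
    (hf : ∀ p ∈ Dset us ubs,
      HasDerivWithinAt (fun v => f (p.1, v)) (zv p) (Icc 0 ubs) p.2)
    (U₀ U₀' : ℝ → Y) (hU0 : ∀ v ∈ Icc (0:ℝ) ubs, U (0, v) = U₀ v)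
    (hU₀ : ∀ v ∈ Icc (0:ℝ) ubs, HasDerivWithinAt U₀ (U₀' v) (Icc 0 ubs) v)
    (hU₀' : ContinuousOn U₀' (Icc 0 ubs)) :
    ∃ V : ℝ × ℝ → Y, ContinuousOn V (Dset us ubs) ∧
      (∀ p ∈ Dset us ubs, HasDerivWithinAt (fun v => U (p.1, v)) (V p) (Icc 0 ubs) p.2) ∧
      (∀ p ∈ Dset us ubs, HasDerivWithinAt (fun t => V (t, p.2))
        (F' (p, U p, f p) ((0, 1), (V p, zv p))) (Icc 0 us) p.1) ∧
      (∀ v ∈ Icc (0:ℝ) ubs, V (0, v) = U₀' v) := by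
  have hDc : IsCompact (Dset us ubs) := isCompact_Icc.prod isCompact_Icc
  let pi : ℝ × ℝ → ℝ × ℝ :=
    fun p => ((projIcc 0 us hus.le p.1 : ℝ), (projIcc 0 ubs hubs.le p.2 : ℝ))
  have hpi : Continuous pi :=
    (continuous_subtype_val.comp (continuous_projIcc.comp continuous_fst)).prodMk
      (continuous_subtype_val.comp (continuous_projIcc.comp continuous_snd))
  have hpiD : ∀ p, pi p ∈ Dset us ubs := fun p => ⟨(projIcc 0 us hus.le p.1).2, (projIcc 0 ubs hubs.le p.2).2⟩
  have hpieq : ∀ p ∈ Dset us ubs, pi p = p := by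
    rintro ⟨u, v⟩ ⟨hu, hv⟩
    simp only [pi]
    rw [projIcc_of_mem hus.le hu, projIcc_of_mem hubs.le hv]
  let q : ℝ × ℝ → (ℝ × ℝ) × Y × Z := fun p => (p, U p, f p)
  have hq : ContinuousOn q (Dset us ubs) := continuousOn_id.prodMk (hUc.prodMk hfc)
  have hqS : MapsTo q (Dset us ubs) (Dset us ubs ×ˢ univ) := fun p hp => ⟨hp, mem_univ _⟩
  have hFq : ContinuousOn (fun p => F' (q p)) (Dset us ubs) := hF'.comp hq hqS
  have hFqpi : Continuous (fun p => F' (q (pi p))) := hFq.comp_continuous hpi hpiD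
  obtain ⟨L₀, hL₀⟩ := hDc.exists_bound_of_continuousOn hFq
  obtain ⟨Bz, hBz⟩ := hDc.exists_bound_of_continuousOn hzv
  obtain ⟨L, hL, hLF⟩ : ∃ L : ℝ, 0 < L ∧ ∀ p ∈ Dset us ubs, ‖F' (q p)‖ ≤ L :=
    ⟨max L₀ 1, by positivity, fun p hp => (hL₀ p hp).trans (le_max_left _ _)⟩
  let J : Y →L[ℝ] (ℝ × ℝ) × Y × Z :=
    (ContinuousLinearMap.inr ℝ (ℝ × ℝ) (Y × Z)).comp (ContinuousLinearMap.inl ℝ Y Z)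
  have hJ : ∀ y, J y = ((0, 0), (y, 0)) := fun y => rfl
  have hJn : ‖J‖ ≤ 1 := by
    refine ContinuousLinearMap.opNorm_le_bound _ zero_le_one fun y => ?_
    rw [hJ]; simp [Prod.norm_def]
  obtain ⟨V, hVc, hV⟩ := aux_linear us ubs hus hubs (fun p => (F' (q (pi p))).comp J)
    (hFqpi.clm_comp continuous_const) L hL (by
      intro p
      refine (ContinuousLinearMap.opNorm_comp_le _ _).trans ?_
      calc _ ≤ L * 1 := mul_le_mul (hLF _ (hpiD p)) hJn (norm_nonneg _) hL.le
        _ = L := mul_one L)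
    (fun p => F' (q (pi p)) ((0, 1), (0, zv (pi p))))
    (hFqpi.clm_apply (continuous_const.prodMk (continuous_const.prodMk
      (hzv.comp_continuous hpi hpiD))))
    (fun v => U₀' (projIcc 0 ubs hubs.le v))
    (hU₀'.comp_continuous (continuous_subtype_val.comp continuous_projIcc)
      (fun v => (projIcc 0 ubs hubs.le v).2))
  have hgc : Continuous (fun p => (F' (q (pi p))).comp J (V p) +
      F' (q (pi p)) ((0, 1), (0, zv (pi p)))) :=
    ((hFqpi.clm_comp continuous_const).clm_apply hVc).add
     (hFqpi.clm_apply (continuous_const.prodMk (continuous_const.prodMk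
      (hzv.comp_continuous hpi hpiD))))
  have hVu : ∀ p ∈ Dset us ubs, HasDerivWithinAt (fun t => V (t, p.2))
        (F' (p, U p, f p) ((0, 1), (V p, zv p))) (Icc 0 us) p.1 := by
    rintro ⟨u, v⟩ hp
    have h1 := intervalIntegral.integral_hasDerivAt_right
      (f := fun s => (F' (q (pi (s, v)))).comp J (V (s, v)) +
        F' (q (pi (s, v))) ((0, 1), (0, zv (pi (s, v))))) (a := 0) (b := u)
      ((hgc.comp (by fun_prop : Continuous fun s : ℝ => (s, v))).intervalIntegrable _ _)
      ((hgc.comp (by fun_prop : Continuous fun s : ℝ => (s, v))).stronglyMeasurableAtFilter _ _)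
      (hgc.comp (by fun_prop : Continuous fun s : ℝ => (s, v))).continuousAt
    have h2 := (h1.const_add (U₀' (projIcc 0 ubs hubs.le v))).hasDerivWithinAt (s := Icc 0 us)
    rw [hpieq _ hp] at h2
    have e : F' (q (u, v)) ((0, 1), (V (u, v), zv (u, v))) =
      (F' (q (u, v))).comp J (V (u, v)) + F' (q (u, v)) ((0, 1), (0, zv (u, v))) := by
      rw [ContinuousLinearMap.comp_apply, hJ, ← map_add]; simp
    show HasDerivWithinAt (fun t => V (t, v)) (F' (q (u, v)) ((0, 1), (V (u, v), zv (u, v)))) _ u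
    rw [e]
    refine h2.congr (fun t ht => hV (t, v) ⟨ht, hp.2⟩) (hV (u, v) hp)
  have hV0 : ∀ v ∈ Icc (0:ℝ) ubs, V (0, v) = U₀' v := by
    intro v hv
    have := hV (0, v) ⟨⟨le_rfl, hus.le⟩, hv⟩
    rw [this]
    simp [projIcc_of_mem hubs.le hv]
  refine ⟨V, hVc.continuousOn, ?_, hVu, hV0⟩
  obtain ⟨BV, hBV⟩ := hDc.exists_bound_of_continuousOn hVc.continuousOn
  have h00 : ((0:ℝ), (0:ℝ)) ∈ Dset us ubs := ⟨⟨le_rfl, hus.le⟩, ⟨le_rfl, hubs.le⟩⟩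
  have hBV0 : 0 ≤ BV := (norm_nonneg _).trans (hBV _ h00)
  have hBz0 : 0 ≤ Bz := (norm_nonneg _).trans (hBz _ h00)
  rintro ⟨u, v⟩ hp
  rw [hasDerivWithinAt_iff_isLittleO, Asymptotics.isLittleO_iff]
  intro ε hε
  set C : ℝ := L + 2 + BV + Bz with hC
  set Gc : ℝ := (1 + C) * Real.exp ((L + 1) * us) with hGc
  have hGc0 : 0 < Gc := by positivity
  obtain ⟨e, he0, he1, heε⟩ : ∃ e : ℝ, 0 < e ∧ e ≤ 1 ∧ e * Gc ≤ ε :=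
    ⟨min 1 (ε / Gc), by positivity, min_le_left _ _, by
      calc _ ≤ ε / Gc * Gc := mul_le_mul_of_nonneg_right (min_le_right _ _) hGc0.le
        _ = ε := by field_simp⟩
  have hSconv : Convex ℝ (Dset us ubs ×ˢ (univ : Set (Y × Z))) :=
    ((convex_Icc _ _).prod (convex_Icc _ _)).prod convex_univ
  obtain ⟨δ₁, hδ₁, H1⟩ := aux_unif _ hSconv F F' hF hF' (q '' Dset us ubs) (hDc.image_of_continuousOn hq)
    hqS.image_subset e he0
  obtain ⟨δ₂, hδ₂, H2⟩ := aux_unif1 us ubs f zv hzv hf e he0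
  have hqu := hDc.uniformContinuousOn_of_continuous hq
  rw [Metric.uniformContinuousOn_iff] at hqu
  obtain ⟨δ₃, hδ₃, H3⟩ := hqu δ₁ hδ₁
  have H0 := hU₀ v hp.2
  rw [hasDerivWithinAt_iff_isLittleO, Asymptotics.isLittleO_iff] at H0
  have hnear : ∀ᶠ w in 𝓝[Icc 0 ubs] v, |w - v| < min δ₂ δ₃ := by
    refine nhdsWithin_le_nhds ?_
    refine ((by fun_prop : Continuous (fun w : ℝ => |w - v|)).tendsto v).eventually_lt_const ?_
    simp [hδ₂, hδ₃]
  filter_upwards [H0 he0, hnear, self_mem_nhdsWithin] with w hw0 hwv hw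
  have hwv2 := lt_of_lt_of_le hwv (min_le_left _ _)
  have hwv3 := lt_of_lt_of_le hwv (min_le_right _ _)
  have main := norm_le_gronwallBound_of_norm_deriv_right_le
    (f := fun t => U (t, w) - U (t, v) - (w - v) • V (t, v))
    (f' := fun t => F (q (t, w)) - F (q (t, v)) - (w - v) • F' (q (t, v)) ((0, 1), (V (t, v), zv (t, v))))
    (δ := e * |w - v|) (K := L + 1) (ε := e * C * |w - v|) (a := 0) (b := us) ?_ ?_ ?_ ?_ u hp.1
  · rw [sub_zero] at main
    refine main.trans ((aux_gron _ _ _ _ (by positivity) (by linarith)).trans ?_)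
    rw [Real.norm_eq_abs]
    calc _ ≤ (e * |w - v| + e * C * |w - v|) * Real.exp ((L + 1) * us) := by
          gcongr
          exact hp.1.2
      _ = (e * Gc) * |w - v| := by rw [hGc]; ring
      _ ≤ _ := by gcongr
  · have hcU : ∀ v ∈ Icc 0 ubs, ContinuousOn (fun t => U (t, v)) (Icc 0 us) := fun v hv =>
      hUc.comp (by fun_prop) (fun t ht => ⟨ht, hv⟩)
    exact ((hcU w hw).sub (hcU v hp.2)).sub
      (by fun_prop : Continuous fun t => (w - v) • V (t, v)).continuousOn
  · intro t ht
    have ht' : t ∈ Icc 0 us := Ico_subset_Icc_self ht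
    refine HasDerivWithinAt.mono_of_mem_nhdsWithin (t := Icc 0 us) ?_ ?_
    · exact ((hU (t, w) ⟨ht', hw⟩).sub (hU (t, v) ⟨ht', hp.2⟩)).sub
        ((hVu (t, v) ⟨ht', hp.2⟩).const_smul (w - v))
    · exact mem_of_superset (Icc_mem_nhdsGE ht.2) (Icc_subset_Icc_left ht.1)
  · rw [hU0 w hw, hU0 v hp.2, hV0 v hp.2]
    exact hw0
  · intro t ht
    have ht' : t ∈ Icc 0 us := Ico_subset_Icc_self ht
    have hDw : (t, w) ∈ Dset us ubs := ⟨ht', hw⟩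
    have hDv : (t, v) ∈ Dset us ubs := ⟨ht', hp.2⟩
    have hR := H2 t ht' v hp.2 w hw hwv2
    set E := U (t, w) - U (t, v) - (w - v) • V (t, v) with hE
    set R := f (t, w) - f (t, v) - (w - v) • zv (t, v) with hRdef
    have hdist : ‖q (t, w) - q (t, v)‖ < δ₁ := by
      rw [← dist_eq_norm]
      refine H3 _ hDw _ hDv ?_
      rw [Prod.dist_eq]
      simp only [dist_self, Real.dist_eq]
      exact max_lt hδ₃ hwv3
    have hmain := H1 (q (t, v)) ⟨_, hDv, rfl⟩ (q (t, w)) (hqS hDw) hdist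
    have hqd : q (t, w) - q (t, v) = ((0, 0), (E, R)) + (w - v) • ((0, 1), (V (t, v), zv (t, v))) := by
      simp [q, hE, hRdef]
    have hER : ‖(((0, 0), (E, R)) : (ℝ × ℝ) × Y × Z)‖ ≤ ‖E‖ + e * |w - v| := by
      simp only [Prod.norm_def, norm_zero, max_self]
      have := norm_nonneg E
      have : 0 ≤ e * |w - v| := by positivity
      refine max_le (by linarith) (max_le (by linarith) (by linarith))
    have h1V : ‖(((0, 1), (V (t, v), zv (t, v))) : (ℝ × ℝ) × Y × Z)‖ ≤ 1 + BV + Bz := by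
      have := hBV _ hDv
      have := hBz _ hDv
      simp only [Prod.norm_def, norm_zero, norm_one]
      refine max_le (max_le (by linarith) (by linarith)) (max_le (by linarith) (by linarith))
    have hqn : ‖q (t, w) - q (t, v)‖ ≤ ‖E‖ + e * |w - v| + |w - v| * (1 + BV + Bz) := by
      rw [hqd]
      refine (norm_add_le _ _).trans (add_le_add hER ?_)
      rw [norm_smul, Real.norm_eq_abs]
      gcongr
    have hFn : ‖F' (q (t, v)) ((0, 0), (E, R))‖ ≤ L * (‖E‖ + e * |w - v|) :=
      (ContinuousLinearMap.le_opNorm _ _).trans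
        (mul_le_mul (hLF _ hDv) hER (norm_nonneg _) hL.le)
    have hsplit : F (q (t, w)) - F (q (t, v)) - (w - v) • F' (q (t, v)) ((0, 1), (V (t, v), zv (t, v)))
        = (F (q (t, w)) - F (q (t, v)) - F' (q (t, v)) (q (t, w) - q (t, v)))
          + F' (q (t, v)) ((0, 0), (E, R)) := by
      rw [hqd, map_add, map_smul]; abel
    rw [hsplit]
    refine (norm_add_le _ _).trans ((add_le_add (hmain.trans
      (mul_le_mul_of_nonneg_left hqn he0.le)) hFn).trans ?_)
    have a1 : e * ‖E‖ ≤ 1 * ‖E‖ := mul_le_mul_of_nonneg_right he1 (norm_nonneg _)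
    have a2 : e * (e * |w - v|) ≤ 1 * (e * |w - v|) :=
      mul_le_mul_of_nonneg_right he1 (by positivity)
    rw [hC]
    nlinarith

theorem aux_swap (us ubs : ℝ) (p : ℝ × ℝ) : p.swap ∈ Dset us ubs ↔ p ∈ Dset ubs us :=
  ⟨fun h => ⟨h.2, h.1⟩, fun h => ⟨h.2, h.1⟩⟩

theorem aux_succ {Z : Type*} [NormedAddCommGroup Z] [NormedSpace ℝ Z]
    (us ubs : ℝ) (n : ℕ) (f zu zv : ℝ × ℝ → Z)
    (hzu : ContDiffOn ℝ n zu (Dset us ubs)) (hzv : ContDiffOn ℝ n zv (Dset us ubs))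
    (hfu : ∀ p ∈ Dset us ubs,
      HasDerivWithinAt (fun t => f (t, p.2)) (zu p) (Icc 0 us) p.1)
    (hf : ∀ p ∈ Dset us ubs,
      HasDerivWithinAt (fun v => f (p.1, v)) (zv p) (Icc 0 ubs) p.2) :
    ContDiffOn ℝ ((n + 1 : ℕ)) f (Dset us ubs) := by
  have key := aux_fderiv us ubs f zu zv hzv.continuousOn hfu hf
  push_cast
  rw [contDiffOn_succ_iff_hasFDerivWithinAt (by simp)]
  intro x hx
  refine ⟨Dset us ubs, ?_, by simp, fun p => (ContinuousLinearMap.fst ℝ ℝ ℝ).smulRight (zu p) +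
      (ContinuousLinearMap.snd ℝ ℝ ℝ).smulRight (zv p), fun p hp => ?_, ?_⟩
  · rw [insert_eq_of_mem hx]; exact self_mem_nhdsWithin
  · exact key p hp
  · have h1 : ContDiffOn ℝ n (fun p => (ContinuousLinearMap.fst ℝ ℝ ℝ).smulRight (zu p) +
      (ContinuousLinearMap.snd ℝ ℝ ℝ).smulRight (zv p)) (Dset us ubs) :=
      (contDiffOn_const.smulRight hzu).add (contDiffOn_const.smulRight hzv)
    exact h1

universe u v

theorem aux_main (us ubs : ℝ) (hus : 0 < us) (hubs : 0 < ubs) (n : ℕ) :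
    ∀ (Y : Type u) (Yb : Type v)
    [NormedAddCommGroup Y] [NormedSpace ℝ Y] [CompleteSpace Y]
    [NormedAddCommGroup Yb] [NormedSpace ℝ Yb] [CompleteSpace Yb]
    (F : (ℝ × ℝ) × Y × Yb → Y) (Fb : (ℝ × ℝ) × Y × Yb → Yb)
    (_ : ContDiffOn ℝ (⊤ : ℕ∞) F (Dset us ubs ×ˢ univ))
    (_ : ContDiffOn ℝ (⊤ : ℕ∞) Fb (Dset us ubs ×ˢ univ))
    (U₀ : ℝ → Y) (Ub₀ : ℝ → Yb)
    (_ : ContDiffOn ℝ (⊤ : ℕ∞) U₀ (Set.Icc 0 ubs))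
    (_ : ContDiffOn ℝ (⊤ : ℕ∞) Ub₀ (Set.Icc 0 us))
    (U : ℝ × ℝ → Y) (Ub : ℝ × ℝ → Yb)
    (_ : IsSolution us ubs (fun a b x => F ((a, b), x)) (fun a b x => Fb ((a, b), x)) U₀ Ub₀ U Ub),
    ContDiffOn ℝ n U (Dset us ubs) ∧ ContDiffOn ℝ n Ub (Dset us ubs) := by
  induction n with
  | zero =>
    intro Y Yb _ _ _ _ _ _ F Fb hF hFb U₀ Ub₀ hU₀ hUb₀ U Ub ⟨h1, h2, _⟩
    simp only [Nat.cast_zero, contDiffOn_zero]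
    exact ⟨h1, h2⟩
  | succ n ih =>
    intro Y Yb _ _ _ _ _ _ F Fb hF hFb U₀ Ub₀ hU₀ hUb₀ U Ub ⟨hUc, hUbc, hU, hUb, hU0, hUb0⟩
    have hDu : UniqueDiffOn ℝ (Dset us ubs) := (uniqueDiffOn_Icc hus).prod (uniqueDiffOn_Icc hubs)
    have hSu : UniqueDiffOn ℝ (Dset us ubs ×ˢ (univ : Set (Y × Yb))) := hDu.prod uniqueDiffOn_univ
    set S := Dset us ubs ×ˢ (univ : Set (Y × Yb)) with hS
    have hF' : ContDiffOn ℝ (⊤ : ℕ∞) (fderivWithin ℝ F S) S :=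
      hF.fderivWithin hSu (by simp)
    have hFb' : ContDiffOn ℝ (⊤ : ℕ∞) (fderivWithin ℝ Fb S) S :=
      hFb.fderivWithin hSu (by simp)
    have hU₀' : ContDiffOn ℝ (⊤ : ℕ∞) (derivWithin U₀ (Icc 0 ubs)) (Icc 0 ubs) :=
      hU₀.derivWithin (uniqueDiffOn_Icc hubs) (by simp)
    have hUb₀' : ContDiffOn ℝ (⊤ : ℕ∞) (derivWithin Ub₀ (Icc 0 us)) (Icc 0 us) :=
      hUb₀.derivWithin (uniqueDiffOn_Icc hus) (by simp)
    have hFd : ∀ q ∈ S, HasFDerivWithinAt F (fderivWithin ℝ F S q) S q := fun q hq =>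
      (hF.differentiableOn (by simp) q hq).hasFDerivWithinAt
    have hFbd : ∀ q ∈ S, HasFDerivWithinAt Fb (fderivWithin ℝ Fb S q) S q := fun q hq =>
      (hFb.differentiableOn (by simp) q hq).hasFDerivWithinAt
    have hqc : ContinuousOn (fun p => (p, U p, Ub p)) (Dset us ubs) :=
      continuousOn_id.prodMk (hUc.prodMk hUbc)
    have hqm : MapsTo (fun p => (p, U p, Ub p)) (Dset us ubs) S := fun p hp => ⟨hp, mem_univ _⟩
    obtain ⟨V, hVc, hUV, hV, hV0⟩ := aux_core us ubs hus hubs F (fderivWithin ℝ F S) hFd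
      hF'.continuousOn U Ub (fun p => Fb (p, U p, Ub p)) hUc hUbc
      (hFb.continuousOn.comp hqc hqm) hU hUb U₀ (derivWithin U₀ (Icc 0 ubs)) hU0
      (fun v hv => (hU₀.differentiableOn (by simp) v hv).hasDerivWithinAt) hU₀'.continuousOn
    let σ : ((ℝ × ℝ) × Yb × Y) →L[ℝ] ((ℝ × ℝ) × Y × Yb) :=
      ((ContinuousLinearEquiv.prodComm ℝ ℝ ℝ).prodCongr
        (ContinuousLinearEquiv.prodComm ℝ Yb Y)).toContinuousLinearMap
    have hσ : ∀ a b x y, σ ((a, b), (x, y)) = ((b, a), (y, x)) := fun _ _ _ _ => rfl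
    have hσm : MapsTo σ (Dset ubs us ×ˢ univ) S := fun q hq => ⟨⟨hq.1.2, hq.1.1⟩, mem_univ _⟩
    have hsm : MapsTo (Prod.swap : ℝ × ℝ → ℝ × ℝ) (Dset ubs us) (Dset us ubs) :=
      fun p hp => ⟨hp.2, hp.1⟩
    have hsm' : MapsTo (Prod.swap : ℝ × ℝ → ℝ × ℝ) (Dset us ubs) (Dset ubs us) :=
      fun p hp => ⟨hp.2, hp.1⟩
    obtain ⟨W, hWc, hUW, hW, hW0⟩ := aux_core ubs us hubs hus (Fb ∘ σ)
      (fun q => (fderivWithin ℝ Fb S (σ q)).comp σ)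
      (fun q hq => (hFbd (σ q) (hσm hq)).comp q σ.hasFDerivWithinAt hσm)
      ((hFb'.continuousOn.comp σ.continuous.continuousOn hσm).clm_comp continuousOn_const)
      (fun p => Ub p.swap) (fun p => U p.swap)
      (fun p => F (p.swap, U p.swap, Ub p.swap))
      (hUbc.comp continuous_swap.continuousOn hsm) (hUc.comp continuous_swap.continuousOn hsm)
      ((hF.continuousOn.comp hqc hqm).comp continuous_swap.continuousOn hsm)
      (fun p hp => hUb p.swap (hsm hp)) (fun p hp => hU p.swap (hsm hp))
      Ub₀ (derivWithin Ub₀ (Icc 0 us)) hUb0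
      (fun v hv => (hUb₀.differentiableOn (by simp) v hv).hasDerivWithinAt) hUb₀'.continuousOn
    let r : ((ℝ × ℝ) × (Y × Y) × (Yb × Yb)) → ((ℝ × ℝ) × Y × Yb) :=
      fun q => (q.1, (q.2.1.1, q.2.2.1))
    have hr : ContDiff ℝ (⊤ : ℕ∞) r := by fun_prop
    have hrm : MapsTo r (Dset us ubs ×ˢ univ) S := fun q hq => ⟨hq.1, mem_univ _⟩
    have hFr : ContDiffOn ℝ (⊤ : ℕ∞) (fun q => F (r q)) (Dset us ubs ×ˢ univ) :=
      hF.comp hr.contDiffOn hrm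
    have hFbr : ContDiffOn ℝ (⊤ : ℕ∞) (fun q => Fb (r q)) (Dset us ubs ×ˢ univ) :=
      hFb.comp hr.contDiffOn hrm
    have hsol := ih (Y × Y) (Yb × Yb)
      (fun q => (F (r q), fderivWithin ℝ F S (r q) ((0, 1), (q.2.1.2, Fb (r q)))))
      (fun q => (Fb (r q), fderivWithin ℝ Fb S (r q) ((1, 0), (F (r q), q.2.2.2))))
      (hFr.prodMk ((hF'.comp hr.contDiffOn hrm).clm_apply
        (contDiffOn_const.prodMk ((by fun_prop : ContDiff ℝ (⊤ : ℕ∞)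
          (fun q : (ℝ × ℝ) × (Y × Y) × (Yb × Yb) => q.2.1.2)).contDiffOn.prodMk hFbr))))
      (hFbr.prodMk ((hFb'.comp hr.contDiffOn hrm).clm_apply
        (contDiffOn_const.prodMk (hFr.prodMk (by fun_prop : ContDiff ℝ (⊤ : ℕ∞)
          (fun q : (ℝ × ℝ) × (Y × Y) × (Yb × Yb) => q.2.2.2)).contDiffOn))))
      (fun v => (U₀ v, derivWithin U₀ (Icc 0 ubs) v))
      (fun u => (Ub₀ u, derivWithin Ub₀ (Icc 0 us) u))
      (hU₀.prodMk hU₀') (hUb₀.prodMk hUb₀')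
      (fun p => (U p, V p)) (fun p => (Ub p, W p.swap))
      ⟨hUc.prodMk hVc, hUbc.prodMk (hWc.comp continuous_swap.continuousOn hsm'),
        fun p hp => (hU p hp).prodMk (hV p hp),
        fun p hp => (hUb p hp).prodMk (hW p.swap (hsm' hp)),
        fun v hv => by simp only [hU0 v hv, hV0 v hv],
        fun u hu => by simp only [hUb0 u hu, Prod.swap_prod_mk, hW0 u hu]⟩
    obtain ⟨s1, s2⟩ := hsol
    have sU : ContDiffOn ℝ n U (Dset us ubs) := contDiff_fst.comp_contDiffOn s1
    have sV : ContDiffOn ℝ n V (Dset us ubs) := contDiff_snd.comp_contDiffOn s1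
    have sUb : ContDiffOn ℝ n Ub (Dset us ubs) := contDiff_fst.comp_contDiffOn s2
    have sW : ContDiffOn ℝ n (fun p => W p.swap) (Dset us ubs) := contDiff_snd.comp_contDiffOn s2
    have sq : ContDiffOn ℝ n (fun p => (p, U p, Ub p)) (Dset us ubs) :=
      contDiffOn_id.prodMk (sU.prodMk sUb)
    have hn : ((n : ℕ) : WithTop ℕ∞) ≤ ((⊤ : ℕ∞) : WithTop ℕ∞) := by
      exact_mod_cast le_top
    exact ⟨aux_succ us ubs n U (fun p => F (p, U p, Ub p)) V ((hF.of_le hn).comp sq hqm) sV hU hUV,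
      aux_succ us ubs n Ub (fun p => W p.swap) (fun p => Fb (p, U p, Ub p)) sW
        ((hFb.of_le hn).comp sq hqm) (fun p hp => hUW p.swap (hsm' hp)) hUb⟩

end

/-- smooth solutions of two-variable ODE systems. If `F, F̄` are
continuous, uniformly Lipschitz in `𝕏`, and smooth (infinitely Fréchet differentiable)
jointly in all variables, and the initial data `U₀, Ū₀` are smooth, then the (unique)
solution `(U,Ū)` of the two-variable ODE system belongs to `C^∞(D;𝕏)`. -/
theorem stmt_6 {Y Yb : Type*}
    [NormedAddCommGroup Y] [NormedSpace ℝ Y] [CompleteSpace Y]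
    [NormedAddCommGroup Yb] [NormedSpace ℝ Yb] [CompleteSpace Yb]
    (us ubs : ℝ) (hus : 0 < us) (hubs : 0 < ubs)
    (F : ℝ → ℝ → Y × Yb → Y) (Fb : ℝ → ℝ → Y × Yb → Yb)
    (hFc : ContinuousOn (fun q : (ℝ × ℝ) × Y × Yb => F q.1.1 q.1.2 q.2)
      (Dset us ubs ×ˢ univ))
    (hFbc : ContinuousOn (fun q : (ℝ × ℝ) × Y × Yb => Fb q.1.1 q.1.2 q.2)
      (Dset us ubs ×ˢ univ))
    (M : ℝ) (hM : 0 ≤ M)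
    (hFlip : ∀ p ∈ Dset us ubs, ∀ x₁ x₂ : Y × Yb,
      ‖F p.1 p.2 x₁ - F p.1 p.2 x₂‖ ≤ M * ‖x₁ - x₂‖)
    (hFblip : ∀ p ∈ Dset us ubs, ∀ x₁ x₂ : Y × Yb,
      ‖Fb p.1 p.2 x₁ - Fb p.1 p.2 x₂‖ ≤ M * ‖x₁ - x₂‖)
    (hFsm : ContDiffOn ℝ (⊤ : ℕ∞) (fun q : (ℝ × ℝ) × Y × Yb => F q.1.1 q.1.2 q.2)
      (Dset us ubs ×ˢ univ))
    (hFbsm : ContDiffOn ℝ (⊤ : ℕ∞) (fun q : (ℝ × ℝ) × Y × Yb => Fb q.1.1 q.1.2 q.2)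
      (Dset us ubs ×ˢ univ))
    (U₀ : ℝ → Y) (Ub₀ : ℝ → Yb)
    (hU₀ : ContDiffOn ℝ (⊤ : ℕ∞) U₀ (Set.Icc 0 ubs))
    (hUb₀ : ContDiffOn ℝ (⊤ : ℕ∞) Ub₀ (Set.Icc 0 us))
    (U : ℝ × ℝ → Y) (Ub : ℝ × ℝ → Yb)
    (hsol : IsSolution us ubs F Fb U₀ Ub₀ U Ub) :
    ContDiffOn ℝ (⊤ : ℕ∞) U (Dset us ubs) ∧ ContDiffOn ℝ (⊤ : ℕ∞) Ub (Dset us ubs) := by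
  refine ⟨contDiffOn_infty.2 fun n => ?_, contDiffOn_infty.2 fun n => ?_⟩
  · exact (aux_main us ubs hus hubs n Y Yb (fun q => F q.1.1 q.1.2 q.2)
      (fun q => Fb q.1.1 q.1.2 q.2) hFsm hFbsm U₀ Ub₀ hU₀ hUb₀ U Ub hsol).1
  · exact (aux_main us ubs hus hubs n Y Yb (fun q => F q.1.1 q.1.2 q.2)
      (fun q => Fb q.1.1 q.1.2 q.2) hFsm hFbsm U₀ Ub₀ hU₀ hUb₀ U Ub hsol).2
end

section
/- Two-variable Grönwall lemma: let f, g : D → ℝ be nonnegative continuous functions such that the partial derivatives ∂f/∂u and ∂g/∂ū exist and are continuous on D and satisfy the differential inequality ∂f/∂u(u,ū) + ∂g/∂ū(u,ū) ≤ C·(f(u,ū) + g(u,ū)) for all (u,ū) ∈ D, where C ≥ 0. Set A := 1 + C·e^{C u_*}·u_* and C' := A·exp(C·A·ū_*) + e^{C u_*}·(1 + C·A·ū_*·exp(C·A·ū_*)). Then for all (u,ū) ∈ D: ∫₀^ū f(u,ū') dū' + ∫₀^u g(u',ū) du' ≤ C'·( ∫₀^ū f(0,ū') dū' + ∫₀^u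 g(u',0) du' ). -/
open Set MeasureTheory intervalIntegral

lemma aux_ftc (b C c : ℝ) (hb : 0 ≤ b) (us : ℝ) (hbu : b ≤ us) (h h' : ℝ → ℝ)
    (hd : ∀ t ∈ Set.Icc 0 us, HasDerivWithinAt h (h' t) (Set.Icc 0 us) t)
    (hc : ContinuousOn h' (Set.Icc 0 us)) :
    ∫ t in Set.Ioc 0 b, Real.exp (-C * (t + c)) * (h' t - C * h t) =
      Real.exp (-C * (b + c)) * h b - Real.exp (-C * (0 + c)) * h 0 := by
  have hsub : Set.Icc 0 b ⊆ Set.Icc 0 us := Set.Icc_subset_Icc_right hbu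
  have hcont : ContinuousOn h (Set.Icc 0 b) :=
    fun t ht => ((hd t (hsub ht)).continuousWithinAt).mono hsub
  rw [← intervalIntegral.integral_of_le hb]
  refine intervalIntegral.integral_eq_sub_of_hasDerivAt_of_le
    (f := fun t => Real.exp (-C * (t + c)) * h t) hb ?_ ?_ ?_
  · exact ContinuousOn.mul (by fun_prop) hcont
  · intro t ht
    have h1 : HasDerivAt h (h' t) t :=
      (hd t (hsub (Set.Ioo_subset_Icc_self ht))).hasDerivAt
        (Icc_mem_nhds ht.1 (ht.2.trans_le hbu))
    have h2 : HasDerivAt (fun t => Real.exp (-C * (t + c))) (Real.exp (-C * (t + c)) * (-C * 1)) t :=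
      (((hasDerivAt_id t).add_const c).const_mul (-C)).exp
    exact (h2.mul h1).congr_deriv (by ring)
  · apply ContinuousOn.intervalIntegrable
    rw [Set.uIcc_of_le hb]
    exact ContinuousOn.mul (by fun_prop) ((hc.mono hsub).sub (hcont.const_smul C))

lemma aux_const (us ubs C : ℝ) (hus : 0 < us) (hubs : 0 < ubs) (hC : 0 ≤ C) :
    Real.exp (C * (us + ubs)) ≤ ((1 + C * Real.exp (C * us) * us) *
            Real.exp (C * (1 + C * Real.exp (C * us) * us) * ubs) +
          Real.exp (C * us) *
            (1 + C * (1 + C * Real.exp (C * us) * us) * ubs *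
              Real.exp (C * (1 + C * Real.exp (C * us) * us) * ubs))) := by
  set A := 1 + C * Real.exp (C * us) * us with hA
  have hA1 : 1 ≤ A := by
    have : 0 ≤ C * Real.exp (C * us) * us := by positivity
    linarith
  have hA2 : Real.exp (C * us) ≤ A := by
    have h1 := Real.add_one_le_exp (-(C * us))
    have h2 := mul_le_mul_of_nonneg_left h1 (Real.exp_pos (C * us)).le
    rw [← Real.exp_add, add_neg_cancel, Real.exp_zero] at h2
    rw [hA]; nlinarith
  have h3 : Real.exp (C * ubs) ≤ Real.exp (C * A * ubs) := by
    apply Real.exp_le_exp.2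
    have : 0 ≤ C * ubs := by positivity
    nlinarith
  have h4 : Real.exp (C * (us + ubs)) ≤ A * Real.exp (C * A * ubs) := by
    rw [mul_add, Real.exp_add]
    gcongr
  have h5 : 0 ≤ Real.exp (C * us) * (1 + C * A * ubs * Real.exp (C * A * ubs)) := by positivity
  linarith

/-- two-variable Grönwall lemma. Let `f, g : D → ℝ` be nonnegative
continuous functions whose partial derivatives `∂f/∂u` and `∂g/∂ū` exist and are
continuous on `D` and satisfy `∂f/∂u + ∂g/∂ū ≤ C (f + g)` on `D` with `C ≥ 0`.  With
`A := 1 + C e^{C u_*} u_*` and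
`C' := A exp(C A ū_*) + e^{C u_*} (1 + C A ū_* exp(C A ū_*))`, for all `(u,ū) ∈ D`:
`∫₀^ū f(u,ū') dū' + ∫₀ᵘ g(u',ū) du' ≤ C'·( ∫₀^ū f(0,ū') dū' + ∫₀ᵘ g(u',0) du' )`. -/
theorem stmt_7 (us ubs : ℝ) (hus : 0 < us) (hubs : 0 < ubs)
    (C : ℝ) (hC : 0 ≤ C)
    (f g fu gub : ℝ × ℝ → ℝ)
    (hf0 : ∀ p ∈ Dset us ubs, 0 ≤ f p) (hg0 : ∀ p ∈ Dset us ubs, 0 ≤ g p)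
    (hfc : ContinuousOn f (Dset us ubs)) (hgc : ContinuousOn g (Dset us ubs))
    (hfu : ∀ p ∈ Dset us ubs,
      HasDerivWithinAt (fun t => f (t, p.2)) (fu p) (Set.Icc 0 us) p.1)
    (hgub : ∀ p ∈ Dset us ubs,
      HasDerivWithinAt (fun v => g (p.1, v)) (gub p) (Set.Icc 0 ubs) p.2)
    (hfuc : ContinuousOn fu (Dset us ubs)) (hgubc : ContinuousOn gub (Dset us ubs))
    (hineq : ∀ p ∈ Dset us ubs, fu p + gub p ≤ C * (f p + g p)) :
    ∀ u ∈ Set.Icc (0:ℝ) us, ∀ ub ∈ Set.Icc (0:ℝ) ubs,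
      (∫ v in (0:ℝ)..ub, f (u, v)) + (∫ t in (0:ℝ)..u, g (t, ub)) ≤
        ((1 + C * Real.exp (C * us) * us) *
            Real.exp (C * (1 + C * Real.exp (C * us) * us) * ubs) +
          Real.exp (C * us) *
            (1 + C * (1 + C * Real.exp (C * us) * us) * ubs *
              Real.exp (C * (1 + C * Real.exp (C * us) * us) * ubs))) *
        ((∫ v in (0:ℝ)..ub, f (0, v)) + (∫ t in (0:ℝ)..u, g (t, 0))) := by
  intro u hu ub hub
  have hD : ∀ {x y : ℝ}, x ∈ Set.Icc 0 us → y ∈ Set.Icc 0 ubs → (x, y) ∈ Dset us ubs :=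
    fun hx hy => ⟨hx, hy⟩
  have hsu : Set.Icc 0 u ⊆ Set.Icc 0 us := Set.Icc_subset_Icc_right hu.2
  have hsv : Set.Icc 0 ub ⊆ Set.Icc 0 ubs := Set.Icc_subset_Icc_right hub.2
  have hus0 : (0:ℝ) ∈ Set.Icc 0 us := ⟨le_rfl, hus.le⟩
  have hubs0 : (0:ℝ) ∈ Set.Icc 0 ubs := ⟨le_rfl, hubs.le⟩
  -- slices
  have slv : ∀ {k : ℝ × ℝ → ℝ}, ContinuousOn k (Dset us ubs) → ∀ x ∈ Set.Icc 0 us,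
      ContinuousOn (fun v => k (x, v)) (Set.Icc 0 ubs) := fun hk x hx =>
    hk.comp (by fun_prop) (fun v hv => hD hx hv)
  have slu : ∀ {k : ℝ × ℝ → ℝ}, ContinuousOn k (Dset us ubs) → ∀ y ∈ Set.Icc 0 ubs,
      ContinuousOn (fun t => k (t, y)) (Set.Icc 0 us) := fun hk y hy =>
    hk.comp (by fun_prop) (fun v hv => hD hv hy)
  let φ : ℝ × ℝ → ℝ := fun p => Real.exp (-C * (p.1 + p.2)) * (fu p - C * f p)
  let ψ : ℝ × ℝ → ℝ := fun p => Real.exp (-C * (p.1 + p.2)) * (gub p - C * g p)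
  have hcomp : IsCompact (Dset us ubs) := isCompact_Icc.prod isCompact_Icc
  have hRsub : Set.Ioc 0 u ×ˢ Set.Ioc 0 ub ⊆ Dset us ubs :=
    Set.prod_mono (Set.Ioc_subset_Icc_self.trans hsu) (Set.Ioc_subset_Icc_self.trans hsv)
  have hφi : IntegrableOn φ (Set.Ioc 0 u ×ˢ Set.Ioc 0 ub) (volume.prod volume) := by
    refine IntegrableOn.mono_set (ContinuousOn.integrableOn_compact hcomp ?_) hRsub
    exact ContinuousOn.mul (by fun_prop) (hfuc.sub (hfc.const_smul C))
  have hψi : IntegrableOn ψ (Set.Ioc 0 u ×ˢ Set.Ioc 0 ub) (volume.prod volume) := by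
    refine IntegrableOn.mono_set (ContinuousOn.integrableOn_compact hcomp ?_) hRsub
    exact ContinuousOn.mul (by fun_prop) (hgubc.sub (hgc.const_smul C))
  have hneg : (∫ z in Set.Ioc 0 u ×ˢ Set.Ioc 0 ub, φ z ∂(volume.prod volume)) +
      (∫ z in Set.Ioc 0 u ×ˢ Set.Ioc 0 ub, ψ z ∂(volume.prod volume)) ≤ 0 := by
    rw [← integral_add hφi hψi]
    refine setIntegral_nonpos (measurableSet_Ioc.prod measurableSet_Ioc) fun z hz => ?_
    have h1 := hineq z (hRsub hz)
    have h2 := Real.exp_pos (-C * (z.1 + z.2))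
    simp only [φ, ψ]
    nlinarith
  have ii : ∀ {b B : ℝ} {k : ℝ → ℝ}, 0 ≤ b → b ≤ B → ContinuousOn k (Set.Icc 0 B) →
      IntegrableOn k (Set.Ioc 0 b) := fun hb hB hk =>
    ((hk.mono (Set.Icc_subset_Icc_right hB)).integrableOn_compact isCompact_Icc).mono_set
      Set.Ioc_subset_Icc_self
  have cexp : ∀ {B c : ℝ} {k : ℝ → ℝ}, ContinuousOn k (Set.Icc 0 B) →
      ContinuousOn (fun t => Real.exp (-C * (t + c)) * k t) (Set.Icc 0 B) :=
    fun hk => ContinuousOn.mul (by fun_prop) hk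
  have cexp' : ∀ {B c : ℝ} {k : ℝ → ℝ}, ContinuousOn k (Set.Icc 0 B) →
      ContinuousOn (fun t => Real.exp (-C * (c + t)) * k t) (Set.Icc 0 B) :=
    fun hk => ContinuousOn.mul (by fun_prop) hk
  have hψ : (∫ z in Set.Ioc 0 u ×ˢ Set.Ioc 0 ub, ψ z ∂(volume.prod volume)) =
      (∫ t in Set.Ioc 0 u, Real.exp (-C * (t + ub)) * g (t, ub)) -
      ∫ t in Set.Ioc 0 u, Real.exp (-C * (t + 0)) * g (t, 0) := by
    rw [setIntegral_prod _ hψi, ← integral_sub (ii hu.1 hu.2 (cexp (slu hgc ub hub)))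
      (ii hu.1 hu.2 (cexp (slu hgc 0 hubs0)))]
    refine setIntegral_congr_fun measurableSet_Ioc fun t ht => ?_
    have ht' := hsu (Set.Ioc_subset_Icc_self ht)
    have := aux_ftc ub C t hub.1 ubs hub.2 (fun v => g (t, v)) (fun v => gub (t, v))
      (fun v hv => hgub (t, v) (hD ht' hv)) (slv hgubc t ht')
    simp only [ψ, add_comm t]
    exact this
  have hφ : (∫ z in Set.Ioc 0 u ×ˢ Set.Ioc 0 ub, φ z ∂(volume.prod volume)) =
      (∫ v in Set.Ioc 0 ub, Real.exp (-C * (u + v)) * f (u, v)) -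
      ∫ v in Set.Ioc 0 ub, Real.exp (-C * (0 + v)) * f (0, v) := by
    rw [← setIntegral_prod_swap, setIntegral_prod (fun z : ℝ × ℝ => φ z.swap) hφi.swap,
      ← integral_sub (ii hub.1 hub.2 (cexp' (slv hfc u hu)))
      (ii hub.1 hub.2 (cexp' (slv hfc 0 hus0)))]
    refine setIntegral_congr_fun measurableSet_Ioc fun v hv => ?_
    have hv' := hsv (Set.Ioc_subset_Icc_self hv)
    exact aux_ftc u C v hu.1 us hu.2 (fun t => f (t, v)) (fun t => fu (t, v))
      (fun t ht => hfu (t, v) (hD ht hv')) (slu hfuc v hv')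
  rw [hφ, hψ] at hneg
  have e1 : ∀ x y : ℝ, 0 ≤ x → 0 ≤ y → Real.exp (-C * (x + y)) ≤ 1 := fun x y hx hy => by
    apply Real.exp_le_one_iff.2
    have : 0 ≤ C * (x + y) := by positivity
    linarith
  have e2 : ∀ x y : ℝ, x ≤ u → y ≤ ub → Real.exp (-C * (u + ub)) ≤ Real.exp (-C * (x + y)) :=
    fun x y hx hy => by
      apply Real.exp_le_exp.2
      nlinarith
  have b1 : Real.exp (-C * (u + ub)) * ∫ v in Set.Ioc 0 ub, f (u, v) ≤
      ∫ v in Set.Ioc 0 ub, Real.exp (-C * (u + v)) * f (u, v) := by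
    rw [← MeasureTheory.integral_const_mul]
    refine setIntegral_mono_on ((ii hub.1 hub.2 (slv hfc u hu)).const_mul _)
      (ii hub.1 hub.2 (cexp' (slv hfc u hu))) measurableSet_Ioc fun v hv => ?_
    exact mul_le_mul_of_nonneg_right (e2 _ _ le_rfl hv.2)
      (hf0 _ (hD hu (hsv (Set.Ioc_subset_Icc_self hv))))
  have b2 : Real.exp (-C * (u + ub)) * ∫ t in Set.Ioc 0 u, g (t, ub) ≤
      ∫ t in Set.Ioc 0 u, Real.exp (-C * (t + ub)) * g (t, ub) := by
    rw [← MeasureTheory.integral_const_mul]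
    refine setIntegral_mono_on ((ii hu.1 hu.2 (slu hgc ub hub)).const_mul _)
      (ii hu.1 hu.2 (cexp (slu hgc ub hub))) measurableSet_Ioc fun v hv => ?_
    exact mul_le_mul_of_nonneg_right (e2 _ _ hv.2 le_rfl)
      (hg0 _ (hD (hsu (Set.Ioc_subset_Icc_self hv)) hub))
  have b3 : ∫ v in Set.Ioc 0 ub, Real.exp (-C * (0 + v)) * f (0, v) ≤
      ∫ v in Set.Ioc 0 ub, f (0, v) := by
    refine setIntegral_mono_on (ii hub.1 hub.2 (cexp' (slv hfc 0 hus0)))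
      (ii hub.1 hub.2 (slv hfc 0 hus0)) measurableSet_Ioc fun v hv => ?_
    exact mul_le_of_le_one_left (hf0 _ (hD hus0 (hsv (Set.Ioc_subset_Icc_self hv))))
      (e1 _ _ le_rfl hv.1.le)
  have b4 : ∫ t in Set.Ioc 0 u, Real.exp (-C * (t + 0)) * g (t, 0) ≤
      ∫ t in Set.Ioc 0 u, g (t, 0) := by
    refine setIntegral_mono_on (ii hu.1 hu.2 (cexp (slu hgc 0 hubs0)))
      (ii hu.1 hu.2 (slu hgc 0 hubs0)) measurableSet_Ioc fun v hv => ?_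
    exact mul_le_of_le_one_left (hg0 _ (hD (hsu (Set.Ioc_subset_Icc_self hv)) hubs0))
      (e1 _ _ hv.1.le le_rfl)
  have p1 : 0 ≤ ∫ v in Set.Ioc 0 ub, f (0, v) := setIntegral_nonneg measurableSet_Ioc
    fun v hv => hf0 _ (hD hus0 (hsv (Set.Ioc_subset_Icc_self hv)))
  have p2 : 0 ≤ ∫ t in Set.Ioc 0 u, g (t, 0) := setIntegral_nonneg measurableSet_Ioc
    fun v hv => hg0 _ (hD (hsu (Set.Ioc_subset_Icc_self hv)) hubs0)
  simp only [intervalIntegral.integral_of_le hu.1, intervalIntegral.integral_of_le hub.1]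
  refine le_trans ?_ (mul_le_mul_of_nonneg_right (aux_const us ubs C hus hubs hC)
    (add_nonneg p1 p2))
  have key : Real.exp (-C * (u + ub)) *
      ((∫ v in Set.Ioc 0 ub, f (u, v)) + ∫ t in Set.Ioc 0 u, g (t, ub)) ≤
      (∫ v in Set.Ioc 0 ub, f (0, v)) + ∫ t in Set.Ioc 0 u, g (t, 0) := by
    rw [mul_add]; linarith
  have h6 := mul_le_mul_of_nonneg_left key (Real.exp_pos (C * (u + ub))).le
  rw [← mul_assoc, ← Real.exp_add, neg_mul, add_neg_cancel, Real.exp_zero, one_mul] at h6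
  refine h6.trans (mul_le_mul_of_nonneg_right (Real.exp_le_exp.2 ?_) (add_nonneg p1 p2))
  exact mul_le_mul_of_nonneg_left (add_le_add hu.2 hub.2) hC
end

section
/- Let W = (α_W, β_W, ρ_W, σ_W, β̄_W, ᾱ_W) ∈ 𝒱 and define the linear map 𝔏_W : 𝒱 → ℝ² × ℝ² × ℝ × ℝ by 𝔏_W(α, β, ρ, σ, β̄, ᾱ) = ( 2(ᾱ·β_W − ᾱ_W·β) + 6(σ·*β̄_W − σ_W·*β̄) + 6(ρ_W·β̄ − ρ·β̄_W) , 2(α_W·β̄ − α·β̄_W) + 6(ρ·β_W − ρ_W·β) + 6(σ·*β_W − σ_W·*β) , (1/2)(α_W·ᾱ − ᾱ_W·α) + 2(β̄·β_W − β·β̄_W) , (1/2)((*ᾱ)·α_W − (*ᾱ_W)·α) + 2((*β̄)·β_W − β·(*β̄_W)) ). If W ≠ 0 (i.e. at least one of α_W, β_W, ρ_W, σ_W, β̄_W, ᾱ_W is nonzero), then 𝔏_W is not the zero map: there exists Ψ ∈ 𝒱 with 𝔏_W(Ψ) ≠ 0. -/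
open Matrix Finset

noncomputable section

/-- The 2×2 matrix `ε` with `ε₁₂ = 1`, `ε₂₁ = −1`, `ε₁₁ = ε₂₂ = 0`. -/
def eps : Matrix (Fin 2) (Fin 2) ℝ := !![0, 1; -1, 0]

/-- `Ŝ`: the (2-dimensional) space of real 2×2 symmetric traceless matrices. -/
def hatS : Submodule ℝ (Matrix (Fin 2) (Fin 2) ℝ) where
  carrier := {A | A.IsSymm ∧ A.trace = 0}
  add_mem' := by
    rintro A B ⟨hA1, hA2⟩ ⟨hB1, hB2⟩
    refine ⟨?_, ?_⟩
    · show (A + B)ᵀ = A + B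
      rw [Matrix.transpose_add]
      rw [show Aᵀ = A from hA1, show Bᵀ = B from hB1]
    · simp [Matrix.trace_add, hA2, hB2]
  zero_mem' := by
    refine ⟨?_, ?_⟩
    · show (0 : Matrix (Fin 2) (Fin 2) ℝ)ᵀ = 0
      simp
    · simp
  smul_mem' := by
    rintro c A ⟨hA1, hA2⟩
    refine ⟨?_, ?_⟩
    · show (c • A)ᵀ = c • A
      rw [Matrix.transpose_smul, show Aᵀ = A from hA1]
    · simp [Matrix.trace_smul, hA2]

/-- `𝒱 = Ŝ × ℝ² × ℝ × ℝ × ℝ² × Ŝ`: tuples `(α, β, ρ, σ, β̄, ᾱ)`. -/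
abbrev VV : Type := ↥hatS × (Fin 2 → ℝ) × ℝ × ℝ × (Fin 2 → ℝ) × ↥hatS

/-- Full contraction of symmetric traceless matrices: `A·B = Σ_{i,j} A_{ij} B_{ij}`. -/
def dotM (A B : Matrix (Fin 2) (Fin 2) ℝ) : ℝ := ∑ i, ∑ j, A i j * B i j

/-- Standard inner product on ℝ². -/
def dotV (u v : Fin 2 → ℝ) : ℝ := ∑ i, u i * v i

/-- The map `𝔏_W : 𝒱 → ℝ² × ℝ² × ℝ × ℝ`, where `W = (α_W, β_W, ρ_W, σ_W, β̄_W, ᾱ_W)`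
and `Ψ = (α, β, ρ, σ, β̄, ᾱ)`:
`𝔏_W(Ψ) = ( 2(ᾱ·β_W − ᾱ_W·β) + 6(σ·*β̄_W − σ_W·*β̄) + 6(ρ_W·β̄ − ρ·β̄_W) ,
2(α_W·β̄ − α·β̄_W) + 6(ρ·β_W − ρ_W·β) + 6(σ·*β_W − σ_W·*β) ,
(1/2)(α_W·ᾱ − ᾱ_W·α) + 2(β̄·β_W − β·β̄_W) ,
(1/2)((*ᾱ)·α_W − (*ᾱ_W)·α) + 2((*β̄)·β_W − β·(*β̄_W)) )`. -/
def LW (W Ψ : VV) : (Fin 2 → ℝ) × (Fin 2 → ℝ) × ℝ × ℝ :=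
  ( (2:ℝ) • ((Ψ.2.2.2.2.2 : Matrix (Fin 2) (Fin 2) ℝ).mulVec W.2.1
        - (W.2.2.2.2.2 : Matrix (Fin 2) (Fin 2) ℝ).mulVec Ψ.2.1)
    + (6:ℝ) • (Ψ.2.2.2.1 • eps.mulVec W.2.2.2.2.1 - W.2.2.2.1 • eps.mulVec Ψ.2.2.2.2.1)
    + (6:ℝ) • (W.2.2.1 • Ψ.2.2.2.2.1 - Ψ.2.2.1 • W.2.2.2.2.1),
    (2:ℝ) • ((W.1 : Matrix (Fin 2) (Fin 2) ℝ).mulVec Ψ.2.2.2.2.1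
        - (Ψ.1 : Matrix (Fin 2) (Fin 2) ℝ).mulVec W.2.2.2.2.1)
    + (6:ℝ) • (Ψ.2.2.1 • W.2.1 - W.2.2.1 • Ψ.2.1)
    + (6:ℝ) • (Ψ.2.2.2.1 • eps.mulVec W.2.1 - W.2.2.2.1 • eps.mulVec Ψ.2.1),
    (1/2 : ℝ) * (dotM (W.1 : Matrix (Fin 2) (Fin 2) ℝ) (Ψ.2.2.2.2.2 : Matrix (Fin 2) (Fin 2) ℝ)
        - dotM (W.2.2.2.2.2 : Matrix (Fin 2) (Fin 2) ℝ) (Ψ.1 : Matrix (Fin 2) (Fin 2) ℝ))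
    + 2 * (dotV Ψ.2.2.2.2.1 W.2.1 - dotV Ψ.2.1 W.2.2.2.2.1),
    (1/2 : ℝ) * (dotM (eps * (Ψ.2.2.2.2.2 : Matrix (Fin 2) (Fin 2) ℝ))
          (W.1 : Matrix (Fin 2) (Fin 2) ℝ)
        - dotM (eps * (W.2.2.2.2.2 : Matrix (Fin 2) (Fin 2) ℝ))
          (Ψ.1 : Matrix (Fin 2) (Fin 2) ℝ))
    + 2 * (dotV (eps.mulVec Ψ.2.2.2.2.1) W.2.1 - dotV Ψ.2.1 (eps.mulVec W.2.2.2.2.1)) )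

/-- If `W ∈ 𝒱` is nonzero, then the linear map `𝔏_W : 𝒱 → ℝ² × ℝ² × ℝ × ℝ`
is not the zero map: there exists `Ψ ∈ 𝒱` with `𝔏_W(Ψ) ≠ 0`. -/
theorem stmt_10 (W : VV) (hW : W ≠ 0) : ∃ Ψ : VV, LW W Ψ ≠ 0 := by
  by_contra hcon
  push Not at hcon
  apply hW
  obtain ⟨⟨A, hA1, hA2⟩, b, r, s, c, ⟨B, hB1, hB2⟩⟩ := W
  have h1 := hcon (0, 0, 1, 0, 0, 0)
  have h2 := hcon (0, 0, 0, 0, ![1, 0], 0)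
  have h3 := hcon (0, ![1, 0], 0, 0, 0, 0)
  have a1 := hA1.apply 0 1
  have b1 := hB1.apply 0 1
  simp [LW, eps, dotM, dotV, Prod.ext_iff, funext_iff, Fin.forall_fin_two, Matrix.mulVec,
    dotProduct, Fin.sum_univ_two, Matrix.trace] at h1 h2 h3 hA2 hB2
  obtain ⟨⟨hc0, hc1⟩, hb0, hb1⟩ := h1
  have hA : A = 0 := by
    ext i j
    fin_cases i <;> fin_cases j <;> simp <;> grind
  have hB : B = 0 := by
    ext i j
    fin_cases i <;> fin_cases j <;> simp <;> grind
  have hb : b = 0 := by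
    ext i
    fin_cases i <;> simp <;> grind
  have hc : c = 0 := by
    ext i
    fin_cases i <;> simp <;> grind
  have hr : r = 0 := by grind
  have hs : s = 0 := by
    have h := h2.1.2
    simpa [vecHead, vecTail] using h
  subst hA hB hb hc hr hs
  rfl

end
end

section
/- Let W = (α_W, β_W, ρ_W, σ_W, β̄_W, ᾱ_W) ∈ 𝒱 and define the linear map 𝔏_W : 𝒱 → ℝ² × ℝ² × ℝ × ℝ by 𝔏_W(α, β, ρ, σ, β̄, ᾱ) = ( 2(ᾱ·β_W − ᾱ_W·β) + 6(σ·*β̄_W − σ_W·*β̄) + 6(ρ_W·β̄ − ρ·β̄_W) , 2(α_W·β̄ − α·β̄_W) + 6(ρ·β_W − ρ_W·β) + 6(σ·*β_W − σ_W·*β) , (1/2)(α_W·ᾱ − ᾱ_W·α) + 2(β̄·β_W − β·β̄_W) , (1/2)((*ᾱ)·α_W − (*ᾱ_W)·α) + 2((*β̄)·β_W − β·(*β̄_W)) ). If W ≠ 0, then the kernel of 𝔏_W is a proper linear subspace of 𝒱; in particular, since dim_ℝ 𝒱 = 10, the kernel of 𝔏_W has dimension at most 9. -/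
open Matrix Finset

noncomputable section

def mkS (a b : ℝ) : ↥hatS := ⟨!![a, b; b, -a], by
  refine ⟨?_, ?_⟩
  · ext i j; fin_cases i <;> fin_cases j <;> simp
  · simp [Matrix.trace_fin_two]⟩

theorem mkS_coe (a b : ℝ) : ((mkS a b : ↥hatS) : Matrix (Fin 2) (Fin 2) ℝ) = !![a, b; b, -a] := rfl

theorem exists_mkS (A : ↥hatS) :
    A = mkS ((A : Matrix (Fin 2) (Fin 2) ℝ) 0 0) ((A : Matrix (Fin 2) (Fin 2) ℝ) 0 1) := by
  obtain ⟨A, h1, h2⟩ := A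
  have h3 : A 1 0 = A 0 1 := h1.apply 0 1
  rw [Matrix.trace_fin_two] at h2
  apply Subtype.ext
  ext i j
  fin_cases i <;> fin_cases j <;> simp [mkS, h3]
  linarith

def eqS : ↥hatS ≃ₗ[ℝ] (Fin 2 → ℝ) where
  toFun A := ![(A : Matrix (Fin 2) (Fin 2) ℝ) 0 0, (A : Matrix (Fin 2) (Fin 2) ℝ) 0 1]
  invFun v := mkS (v 0) (v 1)
  map_add' A B := by ext i; fin_cases i <;> simp
  map_smul' c A := by ext i; fin_cases i <;> simp
  left_inv A := (exists_mkS A).symm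
  right_inv v := by ext i; fin_cases i <;> simp [mkS]

def LWlin (W : VV) : VV →ₗ[ℝ] (Fin 2 → ℝ) × (Fin 2 → ℝ) × ℝ × ℝ where
  toFun := LW W
  map_add' x y := by
    refine Prod.ext (funext fun i => ?_) (Prod.ext (funext fun i => ?_) (Prod.ext ?_ ?_)) <;>
      simp only [LW, dotM, dotV, Fin.sum_univ_two, Matrix.mulVec, dotProduct, Matrix.mul_apply,
         Pi.add_apply, Pi.sub_apply, Pi.smul_apply, smul_eq_mul, Prod.fst_add, Prod.snd_add,
         Prod.smul_fst, Prod.smul_snd, Submodule.coe_add, Submodule.coe_smul, Matrix.add_apply, Matrix.smul_apply, RingHom.id_apply] <;> ring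
  map_smul' c x := by
    refine Prod.ext (funext fun i => ?_) (Prod.ext (funext fun i => ?_) (Prod.ext ?_ ?_)) <;>
      simp only [LW, dotM, dotV, Fin.sum_univ_two, Matrix.mulVec, dotProduct, Matrix.mul_apply,
         Pi.add_apply, Pi.sub_apply, Pi.smul_apply, smul_eq_mul, Prod.fst_add, Prod.snd_add,
         Prod.smul_fst, Prod.smul_snd, Submodule.coe_add, Submodule.coe_smul, Matrix.add_apply, Matrix.smul_apply, RingHom.id_apply] <;> ring

theorem W_zero (W : VV) (h : ∀ Ψ, LW W Ψ = 0) : W = 0 := by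
  obtain ⟨A, b, r, s, c, B⟩ := W
  have hA := exists_mkS A
  have hB := exists_mkS B
  generalize (A : Matrix (Fin 2) (Fin 2) ℝ) 0 0 = a0 at hA
  generalize (A : Matrix (Fin 2) (Fin 2) ℝ) 0 1 = a1 at hA
  generalize (B : Matrix (Fin 2) (Fin 2) ℝ) 0 0 = b0 at hB
  generalize (B : Matrix (Fin 2) (Fin 2) ℝ) 0 1 = b1 at hB
  subst hA hB
  have e1 := congrArg (fun p => p.2.2.1) (h (mkS 1 0, 0, 0, 0, 0, 0))
  have e2 := congrArg (fun p => p.2.2.1) (h (mkS 0 1, 0, 0, 0, 0, 0))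
  have e3 := congrArg (fun p => p.2.2.1) (h (0, 0, 0, 0, 0, mkS 1 0))
  have e4 := congrArg (fun p => p.2.2.1) (h (0, 0, 0, 0, 0, mkS 0 1))
  have e5 := congrArg (fun p => p.1) (h (0, 0, 1, 0, 0, 0))
  have e6 := congrArg (fun p => p.2.1) (h (0, 0, 1, 0, 0, 0))
  have e7 := congrArg (fun p => p.1 0) (h (0, 0, 0, 0, ![1, 0], 0))
  have e8 := congrArg (fun p => p.1 1) (h (0, 0, 0, 0, ![1, 0], 0))
  simp [LW, dotM, dotV, Fin.sum_univ_two, mkS_coe] at e1 e2 e3 e4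
  simp [LW] at e5 e6
  simp only [LW, Matrix.mulVec, dotProduct, Fin.sum_univ_two, Pi.add_apply, Pi.sub_apply,
    Pi.smul_apply, smul_eq_mul] at e7 e8
  simp [eps, mkS_coe, e5, e6] at e7 e8
  have h1 : a0 = 0 := by linarith
  have h2 : a1 = 0 := by linarith
  have h3 : b0 = 0 := by linarith
  have h4 : b1 = 0 := by linarith
  subst h1 h2 h3 h4 e5 e6 e7 e8
  have : mkS 0 0 = 0 := by
    apply Subtype.ext; ext i j; fin_cases i <;> fin_cases j <;> simp [mkS]
  rw [this]; rfl

theorem finrank_VV : Module.finrank ℝ VV = 10 := by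
  have h : Module.finrank ℝ ↥hatS = 2 := by
    rw [eqS.finrank_eq]; simp
  simp [VV, Module.finrank_prod, h]

theorem kerne (W : VV) (hW : W ≠ 0) : LinearMap.ker (LWlin W) ≠ ⊤ := by
  intro h
  apply hW
  apply W_zero
  intro Ψ
  have : Ψ ∈ LinearMap.ker (LWlin W) := h ▸ Submodule.mem_top
  exact this

/-- If `W ∈ 𝒱` is nonzero, then the kernel of the linear map
`𝔏_W : 𝒱 → ℝ² × ℝ² × ℝ × ℝ` is a proper linear subspace of `𝒱`; in particular, since
`dim_ℝ 𝒱 = 10`, the kernel of `𝔏_W` has dimension at most `9`. -/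
theorem stmt_11 (W : VV) (hW : W ≠ 0) :
    Module.finrank ℝ VV = 10 ∧
    ∃ K : Submodule ℝ VV, (K : Set VV) = {Ψ : VV | LW W Ψ = 0} ∧ K ≠ ⊤ ∧
      Module.finrank ℝ ↥K ≤ 9 := by
  refine ⟨finrank_VV, LinearMap.ker (LWlin W), rfl, ?_, ?_⟩
  · exact kerne W hW
  · have := Submodule.finrank_lt (kerne W hW)
    rw [finrank_VV] at this
    omega

end
end
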